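/- Let (X,d,μ) be a space of homogeneous type, let p(·) be an exponent function with p(·) ∈ LH and 1 < p₋ ≤ p₊ < ∞, and let w be a weight. Then there exists a constant C such that ‖(Mf)·w‖_{p(·)} ≤ C‖f·w‖_{p(·)} for all measurable functions f if and only if w ∈ A_{p(·)}. -/

import Mathlib

open MeasureTheory ENNReal NNReal Filter

namespace SHT

variable {X : Type*} [MeasurableSpace X]

/-- The quasi-metric ball `B(x,r) = {y | d x y < r}`. -/
def ball (d : X → X → ℝ) (x : X) (r : ℝ) : Set X := {y | d x y < r}

/-- `(X, d, μ)` is a space of homogeneous type with quasi-metric constant `A₀`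
and doubling constant `Cμ`. -/
structure IsSHT (d : X → X → ℝ) (μ : Measure X) (A₀ Cμ : ℝ) : Prop where
  d_nonneg : ∀ x y, 0 ≤ d x y
  d_eq_zero_iff : ∀ x y, d x y = 0 ↔ x = y
  d_symm : ∀ x y, d x y = d y x
  one_le_A₀ : 1 ≤ A₀
  d_triangle : ∀ x y z, d x y ≤ A₀ * (d x z + d z y)
  one_le_Cμ : 1 ≤ Cμ
  measurableSet_ball : ∀ x r, MeasurableSet (ball d x r)
  ball_pos : ∀ x r, 0 < r → 0 < μ (ball d x r)
  ball_ne_top : ∀ x r, 0 < r → μ (ball d x r) ≠ ⊤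
  doubling : ∀ x r, 0 < r → μ (ball d x (2 * r)) ≤ ENNReal.ofReal Cμ * μ (ball d x r)

/-- The modular `ρ_{p(·)}(f) = ∫_{X ∖ X_∞} f(x)^{p(x)} dμ + ‖f‖_{L^∞(X_∞)}`
for an (extended-real valued) exponent `p` and a nonnegative function `f`. -/
noncomputable def modular (μ : Measure X) (p : X → ℝ≥0∞) (f : X → ℝ≥0∞) : ℝ≥0∞ :=
  (∫⁻ x in {x | p x ≠ ⊤}, f x ^ (p x).toReal ∂μ) + essSup f (μ.restrict {x | p x = ⊤})

/-- The Luxemburg norm `‖f‖_{p(·)} = inf {λ > 0 | ρ_{p(·)}(f/λ) ≤ 1}`. -/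
noncomputable def luxNorm (μ : Measure X) (p : X → ℝ≥0∞) (f : X → ℝ≥0∞) : ℝ≥0∞ :=
  sInf {lam : ℝ≥0∞ | 0 < lam ∧ modular μ p (fun x => f x / lam) ≤ 1}

/-- The pointwise conjugate exponent `p'(x) = p(x)/(p(x)-1)`, with the conventions
`p'(x) = ∞` if `p(x) = 1` and `p'(x) = 1` if `p(x) = ∞`. -/
noncomputable def conjExp (p : X → ℝ≥0∞) : X → ℝ≥0∞ := fun x =>
  if p x = ⊤ then 1 else p x / (p x - 1)

/-- A real-valued exponent function viewed as an extended-real valued one. -/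
noncomputable def ofRealExp (p : X → ℝ) : X → ℝ≥0∞ := fun x => ENNReal.ofReal (p x)

/-- Local log-Hölder continuity of an exponent function. -/
def LH0 (d : X → X → ℝ) (p : X → ℝ) : Prop :=
  ∃ C₀ : ℝ, 0 < C₀ ∧ ∀ x y, 0 < d x y → d x y < 1 / 2 →
    |p x - p y| ≤ C₀ / (-Real.log (d x y))

/-- Log-Hölder continuity at infinity, with respect to the base point `x₀`
and with limit value `pinf`. -/
def LHinf (d : X → X → ℝ) (x₀ : X) (p : X → ℝ) (pinf : ℝ) : Prop :=
  ∃ Cinf : ℝ, 0 < Cinf ∧ ∀ x, |p x - pinf| ≤ Cinf / Real.log (Real.exp 1 + d x x₀)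

/-- Global log-Hölder continuity. -/
def LH (d : X → X → ℝ) (x₀ : X) (p : X → ℝ) : Prop :=
  LH0 d p ∧ ∃ pinf : ℝ, LHinf d x₀ p pinf

/-- `w` is a weight: measurable, positive and finite a.e., and locally integrable. -/
def IsWeight (d : X → X → ℝ) (μ : Measure X) (w : X → ℝ≥0∞) : Prop :=
  Measurable w ∧ (∀ᵐ x ∂μ, 0 < w x ∧ w x < ⊤) ∧
    ∀ (x : X) (r : ℝ), 0 < r → (∫⁻ y in ball d x r, w y ∂μ) ≠ ⊤

/-- The variable Muckenhoupt condition `w ∈ A_{p(·)}`: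
`‖w χ_B‖_{p(·)} ‖w⁻¹ χ_B‖_{p'(·)} ≤ K μ(B)` for all quasi-metric balls `B`. -/
def Apvar (d : X → X → ℝ) (μ : Measure X) (p : X → ℝ≥0∞) (w : X → ℝ≥0∞) : Prop :=
  ∃ K : ℝ≥0, ∀ (x : X) (r : ℝ), 0 < r →
    luxNorm μ p ((ball d x r).indicator w) *
      luxNorm μ (conjExp p) ((ball d x r).indicator fun y => (w y)⁻¹) ≤ K * μ (ball d x r)

/-- The uncentered Hardy–Littlewood maximal operator over quasi-metric balls. -/
noncomputable def maximal (d : X → X → ℝ) (μ : Measure X) (f : X → ℝ≥0∞) (x : X) : ℝ≥0∞ :=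
  ⨆ (z : X) (r : ℝ) (_ : 0 < r ∧ x ∈ ball d z r),
    (μ (ball d z r))⁻¹ * ∫⁻ y in ball d z r, f y ∂μ

/-- `f ∈ L^{p(·)}`: the modular of `f/λ` is finite for some `λ > 0`. -/
def MemLpvar (μ : Measure X) (p : X → ℝ≥0∞) (f : X → ℝ≥0∞) : Prop :=
  ∃ lam : ℝ≥0∞, 0 < lam ∧ modular μ p (fun x => f x / lam) < ⊤


lemma ball_mono (d : X → X → ℝ) (z : X) {r s : ℝ} (h : r ≤ s) : ball d z r ⊆ ball d z s :=
  fun _ hy => lt_of_lt_of_le hy h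

lemma IsSHT.self_mem {d : X → X → ℝ} {μ : Measure X} {A C : ℝ} (h : IsSHT d μ A C) (z : X) {r : ℝ}
    (hr : 0 < r) : z ∈ ball d z r := by
  change d z z < r
  rw [(h.d_eq_zero_iff z z).2 rfl]; exact hr

lemma IsSHT.ball_pow {d : X → X → ℝ} {μ : Measure X} {A C : ℝ} (h : IsSHT d μ A C) (k : ℕ) (z : X)
    {r : ℝ} (hr : 0 < r) : μ (ball d z (2 ^ k * r)) ≤ ENNReal.ofReal C ^ k * μ (ball d z r) := by
  induction k with
  | zero => simp
  | succ k ih =>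
    calc μ (ball d z (2 ^ (k+1) * r)) = μ (ball d z (2 * (2 ^ k * r))) := by ring_nf
      _ ≤ ENNReal.ofReal C * μ (ball d z (2 ^ k * r)) := h.doubling _ _ (by positivity)
      _ ≤ ENNReal.ofReal C * (ENNReal.ofReal C ^ k * μ (ball d z r)) := by gcongr
      _ = _ := by ring

lemma IsSHT.dim {d : X → X → ℝ} {μ : Measure X} {A C : ℝ} (h : IsSHT d μ A C) :
    ∃ D : ℕ, ∀ (z : X) (r R : ℝ), 0 < r → r ≤ R →
      μ (ball d z R) ≤ ENNReal.ofReal ((2 * (R / r)) ^ D) * μ (ball d z r) := by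
  obtain ⟨D, hD⟩ := pow_unbounded_of_one_lt C (one_lt_two)
  refine ⟨D, fun z r R hr hR => ?_⟩
  have h1 : 1 ≤ R / r := (one_le_div hr).2 hR
  obtain ⟨k, hk1, hk2⟩ := exists_nat_pow_near h1 (one_lt_two)
  have hRk : R ≤ 2 ^ (k+1) * r := by
    rw [div_lt_iff₀ hr] at hk2; exact hk2.le
  calc μ (ball d z R) ≤ μ (ball d z (2 ^ (k+1) * r)) := measure_mono (ball_mono d z hRk)
    _ ≤ ENNReal.ofReal C ^ (k+1) * μ (ball d z r) := h.ball_pow _ _ hr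
    _ ≤ _ := by
      gcongr
      rw [← ENNReal.ofReal_pow (by linarith [h.one_le_Cμ])]
      apply ENNReal.ofReal_le_ofReal
      calc C ^ (k+1) ≤ (2 ^ D) ^ (k+1) := by
            gcongr
            linarith [h.one_le_Cμ]
        _ = (2 * 2 ^ k) ^ D := by rw [← pow_mul, mul_comm, pow_mul]; ring
        _ ≤ (2 * (R / r)) ^ D := by gcongr

lemma IsSHT.measure_iUnion {d : X → X → ℝ} (x₀ : X) :
    (⋃ n : ℕ, ball d x₀ n) = Set.univ := by
  ext y; simp only [Set.mem_iUnion, Set.mem_univ, iff_true]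
  exact exists_nat_gt (d x₀ y)

/-- engulfing: intersecting balls -/
lemma IsSHT.engulf {d : X → X → ℝ} {μ : Measure X} {A C : ℝ} (h : IsSHT d μ A C) {z z' : X}
    {r r' : ℝ} (hr : r ≤ 2 * r') (hr' : 0 < r') (hne : (ball d z r ∩ ball d z' r').Nonempty) :
    ball d z r ⊆ ball d z' (5 * A ^ 2 * r') := by
  obtain ⟨u, hu1, hu2⟩ := hne
  intro y hy
  have hA := h.one_le_A₀
  have e1 : d z u < r := hu1
  have e2 : d z' u < r' := hu2
  have e3 : d z y < r := hy
  change d z' y < _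
  have t1 := h.d_triangle z' y u
  have t2 := h.d_triangle u y z
  rw [h.d_symm u z] at t2
  have : d u y ≤ A * (4 * r') := t2.trans (by gcongr; linarith)
  calc d z' y ≤ A * (d z' u + d u y) := t1
    _ < A * (r' + A * (4 * r')) := by
        apply mul_lt_mul_of_pos_left _ (by linarith); linarith
    _ ≤ 5 * A ^ 2 * r' := by nlinarith [mul_pos hr' (by linarith : (0:ℝ) < A), mul_nonneg hr'.le (by linarith : (0:ℝ) ≤ A - 1)]

lemma weak_type {d : X → X → ℝ} {ν : Measure X} {A C : ℝ} (h : IsSHT d ν A C) :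
    ∃ K : ℝ≥0, ∀ f : X → ℝ≥0∞, Measurable f → ∀ t : ℝ≥0∞, 0 < t → t ≠ ⊤ →
      t * ν {x | t < maximal d ν f x} ≤ K * ∫⁻ x, f x ∂ν := by
  have hA := h.one_le_A₀
  obtain ⟨D, hD⟩ := h.dim
  set K : ℝ≥0 := Real.toNNReal ((2 * (5 * A ^ 2)) ^ D) with hK
  refine ⟨K + 1, fun f hf t ht0 httop => ?_⟩
  by_cases hfin : ∫⁻ x, f x ∂ν = ⊤
  · rw [hfin, ENNReal.mul_top (by simp)]; exact le_top
  have hstep : ∀ R : ℕ, t * ν (⋃ q ∈ {q : X × ℝ | 0 < q.2 ∧ q.2 ≤ R ∧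
      t * ν (ball d q.1 q.2) < ∫⁻ y in ball d q.1 q.2, f y ∂ν}, ball d q.1 q.2)
        ≤ K * ∫⁻ x, f x ∂ν := by
    intro R
    set T := {q : X × ℝ | 0 < q.2 ∧ q.2 ≤ R ∧
      t * ν (ball d q.1 q.2) < ∫⁻ y in ball d q.1 q.2, f y ∂ν} with hT
    obtain ⟨u, huT, hdisj, hcov⟩ := Vitali.exists_disjoint_subfamily_covering_enlargement
      (fun q : X × ℝ => ball d q.1 q.2) T (fun q => q.2) 2 one_lt_two (fun a ha => ha.1.le) R
      (fun a ha => ha.2.1) (fun a ha => ⟨a.1, h.self_mem _ ha.1⟩)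
    have hdis' : Pairwise (Function.onFun Disjoint (fun q : u => ball d q.1.1 q.1.2)) := by
      intro a b hab
      exact hdisj a.2 b.2 (fun hh => hab (Subtype.ext hh))
    have hsum : ∑' q : u, (ν.withDensity f) (ball d q.1.1 q.1.2) ≤ ∫⁻ x, f x ∂ν := by
      refine (tsum_meas_le_meas_iUnion_of_disjoint _
        (fun q : u => h.measurableSet_ball _ _) hdis').trans ?_
      refine (measure_mono (Set.subset_univ _)).trans ?_
      rw [withDensity_apply _ MeasurableSet.univ, Measure.restrict_univ]
    have hcount : u.Countable := by
      have hc := Measure.countable_meas_pos_of_disjoint_of_meas_iUnion_ne_top (ν.withDensity f)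
        (fun q : u => h.measurableSet_ball q.1.1 q.1.2) hdis' (by
          refine ne_top_of_le_ne_top hfin ((measure_mono (Set.subset_univ _)).trans ?_)
          rw [withDensity_apply _ MeasurableSet.univ, Measure.restrict_univ])
      have : {i : u | 0 < (ν.withDensity f) (ball d i.1.1 i.1.2)} = Set.univ := by
        ext q
        simp only [Set.mem_ofPred_eq, Set.mem_univ, iff_true]
        rw [withDensity_apply _ (h.measurableSet_ball _ _)]
        exact lt_of_le_of_lt (zero_le) (huT q.2).2.2
      rw [this] at hc
      exact Set.countable_univ_iff.1 hc
    have hsub : (⋃ q ∈ T, ball d q.1 q.2) ⊆ ⋃ q ∈ u, ball d q.1 (5 * A ^ 2 * q.2) := by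
      intro x hx
      simp only [Set.mem_iUnion] at hx ⊢
      obtain ⟨q, hq, hxq⟩ := hx
      obtain ⟨b, hb, hne, hle⟩ := hcov q hq
      exact ⟨b, hb, h.engulf hle (huT hb).1 hne hxq⟩
    have : Countable u := hcount
    calc t * ν (⋃ q ∈ T, ball d q.1 q.2) ≤ t * ν (⋃ q ∈ u, ball d q.1 (5 * A ^ 2 * q.2)) := by
          gcongr
      _ ≤ t * ∑' q : u, ν (ball d q.1.1 (5 * A ^ 2 * q.1.2)) := by
          gcongr; exact measure_biUnion_le _ hcount _
      _ ≤ t * ∑' q : u, K * ν (ball d q.1.1 q.1.2) := by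
          gcongr with q
          have hq := (huT q.2).1
          refine (hD _ _ _ hq (by nlinarith [mul_nonneg hq.le (by nlinarith : (0:ℝ) ≤ A ^ 2 - 1)])).trans ?_
          rw [mul_div_assoc, div_self hq.ne', mul_one]; rfl
      _ = K * ∑' q : u, t * ν (ball d q.1.1 q.1.2) := by
          rw [ENNReal.tsum_mul_left, ENNReal.tsum_mul_left]; ring
      _ ≤ K * ∑' q : u, (ν.withDensity f) (ball d q.1.1 q.1.2) := by
          gcongr with q
          rw [withDensity_apply _ (h.measurableSet_ball _ _)]
          exact (huT q.2).2.2.le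
      _ ≤ _ := by gcongr
  have hunion : {x | t < maximal d ν f x} ⊆ ⋃ R : ℕ, (⋃ q ∈ {q : X × ℝ | 0 < q.2 ∧ q.2 ≤ R ∧
      t * ν (ball d q.1 q.2) < ∫⁻ y in ball d q.1 q.2, f y ∂ν}, ball d q.1 q.2) := by
    intro x hx
    simp only [Set.mem_ofPred_eq, maximal, lt_iSup_iff] at hx
    obtain ⟨z, r, ⟨hr, hxz⟩, hlt⟩ := hx
    obtain ⟨R, hR⟩ := exists_nat_ge r
    simp only [Set.mem_iUnion]
    refine ⟨R, (z, r), ⟨hr, hR, ?_⟩, hxz⟩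
    have h0 := (h.ball_pos z r hr).ne'
    have h1 := h.ball_ne_top z r hr
    rw [← ENNReal.div_eq_inv_mul] at hlt
    rw [ENNReal.lt_div_iff_mul_lt (Or.inl h0) (Or.inl h1)] at hlt
    exact hlt
  calc t * ν {x | t < maximal d ν f x} ≤ t * ν (⋃ R : ℕ, _) := by gcongr
    _ = ⨆ R : ℕ, t * ν (⋃ q ∈ {q : X × ℝ | 0 < q.2 ∧ q.2 ≤ R ∧
      t * ν (ball d q.1 q.2) < ∫⁻ y in ball d q.1 q.2, f y ∂ν}, ball d q.1 q.2) := by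
        rw [Monotone.measure_iUnion, ENNReal.mul_iSup]
        intro a b hab
        refine Set.biUnion_subset_biUnion_left ?_
        intro q hq
        exact ⟨hq.1, hq.2.1.trans (by exact_mod_cast hab), hq.2.2⟩
    _ ≤ K * ∫⁻ x, f x ∂ν := iSup_le hstep
    _ ≤ _ := by gcongr; simp

lemma geom_aux {s : ℝ} (hs : 1 < s) : ∃ K : ℝ≥0, ∀ u : ℝ≥0∞,
    ∑' k : ℤ, (if (2:ℝ≥0∞) ^ k < u then ((2:ℝ≥0∞) ^ k) ^ (s - 1) * u else 0) ≤ K * u ^ s := by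
  set ρ : ℝ≥0∞ := (2:ℝ≥0∞) ^ (-(s-1)) with hρ
  have hρ1 : ρ < 1 := by
    rw [hρ, ENNReal.rpow_neg, ENNReal.inv_lt_one]
    exact ENNReal.one_lt_rpow (by norm_num) (by linarith)
  have hfin : (1 - ρ)⁻¹ ≠ ⊤ := ENNReal.inv_ne_top.2 (tsub_pos_of_lt hρ1).ne'
  refine ⟨((1 - ρ)⁻¹).toNNReal + 1, fun u => ?_⟩
  rcases eq_or_ne u 0 with rfl | hu0
  · simp
  rcases eq_or_ne u ⊤ with rfl | hut
  · rw [ENNReal.top_rpow_of_pos (by linarith), ENNReal.mul_top (by simp)]; exact le_top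
  obtain ⟨n, hn1, hn2⟩ := ENNReal.exists_mem_Ioc_zpow hu0 hut (by norm_num : (1:ℝ≥0∞) < 2) (by norm_num)
  have hinj : Function.Injective (fun j : ℕ => n - (j:ℤ)) := by
    intro a b hab; simp only at hab; omega
  rw [← hinj.tsum_eq]
  · have hterm : ∀ j : ℕ, (if (2:ℝ≥0∞) ^ (n - (j:ℤ)) < u then ((2:ℝ≥0∞) ^ (n - (j:ℤ))) ^ (s - 1) * u else 0)
        ≤ u ^ s * ρ ^ j := by
      intro j
      split_ifs
      swap
      · exact zero_le
      have e1 : (2:ℝ≥0∞) ^ (n - (j:ℤ)) = 2 ^ n * ((2:ℝ≥0∞) ^ j)⁻¹ := by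
        rw [sub_eq_add_neg, ENNReal.zpow_add (by norm_num) (by norm_num), ENNReal.zpow_neg, zpow_natCast]
      have e2 : (((2:ℝ≥0∞) ^ j)⁻¹) ^ (s-1) = ρ ^ j := by
        rw [hρ, ENNReal.inv_rpow, ENNReal.rpow_neg, ← ENNReal.rpow_natCast, ← ENNReal.rpow_natCast, ENNReal.inv_rpow,
          ← ENNReal.rpow_mul, ← ENNReal.rpow_mul, mul_comm]
      rw [e1, ENNReal.mul_rpow_of_nonneg _ _ (by linarith), e2]
      calc (2 ^ n) ^ (s - 1) * ρ ^ j * u ≤ u ^ (s-1) * ρ ^ j * u := by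
            gcongr
        _ = u ^ (s-1) * u ^ (1:ℝ) * ρ ^ j := by rw [ENNReal.rpow_one]; ring
        _ = u ^ s * ρ ^ j := by
            rw [← ENNReal.rpow_add _ _ hu0 hut]; congr 2; ring
    calc _ ≤ ∑' j : ℕ, u ^ s * ρ ^ j := ENNReal.tsum_le_tsum hterm
      _ = u ^ s * (1 - ρ)⁻¹ := by rw [ENNReal.tsum_mul_left, ENNReal.tsum_geometric]
      _ ≤ _ := by
        rw [mul_comm]
        gcongr
        rw [ENNReal.coe_add, ENNReal.coe_toNNReal hfin]; exact le_self_add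
  · intro k hk
    rw [Function.mem_support] at hk
    have hlt : (2:ℝ≥0∞) ^ k < u := by
      by_contra hc; simp [hc] at hk
    have h3 : k ≤ n := by
      by_contra hc
      have : (2:ℝ≥0∞) ^ (n+1) ≤ 2 ^ k := ENNReal.zpow_le_of_le (by norm_num) (by omega)
      exact absurd (hlt.trans_le (hn2.trans this)) (lt_irrefl _)
    exact ⟨(n - k).toNat, by simp only; omega⟩

lemma maximal_split {d : X → X → ℝ} {ν : Measure X} {A C : ℝ} (h : IsSHT d ν A C) {f : X → ℝ≥0∞}
    (hf : Measurable f) (a : ℝ≥0∞) (x : X) :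
    maximal d ν f x ≤ maximal d ν ({y | a < f y}.indicator f) x + a := by
  unfold maximal
  refine iSup_le fun z => iSup_le fun r => iSup_le fun hr => ?_
  have hm : MeasurableSet {y | a < f y} := measurableSet_lt measurable_const hf
  calc (ν (ball d z r))⁻¹ * ∫⁻ y in ball d z r, f y ∂ν
      ≤ (ν (ball d z r))⁻¹ * ∫⁻ y in ball d z r, ({y | a < f y}.indicator f y + a) ∂ν := by
        gcongr with y
        by_cases hy : a < f y
        · rw [Set.indicator_of_mem (by exact hy)]; exact le_self_add
        · rw [Set.indicator_of_notMem (by exact hy)]; simpa using hy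
    _ = (ν (ball d z r))⁻¹ * ∫⁻ y in ball d z r, {y | a < f y}.indicator f y ∂ν
        + a * (ν (ball d z r) * (ν (ball d z r))⁻¹) := by
        rw [lintegral_add_right _ measurable_const, setLIntegral_const]; ring
    _ ≤ _ := by
        gcongr
        · exact le_iSup_of_le z (le_iSup_of_le r (le_iSup_of_le hr le_rfl))
        · exact mul_le_of_le_one_right' (ENNReal.mul_inv_le_one _)

theorem strong_type {d : X → X → ℝ} {ν : Measure X} {A C : ℝ} (h : IsSHT d ν A C) {s : ℝ}
    (hs : 1 < s) : ∃ K : ℝ≥0, ∀ f : X → ℝ≥0∞, Measurable f → ∃ H : X → ℝ≥0∞, Measurable H ∧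
      (∀ x, maximal d ν f x ≤ H x) ∧ ∫⁻ x, H x ^ s ∂ν ≤ K * ∫⁻ x, f x ^ s ∂ν := by
  obtain ⟨K1, hK1⟩ := weak_type h
  obtain ⟨K2, hK2⟩ := geom_aux hs
  have hs0 : 0 < s := by linarith
  refine ⟨(4:ℝ≥0) ^ s * K1 * K2, fun f hf => ?_⟩
  set a : ℤ → ℝ≥0∞ := fun k => (2:ℝ≥0∞) ^ k with ha
  have ha0 : ∀ k, a k ≠ 0 := fun k => (ENNReal.zpow_pos (by norm_num) (by norm_num) k).ne'
  have hat : ∀ k, a k ≠ ⊤ := fun k => ENNReal.zpow_ne_top (by norm_num) (by norm_num) k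
  have ha2 : ∀ k, a (k+1) = 2 * a k := fun k => by
    simp only [ha]; rw [ENNReal.zpow_add (by norm_num) (by norm_num), zpow_one, mul_comm]
  set T : ℤ → Set X := fun k => toMeasurable ν {x | 2 * a k < maximal d ν f x} with hT
  have hTm : ∀ k, MeasurableSet (T k) := fun k => measurableSet_toMeasurable _ _
  set H : X → ℝ≥0∞ := fun x => ⨆ k : ℤ, (T k).indicator (fun _ => 4 * a k) x with hH
  refine ⟨H, ?_, ?_, ?_⟩
  · exact Measurable.iSup fun k => measurable_const.indicator (hTm k)
  · intro x
    refine le_of_forall_lt fun c hc => ?_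
    have hct : c ≠ ⊤ := (hc.trans_le le_top).ne
    rcases eq_or_ne c 0 with rfl | hc0
    · have hM0 : maximal d ν f x ≠ 0 := hc.ne'
      obtain ⟨b, hb0, hb⟩ := exists_between hc
      obtain ⟨k, hk1, hk2⟩ := ENNReal.exists_mem_Ico_zpow hb0.ne' (hb.trans_le le_top).ne
        (by norm_num : (1:ℝ≥0∞) < 2) (by norm_num)
      have hx : x ∈ T (k-1) := subset_toMeasurable _ _ (by
        change 2 * a (k-1) < _
        rw [← ha2, sub_add_cancel]; exact hk1.trans_lt hb)
      refine lt_of_lt_of_le ?_ (le_iSup _ (k-1))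
      rw [Set.indicator_of_mem hx]
      exact pos_iff_ne_zero.2 (mul_ne_zero (by norm_num) (ha0 _))
    · obtain ⟨k, hk1, hk2⟩ := ENNReal.exists_mem_Ico_zpow hc0 hct
        (by norm_num : (1:ℝ≥0∞) < 2) (by norm_num)
      have hx : x ∈ T (k-1) := subset_toMeasurable _ _ (by
        change 2 * a (k-1) < _
        rw [← ha2, sub_add_cancel]; exact hk1.trans_lt hc)
      refine lt_of_lt_of_le ?_ (le_iSup _ (k-1))
      rw [Set.indicator_of_mem hx]
      have : (4:ℝ≥0∞) * a (k-1) = a (k+1) := by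
        rw [ha2, ← sub_add_cancel k 1, ha2, ← mul_assoc, sub_add_cancel]; norm_num
      rw [this]; exact hk2
  · have hpt : ∀ x, H x ^ s ≤ ∑' k : ℤ, (T k).indicator (fun _ => (4 * a k) ^ s) x := by
      intro x
      have : H x ≤ (∑' k : ℤ, (T k).indicator (fun _ => (4 * a k) ^ s) x) ^ s⁻¹ := by
        refine iSup_le fun k => ?_
        by_cases hx : x ∈ T k
        · rw [Set.indicator_of_mem hx, ENNReal.le_rpow_inv_iff hs0]
          refine le_trans ?_ (ENNReal.le_tsum k)
          rw [Set.indicator_of_mem hx]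
        · rw [Set.indicator_of_notMem hx]; exact zero_le
      rwa [ENNReal.le_rpow_inv_iff hs0] at this
    have hTk : ∀ k, a k * ν (T k) ≤ K1 * ∫⁻ x, (if a k < f x then f x else 0) ∂ν := by
      intro k
      have hm : MeasurableSet {y | a k < f y} := measurableSet_lt measurable_const hf
      have h1 := hK1 ({y | a k < f y}.indicator f) (hf.indicator hm) (a k) (pos_iff_ne_zero.2 (ha0 k)) (hat k)
      have h2 : ∀ x, (if a k < f x then f x else 0) = {y | a k < f y}.indicator f x := by
        intro x; by_cases hx : a k < f x
        · rw [Set.indicator_of_mem (by exact hx), if_pos hx]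
        · rw [Set.indicator_of_notMem (by exact hx), if_neg hx]
      simp only [h2]
      refine le_trans ?_ h1
      rw [hT, measure_toMeasurable]
      gcongr a k * ν ?_
      intro x hx
      have hx' : 2 * a k < maximal d ν f x := hx
      have := hx'.trans_le (maximal_split h hf (a k) x)
      rw [two_mul] at this
      exact (ENNReal.add_lt_add_iff_right (hat k)).1 this
    have hterm : ∀ k, (4 * a k) ^ s * ν (T k) ≤ (4:ℝ≥0∞) ^ s * K1 *
        ∫⁻ x, (if a k < f x then (a k) ^ (s-1) * f x else 0) ∂ν := by
      intro k
      have e : (a k) ^ s = (a k) ^ (s-1) * a k := by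
        nth_rewrite 3 [← ENNReal.rpow_one (a k)]
        rw [← ENNReal.rpow_add _ _ (ha0 k) (hat k)]; congr 1; ring
      have e3 : ∫⁻ x, (if a k < f x then (a k) ^ (s-1) * f x else 0) ∂ν
          = (a k) ^ (s-1) * ∫⁻ x, (if a k < f x then f x else 0) ∂ν := by
        rw [← lintegral_const_mul]
        · simp only [mul_ite, mul_zero]
        · exact Measurable.ite (measurableSet_lt measurable_const hf) hf measurable_const
      rw [ENNReal.mul_rpow_of_nonneg _ _ hs0.le, e, e3]
      calc 4 ^ s * (a k ^ (s - 1) * a k) * ν (T k) = 4 ^ s * a k ^ (s - 1) * (a k * ν (T k)) := by ring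
        _ ≤ 4 ^ s * a k ^ (s - 1) * (K1 * ∫⁻ x, (if a k < f x then f x else 0) ∂ν) := by
            exact mul_le_mul_right (hTk k) _
        _ = _ := by ring
    calc ∫⁻ x, H x ^ s ∂ν ≤ ∫⁻ x, ∑' k : ℤ, (T k).indicator (fun _ => (4 * a k) ^ s) x ∂ν :=
          lintegral_mono hpt
      _ = ∑' k : ℤ, (4 * a k) ^ s * ν (T k) := by
          rw [lintegral_tsum (fun k => (measurable_const.indicator (hTm k)).aemeasurable)]
          congr 1; ext k
          rw [lintegral_indicator_const (hTm k)]
      _ ≤ ∑' k : ℤ, (4:ℝ≥0∞) ^ s * K1 * ∫⁻ x, (if a k < f x then (a k) ^ (s-1) * f x else 0) ∂ν :=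
          ENNReal.tsum_le_tsum hterm
      _ = (4:ℝ≥0∞) ^ s * K1 * ∫⁻ x, ∑' k : ℤ, (if a k < f x then (a k) ^ (s-1) * f x else 0) ∂ν := by
          rw [ENNReal.tsum_mul_left, lintegral_tsum]
          intro k
          exact (Measurable.ite (measurableSet_lt measurable_const hf) (hf.const_mul _)
            measurable_const).aemeasurable
      _ ≤ (4:ℝ≥0∞) ^ s * K1 * ∫⁻ x, K2 * f x ^ s ∂ν := by
          gcongr with x
          exact hK2 (f x)
      _ = _ := by
          rw [lintegral_const_mul _ (hf.pow_const s), ENNReal.coe_mul, ENNReal.coe_mul,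
            ENNReal.coe_rpow_of_nonneg _ hs0.le]
          norm_num [mul_assoc]

noncomputable def ee (d : X → X → ℝ) (x₀ x : X) : ℝ := Real.exp 1 + d x x₀

def Small (d : X → X → ℝ) (A₀ : ℝ) (x₀ z : X) (r : ℝ) : Prop := r < 1 ∨ 2 * A₀ * r < d z x₀

noncomputable def SS (d : X → X → ℝ) (x₀ z : X) (r : ℝ) : ℝ := ee d x₀ z / min r 1

lemma pow_cmp {p q t S C0 P T N : ℝ} (ht : 0 < t) (hlog : |Real.log t| ≤ T + N * Real.log S)
    (hosc : |p - q| * Real.log S ≤ C0) (hP : |p - q| ≤ P) (hT : 0 ≤ T) (hN : 0 ≤ N) :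
    t ^ p ≤ Real.exp (P * T + N * C0) * t ^ q := by
  rw [Real.rpow_def_of_pos ht, Real.rpow_def_of_pos ht, ← Real.exp_add]
  apply Real.exp_le_exp.2
  have h1 : Real.log t * (p - q) ≤ |Real.log t| * |p - q| := by
    rw [← abs_mul]; exact le_abs_self _
  have h2 : |Real.log t| * |p - q| ≤ (T + N * Real.log S) * |p - q| := by gcongr
  have h3 : (T + N * Real.log S) * |p - q| = |p - q| * T + N * (|p - q| * Real.log S) := by ring
  have h4 : |p - q| * T ≤ P * T := by gcongr
  have h5 : N * (|p - q| * Real.log S) ≤ N * C0 := by gcongr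
  nlinarith

lemma pow_inf_cmp {p q t e C0 P T M : ℝ} (ht : 0 ≤ t) (htT : t ≤ T) (hT : 1 ≤ T) (he : 1 ≤ e)
    (hosc : |p - q| * Real.log e ≤ C0) (hP : |p - q| ≤ P) (hM : 0 ≤ M) (hp : 1 ≤ p) (hq : 0 < q) :
    t ^ p ≤ Real.exp (P * Real.log T + M * C0) * t ^ q + e ^ (-M) := by
  have he0 : 0 < e := by linarith
  have hle : 0 ≤ Real.log e := Real.log_nonneg he
  have hlT : 0 ≤ Real.log T := Real.log_nonneg hT
  by_cases h : e ^ (-M) ≤ t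
  · have ht0 : 0 < t := lt_of_lt_of_le (Real.rpow_pos_of_pos he0 _) h
    have h1 : |Real.log t| ≤ Real.log T + M * Real.log e := by
      rw [abs_le]
      constructor
      · have := Real.log_le_log (Real.rpow_pos_of_pos he0 _) h
        rw [Real.log_rpow he0] at this
        linarith
      · have := Real.log_le_log ht0 htT
        nlinarith
    have := pow_cmp ht0 h1 hosc hP hlT hM
    have h2 : 0 ≤ e ^ (-M) := by positivity
    linarith
  · push Not at h
    have h1 : e ^ (-M) ≤ 1 := Real.rpow_le_one_of_one_le_of_nonpos he (by linarith)
    have h2 : t ^ p ≤ e ^ (-M) := by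
      calc t ^ p ≤ t ^ (1:ℝ) := by
            rcases eq_or_lt_of_le ht with h0 | h0
            · rw [← h0, Real.zero_rpow (by linarith), Real.zero_rpow (by norm_num)]
            · exact Real.rpow_le_rpow_of_exponent_ge h0 (by linarith) hp
        _ = t := Real.rpow_one _
        _ ≤ _ := h.le
    have : 0 ≤ Real.exp (P * Real.log T + M * C0) * t ^ q := by positivity
    linarith

structure Half (d : X → X → ℝ) (μ : Measure X) (A₀ : ℝ) (x₀ : X) (p : X → ℝ) (q pm pp Co : ℝ)
    (ν : Measure X) (α : X → ℝ → ℝ) (K c : ℝ) : Prop where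
  pm_gt : 1 < pm
  p_ge : ∀ x, pm ≤ p x
  p_le : ∀ x, p x ≤ pp
  q_ge : pm ≤ q
  q_le : q ≤ pp
  p_meas : Measurable p
  osc : ∀ z r, 0 < r → Small d A₀ x₀ z r → ∀ x ∈ ball d z r, ∀ y ∈ ball d z r,
    |p x - p y| * Real.log (SS d x₀ z r) ≤ Co
  osc_inf : ∀ x, |p x - q| * Real.log (ee d x₀ x) ≤ Co
  α_pos : ∀ z r, 0 < r → 0 < α z r
  mono : ∀ z r z' r', 0 < r → 0 < r' → ball d z r ⊆ ball d z' r' → α z r ≤ α z' r'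
  K_pos : 0 < K
  growth : ∀ z r z' r', 0 < r → 0 < r' → ball d z r ⊆ ball d z' r' →
    ENNReal.ofReal (α z' r') * μ (ball d z r) ≤ ENNReal.ofReal (K * α z r) * μ (ball d z' r')
  int_le : ∀ z r, 0 < r → ∫⁻ y in ball d z r, ENNReal.ofReal ((α z r) ^ (-p y)) ∂ν ≤ 1
  c_pos : 0 < c
  int_ge : ∀ z r, 0 < r →
    ENNReal.ofReal c ≤ ∫⁻ y in ball d z r, ENNReal.ofReal ((α z r) ^ (-p y)) ∂ν

section half
variable {d : X → X → ℝ} {μ : Measure X} {A₀ Cμ : ℝ} {x₀ : X}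

lemma ee_ge (hX : IsSHT d μ A₀ Cμ) (x : X) : Real.exp 1 ≤ ee d x₀ x := by
  unfold ee; linarith [hX.d_nonneg x x₀]

lemma ee_ge_one (hX : IsSHT d μ A₀ Cμ) (x : X) : 1 ≤ ee d x₀ x := by
  have := ee_ge (x₀ := x₀) hX x
  have := Real.add_one_le_exp (1:ℝ); linarith

lemma ee_pos (hX : IsSHT d μ A₀ Cμ) (x : X) : 0 < ee d x₀ x := by
  linarith [ee_ge_one (x₀ := x₀) hX x]

lemma log_ee_ge (hX : IsSHT d μ A₀ Cμ) (x : X) : 1 ≤ Real.log (ee d x₀ x) := by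
  rw [Real.le_log_iff_exp_le (ee_pos hX x)]; exact ee_ge hX x

lemma d_lt_ee (hX : IsSHT d μ A₀ Cμ) (x : X) : d x x₀ < ee d x₀ x := by
  unfold ee; linarith [Real.exp_pos 1]

lemma ee_le_SS (hX : IsSHT d μ A₀ Cμ) (z : X) {r : ℝ} (hr : 0 < r) : ee d x₀ z ≤ SS d x₀ z r := by
  unfold SS
  rw [le_div_iff₀ (by positivity)]
  have := ee_pos (x₀ := x₀) hX z
  nlinarith [min_le_right r 1]

lemma ee_div_le_SS (hX : IsSHT d μ A₀ Cμ) (z : X) {r : ℝ} (hr : 0 < r) : ee d x₀ z / r ≤ SS d x₀ z r := by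
  unfold SS
  have := ee_pos (x₀ := x₀) hX z
  gcongr
  exact min_le_left _ _

lemma log_SS_ge (hX : IsSHT d μ A₀ Cμ) (z : X) {r : ℝ} (hr : 0 < r) : 1 ≤ Real.log (SS d x₀ z r) :=
  (log_ee_ge hX z).trans (Real.log_le_log (ee_pos hX z) (ee_le_SS hX z hr))

lemma SS_pos (hX : IsSHT d μ A₀ Cμ) (z : X) {r : ℝ} (hr : 0 < r) : 0 < SS d x₀ z r :=
  (ee_pos hX z).trans_le (ee_le_SS hX z hr)

lemma meas_d (hX : IsSHT d μ A₀ Cμ) : Measurable (fun x => d x x₀) := by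
  refine measurable_of_Iio fun r => ?_
  have : (fun x => d x x₀) ⁻¹' Set.Iio r = ball d x₀ r := by
    ext y; change d y x₀ < r ↔ d x₀ y < r; rw [hX.d_symm]
  rw [this]; exact hX.measurableSet_ball _ _

lemma meas_ee (hX : IsSHT d μ A₀ Cμ) : Measurable (ee d x₀) := (meas_d hX).const_add _

lemma ofReal_le_of_mul_le {a b : ℝ} {m : ℝ≥0∞} (hb : 0 ≤ b) (hm0 : m ≠ 0) (hm : m ≠ ⊤)
    (h : ENNReal.ofReal a * m ≤ ENNReal.ofReal b * m) : a ≤ b := by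
  have := (ENNReal.mul_le_mul_iff_left hm0 hm).1 h
  exact (ENNReal.ofReal_le_ofReal_iff hb).1 this

lemma small_le_ee (hX : IsSHT d μ A₀ Cμ) {z : X} {r : ℝ} (hr : 0 < r) (hs : Small d A₀ x₀ z r) :
    r ≤ ee d x₀ z := by
  have h1 := ee_ge_one (x₀ := x₀) hX z
  have hA := hX.one_le_A₀
  rcases hs with h | h
  · linarith
  · have := d_lt_ee (x₀ := x₀) hX z
    nlinarith

lemma small_sub (hX : IsSHT d μ A₀ Cμ) {z : X} {r : ℝ} (hr : 0 < r) (hs : Small d A₀ x₀ z r) :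
    ball d z r ⊆ ball d x₀ (2 * A₀ * ee d x₀ z) := by
  intro y hy
  have h1 := small_le_ee hX hr hs
  have h2 := d_lt_ee (x₀ := x₀) hX z
  have hA := hX.one_le_A₀
  have h3 := hX.d_triangle x₀ y z
  rw [hX.d_symm x₀ z] at h3
  have h4 : d z y < r := hy
  change d x₀ y < _
  calc d x₀ y ≤ A₀ * (d z x₀ + d z y) := h3
    _ < A₀ * (ee d x₀ z + ee d x₀ z) := by
      apply mul_lt_mul_of_pos_left _ (by linarith); linarith
    _ = _ := by ring

lemma big_sub (hX : IsSHT d μ A₀ Cμ) (z : X) :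
    ball d x₀ (2 * A₀ * ee d x₀ z) ⊆ ball d z (3 * A₀ ^ 2 * ee d x₀ z) := by
  intro y hy
  have h1 := ee_pos (x₀ := x₀) hX z
  have h2 := d_lt_ee (x₀ := x₀) hX z
  have hA := hX.one_le_A₀
  have h3 := hX.d_triangle z y x₀
  have h4 : d x₀ y < _ := hy
  change d z y < _
  calc d z y ≤ A₀ * (d z x₀ + d x₀ y) := h3
    _ < A₀ * (ee d x₀ z + 2 * A₀ * ee d x₀ z) := by
      apply mul_lt_mul_of_pos_left _ (by linarith); linarith
    _ ≤ _ := by nlinarith [mul_nonneg (mul_nonneg h1.le (by linarith : 0 ≤ A₀)) (by linarith : 0 ≤ A₀ - 1)]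

variable {p : X → ℝ} {q pm pp Co : ℝ} {ν : Measure X} {α : X → ℝ → ℝ} {K c : ℝ}

lemma Half.growth_x0 (hX : IsSHT d μ A₀ Cμ) (H : Half d μ A₀ x₀ p q pm pp Co ν α K c) :
    ∃ (C : ℝ) (D : ℕ), 1 ≤ C ∧ ∀ R, 1 ≤ R → α x₀ R ≤ C * R ^ D := by
  obtain ⟨D, hD⟩ := hX.dim
  have h0 := H.α_pos x₀ 1 one_pos
  refine ⟨max 1 (K * α x₀ 1 * 2 ^ D), D, le_max_left _ _, fun R hR => ?_⟩
  have hK := H.K_pos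
  have h1 := H.growth x₀ 1 x₀ R one_pos (by linarith) (ball_mono d x₀ hR)
  have h2 := hD x₀ 1 R one_pos hR
  have h3 : ENNReal.ofReal (α x₀ R) * μ (ball d x₀ 1)
      ≤ ENNReal.ofReal (K * α x₀ 1 * (2 * (R / 1)) ^ D) * μ (ball d x₀ 1) := by
    rw [ENNReal.ofReal_mul (by positivity), mul_assoc]
    exact h1.trans (by gcongr)
  have h4 := ofReal_le_of_mul_le (by positivity) (hX.ball_pos x₀ 1 one_pos).ne'
    (hX.ball_ne_top x₀ 1 one_pos) h3
  calc α x₀ R ≤ K * α x₀ 1 * 2 ^ D * R ^ D := by rw [div_one, mul_pow] at h4; linarith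
    _ ≤ _ := by gcongr; exact le_max_right _ _

lemma Half.small_log (hX : IsSHT d μ A₀ Cμ) (H : Half d μ A₀ x₀ p q pm pp Co ν α K c) :
    ∃ T N : ℝ, 0 ≤ T ∧ 0 ≤ N ∧ ∀ z r, 0 < r → Small d A₀ x₀ z r →
      |Real.log (α z r)| ≤ T + N * Real.log (SS d x₀ z r) := by
  obtain ⟨D, hD⟩ := hX.dim
  obtain ⟨C, D', hC1, hC⟩ := H.growth_x0 hX
  have hA := hX.one_le_A₀
  have hA0 : 0 < A₀ := by linarith
  have hK := H.K_pos
  have h0 := H.α_pos x₀ 1 one_pos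
  set T1 := Real.log (C * (2 * A₀) ^ D')
  set T2 := Real.log (K * (2 * (3 * A₀ ^ 2)) ^ D / α x₀ 1)
  refine ⟨|T1| + |T2|, D + D', by positivity, by positivity, fun z r hr hs => ?_⟩
  have he1 := ee_ge_one (x₀ := x₀) hX z
  have he0 := ee_pos (x₀ := x₀) hX z
  have hS0 := SS_pos (x₀ := x₀) hX z hr
  have hlS := log_SS_ge (x₀ := x₀) hX z hr
  have hα := H.α_pos z r hr
  have hR1 : 1 ≤ 2 * A₀ * ee d x₀ z := by nlinarith
  set S := SS d x₀ z r with hSdef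
  have hup : Real.log (α z r) ≤ T1 + D' * Real.log S := by
    have h1 : α z r ≤ C * (2 * A₀) ^ D' * S ^ D' := by
      calc α z r ≤ α x₀ (2 * A₀ * ee d x₀ z) := H.mono _ _ _ _ hr (by linarith) (small_sub hX hr hs)
        _ ≤ C * (2 * A₀ * ee d x₀ z) ^ D' := hC _ hR1
        _ ≤ C * (2 * A₀ * S) ^ D' := by gcongr; exact ee_le_SS hX z hr
        _ = _ := by ring
    have h2 := Real.log_le_log hα h1
    rw [Real.log_mul (by positivity) (by positivity), Real.log_pow] at h2
    exact h2
  have hlow : -(T2 + D * Real.log S) ≤ Real.log (α z r) := by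
    have h1 := H.growth z r x₀ (2 * A₀ * ee d x₀ z) hr (by linarith) (small_sub hX hr hs)
    have h2 : μ (ball d x₀ (2 * A₀ * ee d x₀ z)) ≤ _ := (measure_mono (big_sub (x₀ := x₀) hX z)).trans
      (hD z r _ hr (by nlinarith [small_le_ee hX hr hs, mul_nonneg he0.le (by nlinarith : 0 ≤ A₀ ^ 2 - 1)]))
    have h3 : ENNReal.ofReal (α x₀ 1) * μ (ball d z r) ≤
        ENNReal.ofReal (K * α z r * (2 * (3 * A₀ ^ 2 * ee d x₀ z / r)) ^ D) * μ (ball d z r) := by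
      rw [ENNReal.ofReal_mul (by positivity), mul_assoc]
      refine le_trans ?_ (h1.trans (by gcongr))
      gcongr
      exact H.mono _ _ _ _ one_pos (by linarith) (ball_mono d x₀ hR1)
    have h4 := ofReal_le_of_mul_le (by positivity) (hX.ball_pos z r hr).ne'
      (hX.ball_ne_top z r hr) h3
    have h5 : α x₀ 1 ≤ K * α z r * ((2 * (3 * A₀ ^ 2)) ^ D * S ^ D) := by
      refine h4.trans ?_
      rw [← mul_pow]
      have := ee_div_le_SS (x₀ := x₀) hX z hr
      calc _ = K * α z r * (2 * (3 * A₀ ^ 2) * (ee d x₀ z / r)) ^ D := by ring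
        _ ≤ _ := by gcongr
    have h6 : 1 ≤ (K * (2 * (3 * A₀ ^ 2)) ^ D / α x₀ 1) * S ^ D * α z r := by
      rw [div_mul_eq_mul_div, div_mul_eq_mul_div, one_le_div h0]
      linarith
    have h7 := Real.log_le_log one_pos h6
    rw [Real.log_one, Real.log_mul (by positivity) (by positivity),
      Real.log_mul (by positivity) (by positivity), Real.log_pow] at h7
    change 0 ≤ T2 + D * Real.log S + _ at h7
    linarith
  have a1 := le_abs_self T1
  have a2 := le_abs_self T2
  have a3 := abs_nonneg T1
  have a4 := abs_nonneg T2
  have hD1 : 0 ≤ (D:ℝ) * Real.log S := by positivity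
  have hD2 : 0 ≤ (D':ℝ) * Real.log S := by positivity
  rw [abs_le]
  constructor <;> nlinarith

lemma Half.measure_x0 (hX : IsSHT d μ A₀ Cμ) (H : Half d μ A₀ x₀ p q pm pp Co ν α K c) :
    ∃ (C : ℝ) (E : ℕ), 1 ≤ C ∧ ∀ R, 1 ≤ R → ν (ball d x₀ R) ≤ ENNReal.ofReal (C * R ^ E) := by
  obtain ⟨C, D, hC1, hC⟩ := H.growth_x0 hX
  obtain ⟨n, hn⟩ := exists_nat_ge pp
  refine ⟨C ^ n, D * n, one_le_pow₀ hC1, fun R hR => ?_⟩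
  have hR0 : 0 < R := by linarith
  set A := C * R ^ D with hA
  have hA1 : 1 ≤ A := by
    have : 1 ≤ R ^ D := one_le_pow₀ hR
    nlinarith
  have hα := H.α_pos x₀ R hR0
  have h1 := H.int_le x₀ R hR0
  have h2 : ENNReal.ofReal ((A ^ n)⁻¹) * ν (ball d x₀ R) ≤ 1 := by
    rw [← setLIntegral_const]
    refine le_trans (lintegral_mono fun y => ENNReal.ofReal_le_ofReal ?_) h1
    rw [Real.rpow_neg hα.le]
    gcongr
    have hp0 : 1 ≤ p y := H.pm_gt.le.trans (H.p_ge y)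
    calc α x₀ R ^ p y ≤ A ^ p y := Real.rpow_le_rpow hα.le (hC R hR) (by linarith)
      _ ≤ A ^ (n:ℝ) := Real.rpow_le_rpow_of_exponent_le hA1 ((H.p_le y).trans hn)
      _ = A ^ n := Real.rpow_natCast _ _
  have hAn : 0 < A ^ n := by positivity
  calc ν (ball d x₀ R) = ENNReal.ofReal (A ^ n) * (ENNReal.ofReal ((A ^ n)⁻¹) * ν (ball d x₀ R)) := by
        rw [← mul_assoc, ← ENNReal.ofReal_mul hAn.le, mul_inv_cancel₀ hAn.ne', ENNReal.ofReal_one, one_mul]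
    _ ≤ ENNReal.ofReal (A ^ n) * 1 := by gcongr
    _ = _ := by rw [mul_one, hA, mul_pow, pow_mul]

lemma Half.tail (hX : IsSHT d μ A₀ Cμ) (H : Half d μ A₀ x₀ p q pm pp Co ν α K c) {η : ℝ} (hη : 0 < η) :
    ∃ N₀ : ℝ, 1 ≤ N₀ ∧ ∀ N, N₀ ≤ N → ∫⁻ x, ENNReal.ofReal (ee d x₀ x ^ (-N)) ∂ν ≤ ENNReal.ofReal η := by
  obtain ⟨C, E, hC1, hC⟩ := H.measure_x0 hX
  have hbase : ∫⁻ x, ENNReal.ofReal (ee d x₀ x ^ (-((E:ℝ)+1))) ∂ν ≤ ENNReal.ofReal (C * 2 ^ E * 2) := by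
    have hpt : ∀ x, ENNReal.ofReal (ee d x₀ x ^ (-((E:ℝ)+1))) ≤
        ∑' k : ℕ, (ball d x₀ (2 ^ (k+1))).indicator (fun _ => ENNReal.ofReal (((2:ℝ) ^ k)⁻¹ ^ (E+1))) x := by
      intro x
      obtain ⟨k, hk1, hk2⟩ := exists_nat_pow_near (ee_ge_one (x₀ := x₀) hX x) (one_lt_two)
      refine le_trans ?_ (ENNReal.le_tsum k)
      rw [Set.indicator_of_mem]
      · apply ENNReal.ofReal_le_ofReal
        rw [Real.rpow_neg (ee_pos hX x).le, inv_pow]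
        have : ((E:ℝ)+1) = ((E+1 : ℕ) : ℝ) := by push_cast; ring
        rw [this, Real.rpow_natCast]
        gcongr
      · change d x₀ x < _
        rw [hX.d_symm]; exact (d_lt_ee hX x).trans hk2
    calc _ ≤ ∫⁻ x, ∑' k : ℕ, (ball d x₀ (2 ^ (k+1))).indicator (fun _ => ENNReal.ofReal (((2:ℝ) ^ k)⁻¹ ^ (E+1))) x ∂ν :=
          lintegral_mono hpt
      _ = ∑' k : ℕ, ENNReal.ofReal (((2:ℝ) ^ k)⁻¹ ^ (E+1)) * ν (ball d x₀ (2 ^ (k+1))) := by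
          rw [lintegral_tsum (fun k => (measurable_const.indicator (hX.measurableSet_ball _ _)).aemeasurable)]
          congr 1; ext k
          rw [lintegral_indicator_const (hX.measurableSet_ball _ _)]
      _ ≤ ∑' k : ℕ, ENNReal.ofReal (C * 2 ^ E) * (2⁻¹ : ℝ≥0∞) ^ k := by
          refine ENNReal.tsum_le_tsum fun k => ?_
          calc _ ≤ ENNReal.ofReal (((2:ℝ) ^ k)⁻¹ ^ (E+1)) * ENNReal.ofReal (C * (2 ^ (k+1)) ^ E) := by
                gcongr; exact hC _ (one_le_pow₀ (by norm_num))
            _ = ENNReal.ofReal (C * 2 ^ E * (2⁻¹) ^ k) := by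
                rw [← ENNReal.ofReal_mul (by positivity)]; congr 1
                have : (2:ℝ) ^ k ≠ 0 := by positivity
                rw [pow_succ, pow_succ, mul_pow, inv_pow, inv_pow]
                field_simp
            _ = _ := by
                rw [ENNReal.ofReal_mul (by positivity), ENNReal.ofReal_pow (by norm_num),
                  ENNReal.ofReal_inv_of_pos (by norm_num)]; norm_num
      _ = _ := by
          rw [ENNReal.tsum_mul_left, ENNReal.tsum_geometric, ENNReal.one_sub_inv_two, inv_inv,
            ENNReal.ofReal_mul (show 0 ≤ C * 2 ^ E by positivity) (q := 2), ENNReal.ofReal_ofNat]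
  obtain ⟨m, hm⟩ := exists_nat_ge (Real.log (C * 2 ^ E * 2 / η))
  refine ⟨E + 1 + m, by linarith [(Nat.cast_nonneg E : (0:ℝ) ≤ E), (Nat.cast_nonneg m : (0:ℝ) ≤ m)], fun N hN => ?_⟩
  calc ∫⁻ x, ENNReal.ofReal (ee d x₀ x ^ (-N)) ∂ν
      ≤ ∫⁻ x, ENNReal.ofReal (Real.exp (-m)) * ENNReal.ofReal (ee d x₀ x ^ (-((E:ℝ)+1))) ∂ν := by
        refine lintegral_mono fun x => ?_
        rw [← ENNReal.ofReal_mul (by positivity)]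
        apply ENNReal.ofReal_le_ofReal
        have hp := ee_pos (x₀ := x₀) hX x
        have hl := log_ee_ge (x₀ := x₀) hX x
        rw [Real.rpow_def_of_pos hp, Real.rpow_def_of_pos hp, ← Real.exp_add]
        apply Real.exp_le_exp.2
        have : (m:ℝ) ≤ Real.log (ee d x₀ x) * (N - (E+1)) := by
          have hm0 : (0:ℝ) ≤ m := Nat.cast_nonneg m
          nlinarith
        nlinarith
    _ = ENNReal.ofReal (Real.exp (-m)) * ∫⁻ x, ENNReal.ofReal (ee d x₀ x ^ (-((E:ℝ)+1))) ∂ν := by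
        rw [lintegral_const_mul]
        exact ((meas_ee hX).pow_const _).ennreal_ofReal
    _ ≤ ENNReal.ofReal (Real.exp (-m)) * ENNReal.ofReal (C * 2 ^ E * 2) := by gcongr
    _ ≤ ENNReal.ofReal η := by
        rw [← ENNReal.ofReal_mul (by positivity)]
        apply ENNReal.ofReal_le_ofReal
        rw [Real.exp_neg, inv_mul_le_iff₀ (by positivity)]
        have := (Real.log_le_iff_le_exp (by positivity)).1 hm
        rw [div_le_iff₀ hη] at this
        linarith
end half

section half4
variable {d : X → X → ℝ} {μ : Measure X} {A₀ Cμ : ℝ} {x₀ : X}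
variable {p : X → ℝ} {q pm pp Co : ℝ} {ν : Measure X} {α : X → ℝ → ℝ} {K c : ℝ}

lemma Half.pp_gt (H : Half d μ A₀ x₀ p q pm pp Co ν α K c) : 1 < pp :=
  H.pm_gt.trans_le (H.q_ge.trans H.q_le)

lemma Half.abs_pp (H : Half d μ A₀ x₀ p q pm pp Co ν α K c) (x y : X) : |p x - p y| ≤ pp := by
  have := H.p_ge x; have := H.p_ge y; have := H.p_le x; have := H.p_le y; have := H.pm_gt
  rw [abs_le]; constructor <;> linarith

lemma Half.abs_pq (H : Half d μ A₀ x₀ p q pm pp Co ν α K c) (x : X) : |p x - q| ≤ pp := by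
  have := H.p_ge x; have := H.q_ge; have := H.p_le x; have := H.q_le; have := H.pm_gt
  rw [abs_le]; constructor <;> linarith

lemma Half.small_cmp (hX : IsSHT d μ A₀ Cμ) (H : Half d μ A₀ x₀ p q pm pp Co ν α K c) :
    ∃ C : ℝ, 1 ≤ C ∧ ∀ z r, 0 < r → Small d A₀ x₀ z r → ∀ x ∈ ball d z r,
      ν (ball d z r) ≤ ENNReal.ofReal (C * α z r ^ p x) ∧
      ENNReal.ofReal (α z r ^ p x) ≤ ENNReal.ofReal C * ν (ball d z r) := by
  obtain ⟨T, N, hT, hN, hlog⟩ := H.small_log hX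
  set E := Real.exp (pp * T + N * Co)
  have hE : 0 < E := Real.exp_pos _
  have hc := H.c_pos
  refine ⟨max 1 (max E (E / c)), le_max_left _ _, fun z r hr hs x hx => ?_⟩
  set C := max 1 (max E (E / c)) with hC
  have hC0 : 0 < C := lt_of_lt_of_le one_pos (le_max_left _ _)
  have hCE : E ≤ C := (le_max_left _ _).trans (le_max_right _ _)
  have hCE2 : E / c ≤ C := (le_max_right _ _).trans (le_max_right _ _)
  have hα := H.α_pos z r hr
  set a := α z r
  have hl := hlog z r hr hs
  have hm := hX.measurableSet_ball z r
  have k1 : ∀ y ∈ ball d z r, a ^ (-p x) ≤ E * a ^ (-p y) := fun y hy =>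
    pow_cmp hα hl (by have := H.osc z r hr hs y hy x hx; rwa [show -p x - -p y = p y - p x by ring])
      (by have := H.abs_pp y x; rwa [show -p x - -p y = p y - p x by ring]) hT hN
  have k2 : ∀ y ∈ ball d z r, a ^ (-p y) ≤ E * a ^ (-p x) := fun y hy =>
    pow_cmp hα hl (by have := H.osc z r hr hs x hx y hy; rwa [show -p y - -p x = p x - p y by ring])
      (by have := H.abs_pp x y; rwa [show -p y - -p x = p x - p y by ring]) hT hN
  have hinv : a ^ p x * a ^ (-p x) = 1 := by
    rw [← Real.rpow_add hα]; simp
  have hax : 0 < a ^ p x := by positivity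
  constructor
  · have h1 : ENNReal.ofReal (a ^ (-p x)) * ν (ball d z r) ≤ ENNReal.ofReal E := by
      rw [← setLIntegral_const]
      calc _ ≤ ∫⁻ y in ball d z r, ENNReal.ofReal E * ENNReal.ofReal (a ^ (-p y)) ∂ν := by
            refine setLIntegral_mono' hm fun y hy => ?_
            rw [← ENNReal.ofReal_mul hE.le]; exact ENNReal.ofReal_le_ofReal (k1 y hy)
        _ = ENNReal.ofReal E * ∫⁻ y in ball d z r, ENNReal.ofReal (a ^ (-p y)) ∂ν :=
            lintegral_const_mul' _ _ ENNReal.ofReal_ne_top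
        _ ≤ ENNReal.ofReal E * 1 := by gcongr; exact H.int_le z r hr
        _ = _ := mul_one _
    calc ν (ball d z r) = ENNReal.ofReal (a ^ p x) * (ENNReal.ofReal (a ^ (-p x)) * ν (ball d z r)) := by
          rw [← mul_assoc, ← ENNReal.ofReal_mul hax.le, hinv, ENNReal.ofReal_one, one_mul]
      _ ≤ ENNReal.ofReal (a ^ p x) * ENNReal.ofReal E := by gcongr
      _ = ENNReal.ofReal (E * a ^ p x) := by rw [← ENNReal.ofReal_mul hax.le, mul_comm]
      _ ≤ _ := by gcongr
  · have h1 : ENNReal.ofReal c ≤ ENNReal.ofReal (E * a ^ (-p x)) * ν (ball d z r) := by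
      rw [← setLIntegral_const]
      exact (H.int_ge z r hr).trans (setLIntegral_mono' hm fun y hy =>
        ENNReal.ofReal_le_ofReal (k2 y hy))
    calc ENNReal.ofReal (a ^ p x) = ENNReal.ofReal (a ^ p x / c) * ENNReal.ofReal c := by
          rw [← ENNReal.ofReal_mul (by positivity)]; congr 1; field_simp
      _ ≤ ENNReal.ofReal (a ^ p x / c) * (ENNReal.ofReal (E * a ^ (-p x)) * ν (ball d z r)) := by gcongr
      _ = ENNReal.ofReal (E / c) * ν (ball d z r) := by
          rw [← mul_assoc, ← ENNReal.ofReal_mul (by positivity)]; congr 2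
          calc a ^ p x / c * (E * a ^ (-p x)) = E / c * (a ^ p x * a ^ (-p x)) := by ring
            _ = _ := by rw [hinv, mul_one]
      _ ≤ _ := by gcongr

lemma Half.large_cmp (hX : IsSHT d μ A₀ Cμ) (H : Half d μ A₀ x₀ p q pm pp Co ν α K c) {c' : ℝ}
    (hc' : 0 < c') :
    ∃ C : ℝ, 1 ≤ C ∧ ∀ z r, 0 < r → c' ≤ α z r → 
      ν (ball d z r) ≤ ENNReal.ofReal (C * α z r ^ q) ∧
      ENNReal.ofReal (α z r ^ q) ≤ ENNReal.ofReal C * ν (ball d z r) := by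
  have hc := H.c_pos
  obtain ⟨N1, hN1, ht1⟩ := H.tail hX (half_pos hc)
  obtain ⟨N2, hN2, ht2⟩ := H.tail hX one_pos
  set M := max N1 N2
  have hM0 : 0 ≤ M := by have := le_max_left N1 N2; linarith
  replace ht1 := ht1 M (le_max_left _ _)
  replace ht2 := ht2 M (le_max_right _ _)
  set T := max 1 (1 / c')
  have hT1 : 1 ≤ T := le_max_left _ _
  set E := Real.exp (pp * Real.log T + M * Co)
  have hE : 0 < E := Real.exp_pos _
  set C := max 1 (max (E + 1) (2 * E / c)) with hC
  refine ⟨C, le_max_left _ _, fun z r hr ha => ?_⟩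
  have hC0 : 0 < C := lt_of_lt_of_le one_pos (le_max_left _ _)
  have hCE : E + 1 ≤ C := (le_max_left _ _).trans (le_max_right _ _)
  have hCE2 : 2 * E / c ≤ C := (le_max_right _ _).trans (le_max_right _ _)
  have hα := H.α_pos z r hr
  set a := α z r
  have hm := hX.measurableSet_ball z r
  have hq1 : 1 < q := H.pm_gt.trans_le H.q_ge
  have hp1 : ∀ y, 1 < p y := fun y => H.pm_gt.trans_le (H.p_ge y)
  have hneg : ∀ s : ℝ, a ^ (-s) = (a⁻¹) ^ s := fun s => by
    rw [Real.rpow_neg hα.le, Real.inv_rpow hα.le]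
  have haT : a⁻¹ ≤ T := by
    refine le_trans ?_ (le_max_right _ _)
    rw [one_div]; gcongr
  have k1 : ∀ y, a ^ (-q) ≤ E * a ^ (-p y) + ee d x₀ y ^ (-M) := fun y => by
    rw [hneg, hneg]
    refine pow_inf_cmp (by positivity) haT hT1 (ee_ge_one hX y) ?_ ?_ hM0 hq1.le (by linarith [hp1 y])
    · rw [abs_sub_comm]; exact H.osc_inf y
    · rw [abs_sub_comm]; exact H.abs_pq y
  have k2 : ∀ y, a ^ (-p y) ≤ E * a ^ (-q) + ee d x₀ y ^ (-M) := fun y => by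
    rw [hneg, hneg]
    exact pow_inf_cmp (by positivity) haT hT1 (ee_ge_one hX y) (H.osc_inf y) (H.abs_pq y) hM0 (hp1 y).le (by linarith)
  have hinv : a ^ q * a ^ (-q) = 1 := by
    rw [← Real.rpow_add hα]; simp
  have hax : 0 < a ^ q := by positivity
  have hme : Measurable fun y => ENNReal.ofReal (ee d x₀ y ^ (-M)) :=
    ((meas_ee hX).pow_const _).ennreal_ofReal
  constructor
  · have h1 : ENNReal.ofReal (a ^ (-q)) * ν (ball d z r) ≤ ENNReal.ofReal (E + 1) := by
      rw [← setLIntegral_const]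
      calc _ ≤ ∫⁻ y in ball d z r, (ENNReal.ofReal E * ENNReal.ofReal (a ^ (-p y))
              + ENNReal.ofReal (ee d x₀ y ^ (-M))) ∂ν := by
            refine setLIntegral_mono' hm fun y hy => ?_
            rw [← ENNReal.ofReal_mul hE.le, ← ENNReal.ofReal_add (by positivity) 
              (Real.rpow_nonneg (ee_pos hX y).le _)]
            exact ENNReal.ofReal_le_ofReal (k1 y)
        _ = ENNReal.ofReal E * ∫⁻ y in ball d z r, ENNReal.ofReal (a ^ (-p y)) ∂ν
              + ∫⁻ y in ball d z r, ENNReal.ofReal (ee d x₀ y ^ (-M)) ∂ν := by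
            rw [lintegral_add_right _ hme, lintegral_const_mul' _ _ ENNReal.ofReal_ne_top]
        _ ≤ ENNReal.ofReal E * 1 + ENNReal.ofReal 1 := by
            gcongr
            · exact H.int_le z r hr
            · exact (setLIntegral_le_lintegral _ _).trans ht2
        _ = _ := by rw [mul_one, ← ENNReal.ofReal_add hE.le one_pos.le]
    calc ν (ball d z r) = ENNReal.ofReal (a ^ q) * (ENNReal.ofReal (a ^ (-q)) * ν (ball d z r)) := by
          rw [← mul_assoc, ← ENNReal.ofReal_mul hax.le, hinv, ENNReal.ofReal_one, one_mul]
      _ ≤ ENNReal.ofReal (a ^ q) * ENNReal.ofReal (E + 1) := by gcongr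
      _ = ENNReal.ofReal ((E + 1) * a ^ q) := by rw [← ENNReal.ofReal_mul hax.le, mul_comm]
      _ ≤ _ := by gcongr
  · have h1 : ENNReal.ofReal (c / 2) ≤ ENNReal.ofReal (E * a ^ (-q)) * ν (ball d z r) := by
      have h2 : ENNReal.ofReal (c / 2) + ENNReal.ofReal (c / 2) ≤
          ENNReal.ofReal (E * a ^ (-q)) * ν (ball d z r) + ENNReal.ofReal (c / 2) := by
        rw [← ENNReal.ofReal_add (by positivity) (by positivity), add_halves]
        calc _ ≤ _ := H.int_ge z r hr
          _ ≤ ∫⁻ y in ball d z r, (ENNReal.ofReal (E * a ^ (-q))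
              + ENNReal.ofReal (ee d x₀ y ^ (-M))) ∂ν := by
            refine setLIntegral_mono' hm fun y hy => ?_
            rw [← ENNReal.ofReal_add (by positivity) 
              (Real.rpow_nonneg (ee_pos hX y).le _)]
            exact ENNReal.ofReal_le_ofReal (k2 y)
          _ = ENNReal.ofReal (E * a ^ (-q)) * ν (ball d z r)
              + ∫⁻ y in ball d z r, ENNReal.ofReal (ee d x₀ y ^ (-M)) ∂ν := by
            rw [lintegral_add_right _ hme, setLIntegral_const]
          _ ≤ _ := by
            gcongr
            exact (setLIntegral_le_lintegral _ _).trans ht1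
      exact (ENNReal.add_le_add_iff_right ENNReal.ofReal_ne_top).1 h2
    calc ENNReal.ofReal (a ^ q) = ENNReal.ofReal (2 * a ^ q / c) * ENNReal.ofReal (c / 2) := by
          rw [← ENNReal.ofReal_mul (by positivity)]; congr 1; field_simp
      _ ≤ ENNReal.ofReal (2 * a ^ q / c) * (ENNReal.ofReal (E * a ^ (-q)) * ν (ball d z r)) := by gcongr
      _ = ENNReal.ofReal (2 * E / c) * ν (ball d z r) := by
          rw [← mul_assoc, ← ENNReal.ofReal_mul (by positivity)]; congr 2
          calc 2 * a ^ q / c * (E * a ^ (-q)) = 2 * E / c * (a ^ q * a ^ (-q)) := by ring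
            _ = _ := by rw [hinv, mul_one]
      _ ≤ _ := by gcongr

lemma Half.isSHT (hX : IsSHT d μ A₀ Cμ) (H : Half d μ A₀ x₀ p q pm pp Co ν α K c) :
    ∃ C' : ℝ, IsSHT d ν A₀ C' := by
  have hA := hX.one_le_A₀
  have hK := H.K_pos
  obtain ⟨D, hD⟩ := hX.dim
  have hCμ := hX.one_le_Cμ
  have h0 := H.α_pos x₀ 1 one_pos
  set c' := α x₀ 1 / (K * (2 * (6 * A₀ ^ 2)) ^ D) with hc'
  have hA0 : 0 < A₀ := by linarith
  have hc'0 : 0 < c' := by positivity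
  obtain ⟨C1, hC1, hs⟩ := H.small_cmp hX
  obtain ⟨C2, hC2, hl⟩ := H.large_cmp hX hc'0
  obtain ⟨C3, E, hC3, hm⟩ := H.measure_x0 hX
  set G := max 1 (K * Cμ) with hG
  have hG1 : 1 ≤ G := le_max_left _ _
  have hpp := H.pp_gt
  have hGpp : 1 ≤ G ^ pp := Real.one_le_rpow hG1 (by linarith)
  have dbl : ∀ z r, 0 < r → α z (2 * r) ≤ G * α z r := by
    intro z r hr
    have h1 := H.growth z r z (2 * r) hr (by linarith) (ball_mono d z (by linarith))
    have h3 : ENNReal.ofReal (α z (2 * r)) * μ (ball d z r)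
      ≤ ENNReal.ofReal (K * α z r * Cμ) * μ (ball d z r) := by
      have := H.α_pos z r hr
      rw [ENNReal.ofReal_mul (by positivity), mul_assoc]
      exact h1.trans (by gcongr; exact hX.doubling z r hr)
    have := H.α_pos z r hr
    have h4 := ofReal_le_of_mul_le (by positivity) (hX.ball_pos z r hr).ne' (hX.ball_ne_top z r hr) h3
    calc _ ≤ _ := h4
      _ = K * Cμ * α z r := by ring
      _ ≤ _ := by gcongr; exact le_max_right _ _
  have dblp : ∀ z r s, 0 < r → 1 ≤ s → s ≤ pp → α z (2 * r) ^ s ≤ G ^ pp * α z r ^ s := by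
    intro z r s hr hs1 hs2
    have := H.α_pos z r hr
    have h2 := H.α_pos z (2 * r) (by linarith)
    calc α z (2 * r) ^ s ≤ (G * α z r) ^ s := Real.rpow_le_rpow h2.le (dbl z r hr) (by linarith)
      _ = G ^ s * α z r ^ s := Real.mul_rpow (by linarith) this.le
      _ ≤ _ := by gcongr
  refine ⟨C1 * C1 * G ^ pp + C2 * C2 * G ^ pp, ?_⟩
  refine { hX with one_le_Cμ := ?_, ball_pos := ?_, ball_ne_top := ?_, doubling := ?_ }
  · have : 1 ≤ C1 * C1 := by nlinarith
    have : 1 ≤ C2 * C2 := by nlinarith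
    nlinarith
  · intro z r hr
    have h1 := H.int_ge z r hr
    rw [pos_iff_ne_zero]
    intro h2
    rw [Measure.restrict_eq_zero.2 h2, lintegral_zero_measure] at h1
    have : 0 < ENNReal.ofReal c := ENNReal.ofReal_pos.2 H.c_pos
    exact absurd h1 (not_le.2 this)
  · intro z r hr
    have hR : 1 ≤ A₀ * (d x₀ z + r) + 1 := by
      have := hX.d_nonneg x₀ z
      have : 0 ≤ A₀ * (d x₀ z + r) := by positivity
      linarith
    refine ne_top_of_le_ne_top ENNReal.ofReal_ne_top ((measure_mono ?_).trans (hm _ hR))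
    intro y hy
    have hy' : d z y < r := hy
    change d x₀ y < _
    have := hX.d_triangle x₀ y z
    nlinarith
  · intro z r hr
    have h2r : 0 < 2 * r := by linarith
    by_cases hsm : Small d A₀ x₀ z (2 * r)
    · have hsm' : Small d A₀ x₀ z r := by
        rcases hsm with h | h
        · left; linarith
        · right; nlinarith
      have e1 := (hs z (2 * r) h2r hsm z (hX.self_mem z h2r)).1
      have e2 := (hs z r hr hsm' z (hX.self_mem z hr)).2
      have e3 := dblp z r (p z) hr (H.pm_gt.le.trans (H.p_ge z)) (H.p_le z)
      calc _ ≤ _ := e1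
        _ ≤ ENNReal.ofReal (C1 * G ^ pp * α z r ^ p z) := by
          apply ENNReal.ofReal_le_ofReal; rw [mul_assoc]; gcongr
        _ = ENNReal.ofReal (C1 * G ^ pp) * ENNReal.ofReal (α z r ^ p z) := ENNReal.ofReal_mul (by positivity)
        _ ≤ ENNReal.ofReal (C1 * G ^ pp) * (ENNReal.ofReal C1 * ν (ball d z r)) := by gcongr
        _ = ENNReal.ofReal (C1 * C1 * G ^ pp) * ν (ball d z r) := by
          rw [← mul_assoc, ← ENNReal.ofReal_mul (by positivity)]; congr 2; ring
        _ ≤ _ := by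
          gcongr
          have : 0 ≤ C2 * C2 * G ^ pp := by positivity
          linarith
    · unfold Small at hsm
      push Not at hsm
      obtain ⟨hr1, hd⟩ := hsm
      have hsub : ball d x₀ 1 ⊆ ball d z (6 * A₀ ^ 2 * r) := by
        intro y hy
        have hy' : d x₀ y < 1 := hy
        change d z y < _
        have := hX.d_triangle z y x₀
        calc d z y ≤ A₀ * (d z x₀ + d x₀ y) := this
          _ < A₀ * (2 * A₀ * (2 * r) + 2 * r) := by
            apply mul_lt_mul_of_pos_left _ hA0; linarith
          _ ≤ _ := by nlinarith [mul_nonneg (mul_nonneg hr.le hA0.le) (by linarith : 0 ≤ A₀ - 1)]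
      have hαr := H.α_pos z r hr
      have hc'r : c' ≤ α z r := by
        have hrR : r ≤ 6 * A₀ ^ 2 * r := by nlinarith [mul_nonneg hr.le (by nlinarith : 0 ≤ A₀ ^ 2 - 1)]
        have h1 := H.growth z r z (6 * A₀ ^ 2 * r) hr (by positivity) (ball_mono d z hrR)
        have h2 := H.mono _ _ _ _ one_pos (by positivity) hsub
        have h3 : ENNReal.ofReal (α x₀ 1) * μ (ball d z r)
          ≤ ENNReal.ofReal (K * α z r * (2 * (6 * A₀ ^ 2)) ^ D) * μ (ball d z r) := by
          rw [ENNReal.ofReal_mul (by positivity), mul_assoc]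
          refine le_trans (by gcongr) (h1.trans ?_)
          have := hD z r _ hr hrR
          rw [mul_div_cancel_right₀ _ hr.ne'] at this
          gcongr
        have h4 := ofReal_le_of_mul_le (by positivity) (hX.ball_pos z r hr).ne' (hX.ball_ne_top z r hr) h3
        rw [hc', div_le_iff₀ (by positivity)]
        linarith
      have e0 : c' ≤ α z (2 * r) := hc'r.trans (H.mono _ _ _ _ hr h2r (ball_mono d z (by linarith)))
      have e1 := (hl z (2 * r) h2r e0).1
      have e2 := (hl z r hr hc'r).2
      have e3 := dblp z r q hr (H.pm_gt.le.trans H.q_ge) H.q_le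
      calc _ ≤ _ := e1
        _ ≤ ENNReal.ofReal (C2 * G ^ pp * α z r ^ q) := by
          apply ENNReal.ofReal_le_ofReal; rw [mul_assoc]; gcongr
        _ = ENNReal.ofReal (C2 * G ^ pp) * ENNReal.ofReal (α z r ^ q) := ENNReal.ofReal_mul (by positivity)
        _ ≤ ENNReal.ofReal (C2 * G ^ pp) * (ENNReal.ofReal C2 * ν (ball d z r)) := by gcongr
        _ = ENNReal.ofReal (C2 * C2 * G ^ pp) * ν (ball d z r) := by
          rw [← mul_assoc, ← ENNReal.ofReal_mul (by positivity)]; congr 2; ring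
        _ ≤ _ := by
          gcongr
          have : 0 ≤ C1 * C1 * G ^ pp := by positivity
          linarith

lemma Half.small_lower (hX : IsSHT d μ A₀ Cμ) (H : Half d μ A₀ x₀ p q pm pp Co ν α K c) :
    ∃ T N : ℝ, 0 ≤ T ∧ 0 ≤ N ∧ ∀ z r, 0 < r → Small d A₀ x₀ z r →
      ENNReal.ofReal (Real.exp (-(T + N * Real.log (SS d x₀ z r)))) ≤ ν (ball d z r) := by
  obtain ⟨T, N, hT, hN, hlog⟩ := H.small_log hX
  obtain ⟨C, hC, hs⟩ := H.small_cmp hX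
  have hpp := H.pp_gt
  have hlC := Real.log_nonneg hC
  refine ⟨pp * T + Real.log C, pp * N, by positivity, by positivity, fun z r hr hsm => ?_⟩
  have h1 := (hs z r hr hsm z (hX.self_mem z hr)).2
  have h2 := hlog z r hr hsm
  have hα := H.α_pos z r hr
  have hS := log_SS_ge (x₀ := x₀) hX z hr
  set L := Real.log (SS d x₀ z r)
  have hC0 : 0 < C := by linarith
  have h3 : C * Real.exp (-(pp * T + Real.log C + pp * N * L)) ≤ α z r ^ p z := by
    nth_rewrite 1 [← Real.exp_log hC0]
    rw [Real.rpow_def_of_pos hα, ← Real.exp_add]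
    apply Real.exp_le_exp.2
    have h4 := (abs_le.1 h2).1
    have h5 := H.p_le z
    have h6 := H.pm_gt.trans_le (H.p_ge z)
    have h7 : (T + N * L) * p z ≤ (T + N * L) * pp := by gcongr
    nlinarith
  have h4 : ENNReal.ofReal C * ENNReal.ofReal (Real.exp (-(pp * T + Real.log C + pp * N * L)))
      ≤ ENNReal.ofReal C * ν (ball d z r) := by
    rw [← ENNReal.ofReal_mul hC0.le]
    exact (ENNReal.ofReal_le_ofReal h3).trans h1
  exact (ENNReal.mul_le_mul_iff_right (ENNReal.ofReal_pos.2 hC0).ne' ENNReal.ofReal_ne_top).1 h4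

end half4

lemma jensen_avg {ν : Measure X} {B : Set X} (h0 : ν B ≠ 0) (h1 : ν B ≠ ⊤) {f : X → ℝ≥0∞}
    (hf : Measurable f) {a : ℝ} (ha : 1 ≤ a) :
    ((ν B)⁻¹ * ∫⁻ y in B, f y ∂ν) ^ a ≤ (ν B)⁻¹ * ∫⁻ y in B, f y ^ a ∂ν := by
  have ha0 : 0 < a := by linarith
  have h2 := eLpNorm'_le_eLpNorm'_mul_rpow_measure_univ (μ := ν.restrict B) one_pos ha
    (f := f) hf.aestronglyMeasurable
  unfold eLpNorm' at h2
  simp only [enorm_eq_self, ENNReal.rpow_one, div_one, Measure.restrict_apply_univ] at h2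
  have h3 := ENNReal.rpow_le_rpow h2 ha0.le
  rw [ENNReal.mul_rpow_of_nonneg _ _ ha0.le, ← ENNReal.rpow_mul, ← ENNReal.rpow_mul,
    one_div_mul_cancel ha0.ne', ENNReal.rpow_one, show (1 - 1 / a) * a = a - 1 by field_simp] at h3
  rw [ENNReal.mul_rpow_of_nonneg _ _ ha0.le]
  calc _ ≤ ((ν B)⁻¹) ^ a * ((∫⁻ y in B, f y ^ a ∂ν) * ν B ^ (a - 1)) := by gcongr
    _ = (((ν B)⁻¹) ^ a * ν B ^ (a - 1)) * ∫⁻ y in B, f y ^ a ∂ν := by ring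
    _ = _ := by
      congr 1
      rw [ENNReal.inv_rpow, ← ENNReal.rpow_neg, ← ENNReal.rpow_add _ _ h0 h1,
        show -a + (a - 1) = -1 by ring, ENNReal.rpow_neg_one]

lemma pow_cmp_enn {a b C0 P T N L : ℝ} {t : ℝ≥0∞} (hlo : ENNReal.ofReal (Real.exp (-(T + N * L))) ≤ t)
    (hhi : t ≤ ENNReal.ofReal (Real.exp (T + N * L)))
    (hosc : |a - b| * L ≤ C0) (hP : |a - b| ≤ P) (hT : 0 ≤ T) (hN : 0 ≤ N) :
    t ^ a ≤ ENNReal.ofReal (Real.exp (P * T + N * C0)) * t ^ b := by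
  have ht : t ≠ ⊤ := ne_top_of_le_ne_top ENNReal.ofReal_ne_top hhi
  lift t to ℝ≥0 using ht
  have h1 : Real.exp (-(T + N * L)) ≤ t := by
    have := ENNReal.toReal_mono ENNReal.coe_ne_top hlo
    rwa [ENNReal.toReal_ofReal (by positivity)] at this
  have h2 : (t:ℝ) ≤ Real.exp (T + N * L) := by
    have := ENNReal.toReal_mono ENNReal.ofReal_ne_top hhi
    rwa [ENNReal.toReal_ofReal (by positivity)] at this
  have ht0 : (0:ℝ) < t := (Real.exp_pos _).trans_le h1
  have h3 : |Real.log t| ≤ T + N * Real.log (Real.exp L) := by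
    rw [Real.log_exp, abs_le]
    exact ⟨(Real.le_log_iff_exp_le ht0).2 h1, (Real.log_le_iff_le_exp ht0).2 h2⟩
  have h4 := pow_cmp (C0 := C0) ht0 h3 (by rw [Real.log_exp]; exact hosc) hP hT hN
  have e : ∀ s : ℝ, (t:ℝ≥0∞) ^ s = ENNReal.ofReal ((t:ℝ) ^ s) := fun s => by
    rw [← ENNReal.ofReal_rpow_of_pos ht0, ENNReal.ofReal_coe_nnreal]
  rw [e, e, ← ENNReal.ofReal_mul (by positivity)]
  exact ENNReal.ofReal_le_ofReal h4

lemma add_rpow_le' {a b : ℝ≥0∞} {s P : ℝ} (hs : 0 ≤ s) (hP : s ≤ P) :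
    (a + b) ^ s ≤ 2 ^ P * (a ^ s + b ^ s) := by
  have h2 : ((2:ℝ≥0∞)) ^ s ≤ 2 ^ P := ENNReal.rpow_le_rpow_of_exponent_le (by norm_num) hP
  rcases le_total a b with h | h
  · calc (a + b) ^ s ≤ (2 * b) ^ s := by rw [two_mul]; gcongr
      _ = 2 ^ s * b ^ s := ENNReal.mul_rpow_of_nonneg _ _ hs
      _ ≤ _ := by gcongr; exact le_add_self
  · calc (a + b) ^ s ≤ (2 * a) ^ s := by rw [two_mul]; gcongr
      _ = 2 ^ s * a ^ s := ENNReal.mul_rpow_of_nonneg _ _ hs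
      _ ≤ _ := by gcongr; exact le_self_add

section half5
variable {d : X → X → ℝ} {μ : Measure X} {A₀ Cμ : ℝ} {x₀ : X}
variable {p : X → ℝ} {q pm pp Co : ℝ} {ν : Measure X} {α : X → ℝ → ℝ} {K c : ℝ}
variable {p' : X → ℝ} {q' pm' pp' Co' : ℝ} {ν' : Measure X} {α' : X → ℝ → ℝ} {K' c' : ℝ}

lemma ee_small (hX : IsSHT d μ A₀ Cμ) {z u : X} {r : ℝ} (hr : 0 < r) (hs : Small d A₀ x₀ z r)
    (hu : u ∈ ball d z r) : ee d x₀ u ≤ 3 * A₀ * ee d x₀ z := by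
  have h1 : d x₀ u < _ := small_sub hX hr hs hu
  have h2 := ee_ge (x₀ := x₀) hX z
  have h3 := ee_pos (x₀ := x₀) hX z
  have hA := hX.one_le_A₀
  have h4 : ee d x₀ u = Real.exp 1 + d x₀ u := by unfold ee; rw [hX.d_symm]
  rw [h4]
  nlinarith

theorem Half.small_thm (hX : IsSHT d μ A₀ Cμ) (H : Half d μ A₀ x₀ p' q' pm' pp' Co' ν α K c)
    (H2 : Half d μ A₀ x₀ p q pm pp Co ν' α' K' c') (R : ℝ≥0) :
    ∃ (N : ℝ) (C : ℝ≥0), 0 ≤ N ∧ ∀ g : X → ℝ≥0∞, Measurable g → ∫⁻ x, g x ^ p x ∂ν ≤ R →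
      ∃ Q : X → ℝ≥0∞, Measurable Q ∧ ∫⁻ x, Q x ∂ν ≤ C ∧
        ∀ z r, 0 < r → Small d A₀ x₀ z r → ∃ t : ℝ≥0∞,
          t = (ν (ball d z r))⁻¹ * ∫⁻ u in ball d z r, (g u + ENNReal.ofReal (ee d x₀ u ^ (-N))) ∂ν ∧
          (∀ y ∈ ball d z r, t ^ p y ≤ Q y) ∧
          ∀ x ∈ ball d z r, ∀ y ∈ ball d z r, t ^ (p x - 1) ≤ C * t ^ (p y - 1) := by
  obtain ⟨C', hν⟩ := H.isSHT hX
  obtain ⟨N, hN1, htail⟩ := H.tail hX one_pos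
  replace htail := htail N le_rfl
  obtain ⟨T1, N1, hT1, hN1', hlow⟩ := H.small_lower hX
  obtain ⟨Ks, hKs⟩ := strong_type hν H2.pm_gt
  have hA := hX.one_le_A₀
  have hpp := H2.pp_gt
  have hpm := H2.pm_gt
  have hpm0 : 0 < pm := by linarith
  set R2 : ℝ≥0 := (2:ℝ≥0) ^ pp * (R + 1) with hR2
  set T := T1 + Real.log (1 + R2) + N * Real.log (3 * A₀) with hT
  have hl1 : 0 ≤ Real.log (1 + R2) := Real.log_nonneg (by linarith [R2.coe_nonneg])
  have hl2 : 0 ≤ Real.log (3 * A₀) := Real.log_nonneg (by linarith)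
  have hT0 : 0 ≤ T := by positivity
  set N' := N1 + N with hN'
  have hN'0 : 0 ≤ N' := by linarith
  set E := Real.exp (pp * T + N' * Co)
  set E' := Real.exp (pp * T + N' * (2 * Co))
  set Cq : ℝ≥0 := (E * E').toNNReal ^ pm with hCq
  refine ⟨N, E.toNNReal + Cq * (Ks * R2), by linarith, fun g hg hgR => ?_⟩
  set g' : X → ℝ≥0∞ := fun u => g u + ENNReal.ofReal (ee d x₀ u ^ (-N)) with hg'
  have hme : Measurable fun y => ENNReal.ofReal (ee d x₀ y ^ (-N)) :=
    ((meas_ee hX).pow_const _).ennreal_ofReal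
  have hg'm : Measurable g' := hg.add hme
  have hmp := H2.p_meas
  have hp0 : ∀ u, 1 < p u := fun u => hpm.trans_le (H2.p_ge u)
  have hg'int : ∫⁻ u, g' u ^ p u ∂ν ≤ R2 := by
    calc ∫⁻ u, g' u ^ p u ∂ν ≤ ∫⁻ u, 2 ^ pp * (g u ^ p u + ENNReal.ofReal (ee d x₀ u ^ (-N))) ∂ν := by
          refine lintegral_mono fun u => ?_
          refine (add_rpow_le' (by linarith [hp0 u]) (H2.p_le u)).trans ?_
          gcongr
          have h1 : ENNReal.ofReal (ee d x₀ u ^ (-N)) ≤ 1 := by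
            rw [ENNReal.ofReal_le_one]
            exact Real.rpow_le_one_of_one_le_of_nonpos (ee_ge_one hX u) (by linarith)
          exact ENNReal.rpow_le_self_of_le_one h1 (hp0 u).le
      _ = 2 ^ pp * (∫⁻ u, g u ^ p u ∂ν + ∫⁻ u, ENNReal.ofReal (ee d x₀ u ^ (-N)) ∂ν) := by
          rw [lintegral_const_mul' _ _ (by finiteness), lintegral_add_right _ hme]
      _ ≤ 2 ^ pp * (R + ENNReal.ofReal 1) := by gcongr
      _ = R2 := by
          rw [hR2, ENNReal.ofReal_one]; push_cast
          rw [ENNReal.coe_rpow_of_nonneg _ (by linarith)]; simp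
  obtain ⟨Hh, hHm, hHle, hHint⟩ := hKs (fun u => g' u ^ (p u / pm)) (hg'm.pow (hmp.div_const _))
  have hpos : 0 < E * E' := by positivity
  refine ⟨fun y => Cq * Hh y ^ pm, (hHm.pow_const _).const_mul _, ?_, fun z r hr hs => ⟨_, rfl, ?_⟩⟩
  · rw [lintegral_const_mul' _ _ (by finiteness)]
    have : ∀ u, (g' u ^ (p u / pm)) ^ pm = g' u ^ p u := fun u => by
      rw [← ENNReal.rpow_mul, div_mul_cancel₀ _ hpm0.ne']
    simp only [this] at hHint
    calc (Cq:ℝ≥0∞) * ∫⁻ a, Hh a ^ pm ∂ν ≤ Cq * (Ks * R2) := by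
          gcongr; exact hHint.trans (by gcongr)
      _ ≤ _ := by push_cast; exact le_add_self
  · set B := ball d z r
    have hB : MeasurableSet B := hX.measurableSet_ball z r
    have hB0 : ν B ≠ 0 := (hν.ball_pos z r hr).ne'
    have hBt : ν B ≠ ⊤ := hν.ball_ne_top z r hr
    set t := (ν B)⁻¹ * ∫⁻ u in B, g' u ∂ν with ht
    set L := Real.log (SS d x₀ z r) with hL
    have hL1 : 1 ≤ L := log_SS_ge hX z hr
    have hL0 : 0 ≤ L := by linarith
    have heL : ∀ u ∈ B, Real.exp (-(T + N' * L)) ≤ ee d x₀ u ^ (-N) := by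
      intro u hu
      have h1 := ee_small hX hr hs hu
      have h2 := ee_le_SS (x₀ := x₀) hX z hr
      have h0 := ee_pos (x₀ := x₀) hX u
      rw [Real.rpow_def_of_pos h0]
      apply Real.exp_le_exp.2
      have h3 : Real.log (ee d x₀ u) ≤ Real.log (3 * A₀) + L := by
        rw [hL, ← Real.log_mul (by positivity) (SS_pos hX z hr).ne']
        apply Real.log_le_log h0
        exact h1.trans (by gcongr)
      have h4 : N * Real.log (ee d x₀ u) ≤ N * (Real.log (3 * A₀) + L) := by gcongr
      have h5 : 0 ≤ N1 * L := by positivity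
      rw [hT, hN']
      nlinarith
    have hlo : ENNReal.ofReal (Real.exp (-(T + N' * L))) ≤ t := by
      calc _ = (ν B)⁻¹ * ∫⁻ u in B, ENNReal.ofReal (Real.exp (-(T + N' * L))) ∂ν := by
            rw [setLIntegral_const, mul_left_comm, ENNReal.inv_mul_cancel hB0 hBt, mul_one]
        _ ≤ _ := by
            rw [ht]
            refine mul_le_mul_right (setLIntegral_mono' hB fun u hu => ?_) _
            exact (ENNReal.ofReal_le_ofReal (heL u hu)).trans le_add_self
    have hhi : t ≤ ENNReal.ofReal (Real.exp (T + N' * L)) := by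
      have h1 : ∫⁻ u in B, g' u ∂ν ≤ ν B + R2 := by
        calc _ ≤ ∫⁻ u in B, (1 + g' u ^ p u) ∂ν := by
              refine lintegral_mono fun u => ?_
              rcases le_total (g' u) 1 with h | h
              · exact h.trans le_self_add
              · exact (ENNReal.le_rpow_self_of_one_le h (hp0 u).le).trans le_add_self
          _ = ν B + ∫⁻ u in B, g' u ^ p u ∂ν := by
              rw [lintegral_add_left measurable_const, setLIntegral_const, one_mul]
          _ ≤ _ := by gcongr; exact (setLIntegral_le_lintegral _ _).trans hg'int
      have h2 : (ν B)⁻¹ ≤ ENNReal.ofReal (Real.exp (T1 + N1 * L)) := by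
        have := ENNReal.inv_le_inv.2 (hlow z r hr hs)
        rwa [Real.exp_neg, ENNReal.ofReal_inv_of_pos (Real.exp_pos _), inv_inv] at this
      have hE1 : 1 ≤ Real.exp (T1 + N1 * L) := Real.one_le_exp (by positivity)
      calc t ≤ (ν B)⁻¹ * (ν B + R2) := by rw [ht]; gcongr
        _ = 1 + (ν B)⁻¹ * R2 := by rw [mul_add, ENNReal.inv_mul_cancel hB0 hBt]
        _ ≤ 1 + ENNReal.ofReal (Real.exp (T1 + N1 * L)) * ENNReal.ofReal R2 := by
            rw [ENNReal.ofReal_coe_nnreal]; gcongr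
        _ = ENNReal.ofReal (1 + Real.exp (T1 + N1 * L) * R2) := by
            rw [ENNReal.ofReal_add zero_le_one (by positivity), ENNReal.ofReal_mul (by positivity),
              ENNReal.ofReal_one]
        _ ≤ _ := by
            apply ENNReal.ofReal_le_ofReal
            calc 1 + Real.exp (T1 + N1 * L) * R2 ≤ Real.exp (T1 + N1 * L) * (1 + R2) := by linarith
              _ = Real.exp (T1 + N1 * L + Real.log (1 + R2)) := by
                rw [Real.exp_add _ (Real.log _), Real.exp_log (by positivity)]
              _ ≤ _ := by
                apply Real.exp_le_exp.2
                rw [hT, hN']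
                have h3 : 0 ≤ N * L := by positivity
                have h4 : 0 ≤ N * Real.log (3 * A₀) := by positivity
                nlinarith
    constructor
    · intro y hy
      have hCo : 0 ≤ Co := (mul_nonneg (abs_nonneg _) hL0).trans (H2.osc z r hr hs y hy y hy)
      set q1 := max pm (p y - Co / L) with hq1
      have hhq1 : pm ≤ q1 := le_max_left _ _
      have hqy : q1 ≤ p y := max_le (H2.p_ge y) (sub_le_self _ (by positivity))
      have hqy2 : p y - q1 ≤ Co / L := by have := le_max_right pm (p y - Co / L); linarith
      have hqu : ∀ u ∈ B, q1 ≤ p u := by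
        intro u hu
        refine max_le (H2.p_ge u) ?_
        have h1 := H2.osc z r hr hs y hy u hu
        rw [← le_div_iff₀ (by linarith)] at h1
        have := le_abs_self (p y - p u)
        linarith
      have hdiv : ∀ a : ℝ, 0 ≤ a → a / pm ≤ a := fun a ha => div_le_self ha hpm.le
      have s1 : t ^ (p y / pm) ≤ ENNReal.ofReal E * t ^ (q1 / pm) := by
        have hab : |p y / pm - q1 / pm| ≤ p y - q1 := by
          rw [← _root_.sub_div, abs_of_nonneg (by apply div_nonneg <;> linarith)]
          exact hdiv _ (by linarith)
        refine pow_cmp_enn hlo hhi ?_ ?_ hT0 hN'0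
        · calc _ ≤ (Co / L) * L := by gcongr; exact hab.trans hqy2
            _ = Co := by field_simp
        · have := H2.p_le y; linarith
      have s2 : ∀ u ∈ B, g' u ^ (q1 / pm) ≤ ENNReal.ofReal E' * g' u ^ (p u / pm) := by
        intro u hu
        have hle : q1 / pm ≤ p u / pm := by gcongr; exact hqu u hu
        have hE'1 : 1 ≤ ENNReal.ofReal E' := by
          rw [ENNReal.one_le_ofReal]; exact Real.one_le_exp (by positivity)
        rcases le_total 1 (g' u) with h | h
        · calc _ ≤ g' u ^ (p u / pm) := ENNReal.rpow_le_rpow_of_exponent_le h hle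
            _ ≤ _ := le_mul_of_one_le_left zero_le hE'1
        · have hab : |q1 / pm - p u / pm| ≤ p u - q1 := by
            have := hqu u hu
            rw [abs_sub_comm, ← _root_.sub_div, abs_of_nonneg (by apply div_nonneg <;> linarith)]
            exact hdiv _ (by linarith)
          refine pow_cmp_enn (T := T) (N := N') (L := L) ?_ ?_ ?_ ?_ hT0 hN'0
          · exact (ENNReal.ofReal_le_ofReal (heL u hu)).trans le_add_self
          · refine h.trans ?_
            rw [ENNReal.one_le_ofReal]; exact Real.one_le_exp (by positivity)
          · have h1 := H2.osc z r hr hs u hu y hy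
            rw [← le_div_iff₀ (by linarith)] at h1
            have h2 := le_abs_self (p u - p y)
            calc _ ≤ (2 * (Co / L)) * L := by gcongr; linarith
              _ = 2 * Co := by field_simp
          · have := H2.p_le u; linarith
      have s3 : t ^ (p y / pm) ≤ ENNReal.ofReal (E * E') * Hh y := by
        calc _ ≤ _ := s1
          _ ≤ ENNReal.ofReal E * ((ν B)⁻¹ * ∫⁻ u in B, g' u ^ (q1 / pm) ∂ν) := by
              gcongr; exact jensen_avg hB0 hBt hg'm ((one_le_div hpm0).2 hhq1)
          _ ≤ ENNReal.ofReal E * ((ν B)⁻¹ * (ENNReal.ofReal E' * ∫⁻ u in B, g' u ^ (p u / pm) ∂ν)) := by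
              rw [← lintegral_const_mul' _ _ ENNReal.ofReal_ne_top]
              refine mul_le_mul_right (mul_le_mul_right (setLIntegral_mono' hB s2) _) _
          _ = ENNReal.ofReal (E * E') * ((ν B)⁻¹ * ∫⁻ u in B, g' u ^ (p u / pm) ∂ν) := by
              rw [ENNReal.ofReal_mul (by positivity)]; ring
          _ ≤ _ := by
              gcongr
              refine le_trans ?_ (hHle y)
              exact le_iSup_of_le z (le_iSup_of_le r (le_iSup_of_le ⟨hr, hy⟩ le_rfl))
      calc t ^ p y = (t ^ (p y / pm)) ^ pm := by rw [← ENNReal.rpow_mul, div_mul_cancel₀ _ hpm0.ne']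
        _ ≤ (ENNReal.ofReal (E * E') * Hh y) ^ pm := by gcongr
        _ = _ := by
          rw [ENNReal.mul_rpow_of_nonneg _ _ hpm0.le, hCq, ENNReal.coe_rpow_of_nonneg _ hpm0.le]
          rfl
    · intro x hx y hy
      have := pow_cmp_enn (a := p x - 1) (b := p y - 1) (C0 := Co) (P := pp) hlo hhi
        (by have := H2.osc z r hr hs x hx y hy; rwa [sub_sub_sub_cancel_right])
        (by have := H2.abs_pp x y; rwa [sub_sub_sub_cancel_right]) hT0 hN'0
      refine this.trans ?_
      gcongr
      push_cast
      exact le_self_add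
end half5

lemma real_cross {p p' pp a b m s w C1 C2 K : ℝ} (hp : 1 < p) (hpp : p ≤ pp) (hp' : p' = p / (p - 1))
    (ha : 0 < a) (hb : 0 < b) (hm : 0 < m) (hs : 0 ≤ s) (hw : 0 ≤ w)
    (hC1 : 1 ≤ C1) (hC2 : 1 ≤ C2) (hK : 1 ≤ K) (h1 : w ≤ C1 * a ^ p) (h2 : s ≤ C2 * b ^ p')
    (h3 : a * b ≤ K * m) : (s / m) ^ (p - 1) * w ≤ C1 * C2 ^ pp * K ^ pp * m := by
  have hp0 : 0 < p - 1 := by linarith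
  have e1 : s ^ (p - 1) ≤ C2 ^ pp * b ^ p := by
    calc s ^ (p - 1) ≤ (C2 * b ^ p') ^ (p - 1) := Real.rpow_le_rpow hs h2 hp0.le
      _ = C2 ^ (p - 1) * b ^ p := by
        rw [Real.mul_rpow (by linarith) (by positivity), ← Real.rpow_mul hb.le, hp',
          div_mul_cancel₀ _ hp0.ne']
      _ ≤ _ := by gcongr; linarith
  have e2 : a ^ p * b ^ p ≤ K ^ pp * m ^ p := by
    calc a ^ p * b ^ p = (a * b) ^ p := (Real.mul_rpow ha.le hb.le).symm
      _ ≤ (K * m) ^ p := Real.rpow_le_rpow (by positivity) h3 (by linarith)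
      _ = K ^ p * m ^ p := Real.mul_rpow (by linarith) hm.le
      _ ≤ _ := by gcongr
  have e3 : m ^ p = m * m ^ (p - 1) := by
    rw [← Real.rpow_one_add' hm.le (by linarith)]; congr 1; ring
  rw [Real.div_rpow hs hm.le, div_mul_eq_mul_div, div_le_iff₀ (by positivity)]
  calc s ^ (p - 1) * w ≤ (C2 ^ pp * b ^ p) * (C1 * a ^ p) := by gcongr
    _ = C1 * C2 ^ pp * (a ^ p * b ^ p) := by ring
    _ ≤ C1 * C2 ^ pp * (K ^ pp * m ^ p) := by gcongr
    _ = _ := by rw [e3]; ring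

lemma enn_cross {p p' pp a b C1 C2 K : ℝ} {m s w : ℝ≥0∞} (hp : 1 < p) (hpp : p ≤ pp)
    (hp' : p' = p / (p - 1))
    (ha : 0 < a) (hb : 0 < b) (hm : m ≠ 0) (hm' : m ≠ ⊤)
    (hC1 : 1 ≤ C1) (hC2 : 1 ≤ C2) (hK : 1 ≤ K) (h1 : w ≤ ENNReal.ofReal (C1 * a ^ p))
    (h2 : s ≤ ENNReal.ofReal (C2 * b ^ p'))
    (h3 : ENNReal.ofReal (a * b) ≤ ENNReal.ofReal K * m) :
    (m⁻¹ * s) ^ (p - 1) * w ≤ ENNReal.ofReal (C1 * C2 ^ pp * K ^ pp) * m := by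
  have hw : w ≠ ⊤ := ne_top_of_le_ne_top ENNReal.ofReal_ne_top h1
  have hs : s ≠ ⊤ := ne_top_of_le_ne_top ENNReal.ofReal_ne_top h2
  lift w to ℝ≥0 using hw
  lift s to ℝ≥0 using hs
  lift m to ℝ≥0 using hm'
  have hm0 : (0:ℝ) < m := by
    have : m ≠ 0 := by simpa using hm
    positivity
  have hap : 0 < a ^ p := by positivity
  have hbp : 0 < b ^ p' := by positivity
  have k1 : (w:ℝ) ≤ C1 * a ^ p := by
    have := ENNReal.toReal_mono ENNReal.ofReal_ne_top h1
    rwa [ENNReal.toReal_ofReal (by positivity)] at this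
  have k2 : (s:ℝ) ≤ C2 * b ^ p' := by
    have := ENNReal.toReal_mono ENNReal.ofReal_ne_top h2
    rwa [ENNReal.toReal_ofReal (by positivity)] at this
  have k3 : a * b ≤ K * m := by
    have := ENNReal.toReal_mono (by finiteness) h3
    rwa [ENNReal.toReal_ofReal (by positivity), ENNReal.toReal_mul, ENNReal.toReal_ofReal (by linarith)] at this
  have := real_cross hp hpp hp' ha hb hm0 s.coe_nonneg w.coe_nonneg hC1 hC2 hK k1 k2 k3
  have e := ENNReal.ofReal_le_ofReal this
  rw [ENNReal.ofReal_mul (by positivity), ENNReal.ofReal_mul (by positivity) (q := (m:ℝ)),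
    ← ENNReal.ofReal_rpow_of_nonneg (by positivity) (by linarith), ENNReal.ofReal_div_of_pos hm0,
    ENNReal.ofReal_coe_nnreal, ENNReal.ofReal_coe_nnreal, ENNReal.ofReal_coe_nnreal] at e
  rwa [mul_comm (m:ℝ≥0∞)⁻¹, ← div_eq_mul_inv]

section two
variable {d : X → X → ℝ} {μ : Measure X} {A₀ Cμ : ℝ} {x₀ : X}
variable {p : X → ℝ} {q pm pp Co : ℝ} {α : X → ℝ → ℝ} {K c : ℝ}
variable {p' : X → ℝ} {q' pm' pp' Co' : ℝ} {α' : X → ℝ → ℝ} {K' c' : ℝ}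
variable {W σ : X → ℝ≥0∞} {KA : ℝ}

lemma avg_dens (hσ : Measurable σ) {g : X → ℝ≥0∞} (hg : Measurable g) {B : Set X} (hB : MeasurableSet B) :
    ∫⁻ y in B, g y * σ y ∂μ = ∫⁻ y in B, g y ∂(μ.withDensity σ) := by
  rw [setLIntegral_withDensity_eq_setLIntegral_mul μ hσ hg hB]
  simp only [Pi.mul_apply, mul_comm]

lemma int_dens (hσ : Measurable σ) {g : X → ℝ≥0∞} (hg : Measurable g) :
    ∫⁻ y, g y ∂(μ.withDensity σ) = ∫⁻ y, g y * σ y ∂μ := by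
  rw [lintegral_withDensity_eq_lintegral_mul μ hσ hg]
  simp only [Pi.mul_apply, mul_comm]

/-- algebra: from averages -/
lemma combine {P P' : ℝ} (hP : 1 < P) (hP' : P' = P / (P - 1)) {A t τ M V S CC : ℝ≥0∞}
    (hV0 : V ≠ 0) (hVt : V ≠ ⊤) 
    (hA : A ≤ M⁻¹ * S * t) (hcross : (M⁻¹ * S) ^ (P - 1) * V ≤ CC * M)
    (hτ : M * t ^ (P - 1) ≤ V * τ) : A ^ P ≤ CC ^ P' * τ ^ P' := by
  have hP0 : 0 < P - 1 := by linarith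
  have hP'0 : 0 < P' := by rw [hP']; positivity
  have h1 : V * A ^ (P - 1) ≤ V * (CC * τ) := by
    calc V * A ^ (P - 1) ≤ V * (M⁻¹ * S * t) ^ (P - 1) := by gcongr
      _ = ((M⁻¹ * S) ^ (P - 1) * V) * t ^ (P - 1) := by
        rw [ENNReal.mul_rpow_of_nonneg _ _ hP0.le]; ring
      _ ≤ (CC * M) * t ^ (P - 1) := by gcongr
      _ = CC * (M * t ^ (P - 1)) := by ring
      _ ≤ CC * (V * τ) := by gcongr
      _ = _ := by ring
  have h2 := (ENNReal.mul_le_mul_iff_right hV0 hVt).1 h1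
  calc A ^ P = (A ^ (P - 1)) ^ P' := by
        rw [← ENNReal.rpow_mul, hP', mul_div_cancel₀ _ hP0.ne']
    _ ≤ (CC * τ) ^ P' := by gcongr
    _ = _ := ENNReal.mul_rpow_of_nonneg _ _ hP'0.le

theorem small_case (hX : IsSHT d μ A₀ Cμ)
    (H1 : Half d μ A₀ x₀ p q pm pp Co (μ.withDensity W) α K c)
    (H2 : Half d μ A₀ x₀ p' q' pm' pp' Co' (μ.withDensity σ) α' K' c')
    (hp' : ∀ x, p' x = p x / (p x - 1)) (hW : Measurable W) (hσ : Measurable σ)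
    (hW0 : ∀ x, W x ≠ 0) (hWt : ∀ x, W x ≠ ⊤) (hWσ : ∀ x, σ x = W x ^ (1 - p' x))
    (hKA : 1 ≤ KA) (hA : ∀ z r, 0 < r → ENNReal.ofReal (α z r * α' z r) ≤ ENNReal.ofReal KA * μ (ball d z r)) :
    ∃ C : ℝ≥0, ∀ g : X → ℝ≥0∞, Measurable g → ∫⁻ x, g x ^ p x ∂(μ.withDensity σ) ≤ 1 →
      ∃ Ψ : X → ℝ≥0∞, Measurable Ψ ∧ ∫⁻ x, Ψ x ∂(μ.withDensity W) ≤ C ∧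
        ∀ z r, 0 < r → Small d A₀ x₀ z r → ∀ x ∈ ball d z r,
          ((μ (ball d z r))⁻¹ * ∫⁻ y in ball d z r, g y * σ y ∂μ) ^ p x ≤ Ψ x := by
  obtain ⟨N1, C1, hN1, hS1⟩ := H2.small_thm hX H1 1
  obtain ⟨N2, C2, hN2, hS2⟩ := H1.small_thm hX H2 C1
  obtain ⟨D1, hD1, hs1⟩ := H1.small_cmp hX
  obtain ⟨D2, hD2, hs2⟩ := H2.small_cmp hX
  obtain ⟨_, hν1⟩ := H1.isSHT hX
  obtain ⟨_, hν2⟩ := H2.isSHT hX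
  set CC : ℝ≥0 := (D1 * D2 ^ pp * KA ^ pp).toNNReal * (C1 + 1) + 1 with hCC
  have hCC1 : 1 ≤ CC := le_add_self
  have hpp' := H2.pp_gt
  refine ⟨CC ^ pp' * C2, fun g hg hgi => ?_⟩
  obtain ⟨Q1, hQ1m, hQ1i, hQ1⟩ := hS1 g hg (by simpa using hgi)
  have hp1 : ∀ x, 1 < p x := fun x => H1.pm_gt.trans_le (H1.p_ge x)
  have hp1' : ∀ x, 1 < p' x := fun x => H2.pm_gt.trans_le (H2.p_ge x)
  set F : X → ℝ≥0∞ := fun y => Q1 y ^ (p' y)⁻¹ * (W y)⁻¹ with hF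
  have hFm : Measurable F := (hQ1m.pow H2.p_meas.inv).mul hW.inv
  have hFi : ∫⁻ y, F y ^ p' y ∂(μ.withDensity W) ≤ C1 := by
    rw [int_dens hW (hFm.pow H2.p_meas)]
    rw [int_dens hσ hQ1m] at hQ1i
    refine le_trans (lintegral_mono fun y => le_of_eq ?_) hQ1i
    have h0 : 0 < p' y := by linarith [hp1' y]
    rw [hF]; dsimp only
    rw [ENNReal.mul_rpow_of_nonneg _ _ h0.le, ← ENNReal.rpow_mul, inv_mul_cancel₀ h0.ne', ENNReal.rpow_one,
      mul_assoc, hWσ, ENNReal.inv_rpow, ← ENNReal.rpow_neg, sub_eq_neg_add,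
      ENNReal.rpow_add _ _ (hW0 y) (hWt y), ENNReal.rpow_one]
  obtain ⟨Q2, hQ2m, hQ2i, hQ2⟩ := hS2 F hFm hFi
  refine ⟨fun x => (CC ^ pp' : ℝ≥0) * Q2 x, hQ2m.const_mul _, ?_, fun z r hr hs x hx => ?_⟩
  · rw [lintegral_const_mul' _ _ (by finiteness)]
    push_cast
    gcongr
  · obtain ⟨t, ht, htQ, htt⟩ := hQ1 z r hr hs
    obtain ⟨τ, hτ, hτQ, _⟩ := hQ2 z r hr hs
    have hB := hX.measurableSet_ball z r
    have hM0 := (hX.ball_pos z r hr).ne'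
    have hMt := hX.ball_ne_top z r hr
    have hV0 := (hν1.ball_pos z r hr).ne'
    have hVt := hν1.ball_ne_top z r hr
    have hS0 := (hν2.ball_pos z r hr).ne'
    have hSt := hν2.ball_ne_top z r hr
    have hcr := enn_cross (hp1 x) (H1.p_le x) (hp' x) (H1.α_pos z r hr) (H2.α_pos z r hr) hM0 hMt hD1 hD2 hKA
      (hs1 z r hr hs x hx).1 (hs2 z r hr hs x hx).1 (hA z r hr)
    set B := ball d z r
    set M := μ B
    set V := μ.withDensity W B
    set S := μ.withDensity σ B
    have hAle : M⁻¹ * ∫⁻ y in B, g y * σ y ∂μ ≤ M⁻¹ * S * t := by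
      rw [avg_dens hσ hg hB, ht, mul_assoc, ← mul_assoc S, ENNReal.mul_inv_cancel hS0 hSt, one_mul]
      gcongr
      exact le_self_add
    have hF2 : M * t ^ (p x - 1) ≤ V * (C1 * τ) := by
      calc M * t ^ (p x - 1) = ∫⁻ y in B, t ^ (p x - 1) ∂μ := by rw [setLIntegral_const, mul_comm]
        _ ≤ ∫⁻ y in B, C1 * (F y * W y) ∂μ := by
          refine setLIntegral_mono' hB fun y hy => (htt x hx y hy).trans ?_
          gcongr
          rw [hF]; dsimp only
          rw [mul_assoc, ENNReal.inv_mul_cancel (hW0 y) (hWt y), mul_one]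
          calc t ^ (p y - 1) = (t ^ p y) ^ (p' y)⁻¹ := by
                rw [← ENNReal.rpow_mul, hp', inv_div, mul_div_cancel₀ _ (by linarith [hp1 y])]
            _ ≤ _ := by gcongr; exact inv_nonneg.2 (by linarith [hp1' y]); exact htQ y hy
        _ = C1 * ∫⁻ y in B, F y ∂(μ.withDensity W) := by
          rw [lintegral_const_mul' _ _ (by finiteness), avg_dens hW hFm hB]
        _ ≤ C1 * (V * τ) := by
          gcongr
          rw [hτ, ← mul_assoc, ENNReal.mul_inv_cancel hV0 hVt, one_mul]
          gcongr
          exact le_self_add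
        _ = _ := by ring
    have hfin := combine (hp1 x) (hp' x) hV0 hVt hAle hcr hF2
    calc _ ≤ _ := hfin
      _ = (ENNReal.ofReal (D1 * D2 ^ pp * KA ^ pp) * C1) ^ p' x * τ ^ p' x := by
        rw [← ENNReal.mul_rpow_of_nonneg _ _ (by linarith [hp1' x]),
          ← ENNReal.mul_rpow_of_nonneg _ _ (by linarith [hp1' x]), mul_assoc (ENNReal.ofReal _)]
      _ ≤ (CC : ℝ≥0∞) ^ p' x * τ ^ p' x := by
        gcongr
        · linarith [hp1' x]
        · rw [hCC]; push_cast
          refine le_trans ?_ le_self_add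
          gcongr
          · exact le_rfl
          · exact le_self_add
      _ ≤ (CC : ℝ≥0∞) ^ pp' * Q2 x := by
        gcongr
        · exact_mod_cast hCC1
        · exact H2.p_le x
        · exact hτQ x hx
      _ = _ := by rw [ENNReal.coe_rpow_of_nonneg _ (by linarith)]

end two

lemma pow_inf_enn {p q e C0 P T M : ℝ} {t : ℝ≥0∞} (htT : t ≤ ENNReal.ofReal T) (hT : 1 ≤ T) (he : 1 ≤ e)
    (hosc : |p - q| * Real.log e ≤ C0) (hP : |p - q| ≤ P) (hM : 0 ≤ M) (hp : 1 ≤ p) (hq : 0 < q) :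
    t ^ p ≤ ENNReal.ofReal (Real.exp (P * Real.log T + M * C0)) * t ^ q + ENNReal.ofReal (e ^ (-M)) := by
  have ht : t ≠ ⊤ := ne_top_of_le_ne_top ENNReal.ofReal_ne_top htT
  lift t to ℝ≥0 using ht
  have h2 : (t:ℝ) ≤ T := by
    have := ENNReal.toReal_mono ENNReal.ofReal_ne_top htT
    rwa [ENNReal.toReal_ofReal (by positivity)] at this
  have h4 := ENNReal.ofReal_le_ofReal (pow_inf_cmp t.coe_nonneg h2 hT he hosc hP hM hp hq)
  have he0 : 0 ≤ e ^ (-M) := by positivity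
  rw [ENNReal.ofReal_add (by positivity) he0, ENNReal.ofReal_mul (by positivity),
    ← ENNReal.ofReal_rpow_of_nonneg t.coe_nonneg (by linarith),
    ← ENNReal.ofReal_rpow_of_nonneg t.coe_nonneg (by linarith), ENNReal.ofReal_coe_nnreal] at h4
  exact h4

section two
variable {d : X → X → ℝ} {μ : Measure X} {A₀ Cμ : ℝ} {x₀ : X}
variable {p : X → ℝ} {q pm pp Co : ℝ} {α : X → ℝ → ℝ} {K c : ℝ}
variable {p' : X → ℝ} {q' pm' pp' Co' : ℝ} {α' : X → ℝ → ℝ} {K' c' : ℝ}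
variable {W σ : X → ℝ≥0∞} {KA : ℝ}

lemma good_set (hX : IsSHT d μ A₀ Cμ)
    (H2 : Half d μ A₀ x₀ p' q' pm' pp' Co' (μ.withDensity σ) α' K' c')
    (hW : Measurable W) (hσ : Measurable σ)
    (hW0 : ∀ x, W x ≠ 0) (hWt : ∀ x, W x ≠ ⊤) (hWσ : ∀ x, σ x = W x ^ (1 - p' x)) :
    ∃ N₀ : ℝ, 0 ≤ N₀ ∧ ∀ N, N₀ ≤ N → ∀ R, 1 ≤ R →
      μ (ball d x₀ R) ≤ 2 * μ (ball d x₀ R ∩ {y | ENNReal.ofReal (ee d x₀ y ^ (-N)) ≤ W y}) := by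
  have hB0 := (hX.ball_pos x₀ 1 one_pos).ne'
  have hBt := hX.ball_ne_top x₀ 1 one_pos
  have hη : 0 < (μ (ball d x₀ 1)).toReal / 2 := half_pos (ENNReal.toReal_pos hB0 hBt)
  obtain ⟨N₀, hN₀, ht⟩ := H2.tail hX hη
  have hδ : 0 < pm' - 1 := by linarith [H2.pm_gt]
  refine ⟨N₀ / (pm' - 1), by positivity, fun N hN R hR => ?_⟩
  have hN0 : 0 ≤ N := le_trans (by positivity) hN
  rw [div_le_iff₀ hδ] at hN
  replace ht := ht _ hN
  set G := {y | ENNReal.ofReal (ee d x₀ y ^ (-N)) ≤ W y} with hG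
  have hme : ∀ N : ℝ, Measurable fun y => ENNReal.ofReal (ee d x₀ y ^ (-N)) := fun N =>
    ((meas_ee hX).pow_const _).ennreal_ofReal
  have hGm : MeasurableSet G := measurableSet_le (hme N) hW
  set B := ball d x₀ R
  have h1 : μ Gᶜ ≤ μ B / 2 := by
    calc μ Gᶜ = ∫⁻ y in Gᶜ, 1 ∂μ := by rw [setLIntegral_const, one_mul]
      _ ≤ ∫⁻ y in Gᶜ, ENNReal.ofReal (ee d x₀ y ^ (-(N * (pm' - 1)))) * σ y ∂μ := by
        refine setLIntegral_mono' hGm.compl fun y hy => ?_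
        have hy' : W y < ENNReal.ofReal (ee d x₀ y ^ (-N)) := not_le.1 hy
        have hp1 : pm' ≤ p' y := H2.p_ge y
        have he := ee_ge_one (x₀ := x₀) hX y
        have he0 := ee_pos (x₀ := x₀) hX y
        have hu0 : W y ^ (p' y - 1) ≠ 0 := by
          simp [ENNReal.rpow_eq_zero_iff, hW0 y, hWt y]
        have hut : W y ^ (p' y - 1) ≠ ⊤ := by
          simp [ENNReal.rpow_eq_top_iff, hW0 y, hWt y]
        rw [hWσ, show 1 - p' y = -(p' y - 1) by ring, ENNReal.rpow_neg]
        calc 1 = W y ^ (p' y - 1) * (W y ^ (p' y - 1))⁻¹ := (ENNReal.mul_inv_cancel hu0 hut).symm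
          _ ≤ _ := by
            gcongr
            calc W y ^ (p' y - 1) ≤ ENNReal.ofReal (ee d x₀ y ^ (-N)) ^ (p' y - 1) := by
                  gcongr; linarith
              _ = ENNReal.ofReal (ee d x₀ y ^ (-(N * (p' y - 1)))) := by
                  rw [ENNReal.ofReal_rpow_of_nonneg (by positivity) (by linarith), ← Real.rpow_mul he0.le,
                    neg_mul]
              _ ≤ _ := by
                  apply ENNReal.ofReal_le_ofReal
                  apply Real.rpow_le_rpow_of_exponent_le he
                  nlinarith
      _ ≤ ∫⁻ y, ENNReal.ofReal (ee d x₀ y ^ (-(N * (pm' - 1)))) * σ y ∂μ := setLIntegral_le_lintegral _ _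
      _ ≤ ENNReal.ofReal ((μ (ball d x₀ 1)).toReal / 2) := by
        rw [← int_dens hσ (hme _)]; exact ht
      _ = μ (ball d x₀ 1) / 2 := by
        rw [ENNReal.ofReal_div_of_pos (by norm_num), ENNReal.ofReal_toReal hBt, ENNReal.ofReal_ofNat]
      _ ≤ _ := by gcongr; exact ball_mono d x₀ hR
  have hBt' : μ B ≠ ⊤ := hX.ball_ne_top x₀ R (by linarith)
  have h2 : μ B / 2 + μ B / 2 ≤ μ (B ∩ G) + μ B / 2 := by
    rw [ENNReal.add_halves]
    calc μ B = μ (B ∩ G) + μ (B \ G) := (measure_inter_add_diff B hGm).symm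
      _ ≤ _ := by gcongr; exact (measure_mono fun y hy => hy.2).trans h1
  have h3 := (ENNReal.add_le_add_iff_right (by finiteness)).1 h2
  calc μ B = 2 * (μ B / 2) := by rw [ENNReal.mul_div_cancel (by norm_num) (by norm_num)]
    _ ≤ _ := by gcongr

theorem large_x0 (hX : IsSHT d μ A₀ Cμ)
    (H1 : Half d μ A₀ x₀ p q pm pp Co (μ.withDensity W) α K c)
    (H2 : Half d μ A₀ x₀ p' q' pm' pp' Co' (μ.withDensity σ) α' K' c')
    (hq' : q' = q / (q - 1)) (hW : Measurable W) (hσ : Measurable σ)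
    (hW0 : ∀ x, W x ≠ 0) (hWt : ∀ x, W x ≠ ⊤) (hWσ : ∀ x, σ x = W x ^ (1 - p' x))
    (hKA : 1 ≤ KA) (hA : ∀ z r, 0 < r → ENNReal.ofReal (α z r * α' z r) ≤ ENNReal.ofReal KA * μ (ball d z r)) :
    ∃ C : ℝ≥0∞, C ≠ ⊤ ∧ ∀ g : X → ℝ≥0∞, Measurable g → ∫⁻ x, g x ^ p x ∂(μ.withDensity σ) ≤ 1 →
      ∃ Ψ : X → ℝ≥0∞, Measurable Ψ ∧ ∫⁻ x, Ψ x ∂(μ.withDensity W) ≤ C ∧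
        ∀ R, 1 ≤ R → ∀ x ∈ ball d x₀ R,
          ((μ (ball d x₀ R))⁻¹ * ∫⁻ y in ball d x₀ R, g y * σ y ∂μ) ^ p x ≤ Ψ x := by
  have hq1 : 1 < q := H1.pm_gt.trans_le H1.q_ge
  have hq1' : 1 < q' := H2.pm_gt.trans_le H2.q_ge
  have hq0 : 0 < q := by linarith
  have hq0' : 0 < q' := by linarith
  have hp1 : ∀ x, 1 < p x := fun x => H1.pm_gt.trans_le (H1.p_ge x)
  obtain ⟨D1, hD1, hl1⟩ := H1.large_cmp hX (H1.α_pos x₀ 1 one_pos)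
  obtain ⟨D2, hD2, hl2⟩ := H2.large_cmp hX (H2.α_pos x₀ 1 one_pos)
  obtain ⟨_, hν1⟩ := H1.isSHT hX
  obtain ⟨_, hν2⟩ := H2.isSHT hX
  obtain ⟨Ks2, hKs2⟩ := strong_type hν2 hq1
  obtain ⟨Ks1, hKs1⟩ := strong_type hν1 hq1'
  obtain ⟨M2, hM2, ht2⟩ := H2.tail hX one_pos
  replace ht2 := ht2 M2 le_rfl
  obtain ⟨M1, hM1, ht1'⟩ := H1.tail hX one_pos
  have ht1 := ht1' M1 le_rfl
  obtain ⟨N0, hN0, hgood⟩ := good_set hX H2 hW hσ hW0 hWt hWσ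
  set N := max N0 M1 with hNdef
  have hN : 0 ≤ N := hN0.trans (le_max_left _ _)
  have htN := ht1' N (le_max_right _ _)
  replace hgood := hgood N (le_max_left _ _)
  set G := {y | ENNReal.ofReal (ee d x₀ y ^ (-N)) ≤ W y} with hG
  have hme : ∀ N : ℝ, Measurable fun y => ENNReal.ofReal (ee d x₀ y ^ (-N)) := fun N =>
    ((meas_ee hX).pow_const _).ennreal_ofReal
  have hGm : MeasurableSet G := measurableSet_le (hme N) hW
  set B1 := ball d x₀ 1 with hB1
  have hB1m : MeasurableSet B1 := hX.measurableSet_ball x₀ 1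
  set ν1 := μ.withDensity W with hν1d
  set ν2 := μ.withDensity σ with hν2d
  have hs0 : ν2 B1 ≠ 0 := (hν2.ball_pos x₀ 1 one_pos).ne'
  have hst : ν2 B1 ≠ ⊤ := hν2.ball_ne_top x₀ 1 one_pos
  have hv0 : ν1 B1 ≠ 0 := (hν1.ball_pos x₀ 1 one_pos).ne'
  have hvt : ν1 B1 ≠ ⊤ := hν1.ball_ne_top x₀ 1 one_pos
  set c0 := (ν2 B1)⁻¹ with hc0
  have hc0t : c0 ≠ ⊤ := ENNReal.inv_ne_top.2 hs0
  set E1 := ENNReal.ofReal (Real.exp (pp * Real.log 1 + M2 * Co)) with hE1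
  set G1 := 2 ^ q * (E1 + 1 + c0 ^ q * ν2 B1) with hG1
  set E2 := ENNReal.ofReal (Real.exp (pp' * 0 + N * Co')) with hE2
  set G2 := E2 * (Ks2 * G1) + (1 + c0) ^ q with hG2
  set CC := ENNReal.ofReal (D1 * D2 ^ pp * KA ^ pp) with hCC
  set D := CC ^ q' * 2 ^ q' with hD
  set G3 := (ν1 B1)⁻¹ * (D * (Ks1 * G2)) with hG3
  have hDt : D ≠ ⊤ := ENNReal.mul_ne_top (ENNReal.rpow_ne_top_of_nonneg hq0'.le ENNReal.ofReal_ne_top)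
    (ENNReal.rpow_ne_top_of_nonneg hq0'.le (by norm_num))
  have hc0q : c0 ^ q ≠ ⊤ := ENNReal.rpow_ne_top_of_nonneg hq0.le hc0t
  have hG1t : G1 ≠ ⊤ := by
    refine ENNReal.mul_ne_top (ENNReal.rpow_ne_top_of_nonneg hq0.le (by norm_num)) ?_
    exact ENNReal.add_ne_top.2 ⟨ENNReal.add_ne_top.2 ⟨ENNReal.ofReal_ne_top, by norm_num⟩,
      ENNReal.mul_ne_top hc0q hst⟩
  have h1c0 : (1 + c0) ^ q ≠ ⊤ := ENNReal.rpow_ne_top_of_nonneg hq0.le (ENNReal.add_ne_top.2 ⟨by norm_num, hc0t⟩)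
  have hG2t : G2 ≠ ⊤ := ENNReal.add_ne_top.2 ⟨ENNReal.mul_ne_top ENNReal.ofReal_ne_top
    (ENNReal.mul_ne_top ENNReal.coe_ne_top hG1t), h1c0⟩
  have hDG2t : D * (Ks1 * G2) ≠ ⊤ := ENNReal.mul_ne_top hDt (ENNReal.mul_ne_top ENNReal.coe_ne_top hG2t)
  have hG3t : G3 ≠ ⊤ := ENNReal.mul_ne_top (ENNReal.inv_ne_top.2 hv0) hDG2t
  have hG3qt : G3 ^ q⁻¹ ≠ ⊤ := ENNReal.rpow_ne_top_of_nonneg (by positivity) hG3t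
  set T := max 1 (G3 ^ q⁻¹).toReal with hT
  have hT1 : 1 ≤ T := le_max_left _ _
  set E4 := ENNReal.ofReal (Real.exp (pp * Real.log T + M1 * Co)) with hE4
  refine ⟨E4 * (D * (Ks1 * G2)) + 1, ENNReal.add_ne_top.2 ⟨ENNReal.mul_ne_top ENNReal.ofReal_ne_top hDG2t,
    by norm_num⟩, fun g hg hgi => ?_⟩
  -- the modified g
  set g' : X → ℝ≥0∞ := fun u => min (g u) 1 + B1.indicator (fun _ => c0) u with hg'
  have hg'm : Measurable g' := (hg.min measurable_const).add (measurable_const.indicator hB1m)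
  have hg'1 : ∀ u, g' u ≤ 1 + c0 := fun u => by
    rw [hg']; dsimp only
    gcongr
    · exact min_le_right _ _
    · exact Set.indicator_le_self _ _ _
  have hg'i : ∫⁻ u, g' u ^ q ∂ν2 ≤ G1 := by
    have hi : Measurable fun u => B1.indicator (fun _ => c0 ^ q) u := measurable_const.indicator hB1m
    calc ∫⁻ u, g' u ^ q ∂ν2 ≤ ∫⁻ u, 2 ^ q * ((E1 * g u ^ p u + ENNReal.ofReal (ee d x₀ u ^ (-M2)))
            + B1.indicator (fun _ => c0 ^ q) u) ∂ν2 := by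
          refine lintegral_mono fun u => (add_rpow_le' hq0.le le_rfl).trans ?_
          gcongr
          · have h1 : (min (g u) 1) ≤ ENNReal.ofReal 1 := by rw [ENNReal.ofReal_one]; exact min_le_right _ _
            have h2 := pow_inf_enn (p := q) (q := p u) (C0 := Co) (P := pp) h1 le_rfl (ee_ge_one (x₀ := x₀) hX u)
              (by rw [abs_sub_comm]; exact H1.osc_inf u) (by rw [abs_sub_comm]; exact H1.abs_pq u)
              (by linarith : 0 ≤ M2) hq1.le (by linarith [hp1 u])
            refine h2.trans ?_
            gcongr
            · linarith [hp1 u]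
            · exact min_le_left _ _
          · by_cases hu : u ∈ B1
            · simp [hu]
            · simp [hu, hq0]
      _ = 2 ^ q * ((E1 * ∫⁻ u, g u ^ p u ∂ν2 + ∫⁻ u, ENNReal.ofReal (ee d x₀ u ^ (-M2)) ∂ν2)
            + c0 ^ q * ν2 B1) := by
          rw [lintegral_const_mul' _ _ (by finiteness), lintegral_add_right _ hi, lintegral_add_right _ (hme _),
            lintegral_const_mul' _ _ ENNReal.ofReal_ne_top, lintegral_indicator_const hB1m]
      _ ≤ 2 ^ q * ((E1 * 1 + ENNReal.ofReal 1) + c0 ^ q * ν2 B1) := by gcongr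
      _ = G1 := by rw [hG1, mul_one, ENNReal.ofReal_one]
  obtain ⟨Hh, hHm, hHle, hHi⟩ := hKs2 g' hg'm
  set Q1 : X → ℝ≥0∞ := fun y => min (Hh y ^ q) ((1 + c0) ^ q) with hQ1
  have hQ1m : Measurable Q1 := (hHm.pow_const _).min measurable_const
  set F : X → ℝ≥0∞ := G.indicator fun y => Q1 y ^ q'⁻¹ * (W y)⁻¹ with hF
  have hFm : Measurable F := ((hQ1m.pow_const _).mul hW.inv).indicator hGm
  have hFi : ∫⁻ y, F y ^ q' ∂ν1 ≤ G2 := by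
    have key : ∀ y ∈ G, ((W y)⁻¹) ^ q' * W y ≤ E2 * σ y + ENNReal.ofReal (ee d x₀ y ^ (-N)) * W y := by
      intro y hy
      have hy' : ENNReal.ofReal (ee d x₀ y ^ (-N)) ≤ W y := hy
      have he0 := ee_pos (x₀ := x₀) hX y
      have he1 := ee_ge_one (x₀ := x₀) hX y
      have hex : ∀ s : ℝ, ee d x₀ y ^ s = Real.exp (s * Real.log (ee d x₀ y)) := fun s => by
        rw [Real.rpow_def_of_pos he0, mul_comm]
      rcases le_total (W y) (ENNReal.ofReal (ee d x₀ y ^ N)) with h | h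
      · refine le_trans ?_ le_self_add
        rw [hex] at h hy'
        have h1 := pow_cmp_enn (a := 1 - q') (b := 1 - p' y) (T := 0) (N := N) (L := Real.log (ee d x₀ y))
          (t := W y) (C0 := Co') (P := pp') (by rw [zero_add, ← neg_mul]; exact hy') (by rw [zero_add]; exact h)
          (by rw [_root_.sub_sub_sub_cancel_left]; exact H2.osc_inf y)
          (by rw [_root_.sub_sub_sub_cancel_left]; exact H2.abs_pq y) le_rfl hN
        rw [hWσ]
        refine le_trans (le_of_eq ?_) h1
        rw [ENNReal.inv_rpow, ← ENNReal.rpow_neg, sub_eq_neg_add,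
          ENNReal.rpow_add _ _ (hW0 y) (hWt y), ENNReal.rpow_one]
      · refine le_trans ?_ le_add_self
        gcongr
        have h2 : (W y)⁻¹ ≤ ENNReal.ofReal (ee d x₀ y ^ (-N)) := by
          rw [Real.rpow_neg he0.le, ENNReal.ofReal_inv_of_pos (by positivity)]
          exact ENNReal.inv_le_inv.2 h
        have h3 : ENNReal.ofReal (ee d x₀ y ^ (-N)) ≤ 1 := by
          rw [ENNReal.ofReal_le_one]
          exact Real.rpow_le_one_of_one_le_of_nonpos he1 (by linarith)
        exact (ENNReal.rpow_le_self_of_le_one (h2.trans h3) hq1'.le).trans h2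
    have hpt : ∀ y, F y ^ q' * W y ≤ E2 * (Hh y ^ q * σ y) +
        (1 + c0) ^ q * (ENNReal.ofReal (ee d x₀ y ^ (-N)) * W y) := by
      intro y
      by_cases hy : y ∈ G
      · rw [hF, Set.indicator_of_mem hy, ENNReal.mul_rpow_of_nonneg _ _ hq0'.le, ← ENNReal.rpow_mul,
          inv_mul_cancel₀ hq0'.ne', ENNReal.rpow_one, mul_assoc]
        calc _ ≤ Q1 y * (E2 * σ y + ENNReal.ofReal (ee d x₀ y ^ (-N)) * W y) := by gcongr; exact key y hy
          _ = Q1 y * (E2 * σ y) + Q1 y * (ENNReal.ofReal (ee d x₀ y ^ (-N)) * W y) := mul_add _ _ _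
          _ ≤ Hh y ^ q * (E2 * σ y) + (1 + c0) ^ q * (ENNReal.ofReal (ee d x₀ y ^ (-N)) * W y) := by
            gcongr
            · exact min_le_left _ _
            · exact min_le_right _ _
          _ = _ := by ring
      · rw [hF, Set.indicator_of_notMem hy, ENNReal.zero_rpow_of_pos hq0', zero_mul]; exact zero_le
    calc ∫⁻ y, F y ^ q' ∂ν1 = ∫⁻ y, F y ^ q' * W y ∂μ := int_dens hW (hFm.pow_const _)
      _ ≤ ∫⁻ y, (E2 * (Hh y ^ q * σ y) +
        (1 + c0) ^ q * (ENNReal.ofReal (ee d x₀ y ^ (-N)) * W y)) ∂μ := lintegral_mono hpt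
      _ = E2 * ∫⁻ y, Hh y ^ q ∂ν2 + (1 + c0) ^ q * ∫⁻ y, ENNReal.ofReal (ee d x₀ y ^ (-N)) ∂ν1 := by
        have hm3 : Measurable fun y => (1 + c0) ^ q * (ENNReal.ofReal (ee d x₀ y ^ (-N)) * W y) :=
          ((hme N).mul hW).const_mul _
        rw [lintegral_add_right _ hm3, lintegral_const_mul' _ _ ENNReal.ofReal_ne_top,
          lintegral_const_mul' _ _ h1c0, ← int_dens hσ (hHm.pow_const _), ← int_dens hW (hme N)]
      _ ≤ E2 * (Ks2 * G1) + (1 + c0) ^ q * ENNReal.ofReal 1 := by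
        gcongr
        exact hHi.trans (by gcongr)
      _ = G2 := by rw [ENNReal.ofReal_one, mul_one]
  obtain ⟨H2f, hH2m, hH2le, hH2i⟩ := hKs1 F hFm
  have hH2i' : ∫⁻ x, D * H2f x ^ q' ∂ν1 ≤ D * (Ks1 * G2) := by
    rw [lintegral_const_mul' _ _ hDt]
    gcongr
    exact hH2i.trans (by gcongr)
  -- main estimate
  have main : ∀ R, 1 ≤ R → ∀ x ∈ ball d x₀ R,
      ((μ (ball d x₀ R))⁻¹ * ∫⁻ y in ball d x₀ R, g y * σ y ∂μ) ^ q ≤ D * H2f x ^ q' := by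
    intro R hR x hx
    have hR0 : 0 < R := by linarith
    have hB := hX.measurableSet_ball x₀ R
    have hM0 := (hX.ball_pos x₀ R hR0).ne'
    have hMt := hX.ball_ne_top x₀ R hR0
    have hV0 := (hν1.ball_pos x₀ R hR0).ne'
    have hVt := hν1.ball_ne_top x₀ R hR0
    have hS0 := (hν2.ball_pos x₀ R hR0).ne'
    have hSt := hν2.ball_ne_top x₀ R hR0
    have hBB : B1 ⊆ ball d x₀ R := ball_mono d x₀ hR
    have hcr := enn_cross hq1 H1.q_le hq' (H1.α_pos x₀ R hR0) (H2.α_pos x₀ R hR0) hM0 hMt hD1 hD2 hKA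
      (hl1 x₀ R hR0 (H1.mono _ _ _ _ one_pos hR0 hBB)).1 (hl2 x₀ R hR0 (H2.mono _ _ _ _ one_pos hR0 hBB)).1
      (hA x₀ R hR0)
    have hgoodR := hgood R hR
    set t := (ν2 (ball d x₀ R))⁻¹ * ∫⁻ y in ball d x₀ R, g' y ∂ν2 with ht
    have htH : ∀ y ∈ ball d x₀ R, t ≤ Hh y := fun y hy =>
      le_trans (by unfold maximal; exact le_iSup_of_le x₀ (le_iSup_of_le R (le_iSup_of_le ⟨hR0, hy⟩ le_rfl))) (hHle y)
    set B := ball d x₀ R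
    set M := μ B
    set V := ν1 B
    set S := ν2 B
    have ht1 : t ≤ 1 + c0 := by
      calc t ≤ S⁻¹ * ∫⁻ y in B, (1 + c0) ∂ν2 := by rw [ht]; gcongr with y; exact hg'1 y
        _ = 1 + c0 := by
          rw [setLIntegral_const, mul_left_comm, ENNReal.inv_mul_cancel hS0 hSt, mul_one]
    have htQ : ∀ y ∈ B, t ^ (q - 1) ≤ Q1 y ^ q'⁻¹ := fun y hy => by
      calc t ^ (q - 1) = (t ^ q) ^ q'⁻¹ := by
            rw [← ENNReal.rpow_mul, hq', inv_div, mul_div_cancel₀ _ (by linarith)]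
        _ ≤ _ := by
          gcongr
          exact le_min (ENNReal.rpow_le_rpow (htH y hy) hq0.le) (ENNReal.rpow_le_rpow ht1 hq0.le)
    have hgB : ∫⁻ y in B, g y ∂ν2 ≤ ∫⁻ y in B, g' y ∂ν2 := by
      calc ∫⁻ y in B, g y ∂ν2 ≤ ∫⁻ y in B, (min (g y) 1 + g y ^ p y) ∂ν2 := by
            refine lintegral_mono fun y => ?_
            rcases le_total (g y) 1 with h | h
            · rw [min_eq_left h]; exact le_self_add
            · exact (ENNReal.le_rpow_self_of_one_le h (hp1 y).le).trans le_add_self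
        _ = ∫⁻ y in B, min (g y) 1 ∂ν2 + ∫⁻ y in B, g y ^ p y ∂ν2 := lintegral_add_left (hg.min measurable_const) _
        _ ≤ ∫⁻ y in B, min (g y) 1 ∂ν2 + 1 := by
            gcongr; exact (setLIntegral_le_lintegral _ _).trans hgi
        _ = ∫⁻ y in B, min (g y) 1 ∂ν2 + ∫⁻ y in B, B1.indicator (fun _ => c0) y ∂ν2 := by
            rw [lintegral_indicator_const hB1m, Measure.restrict_apply hB1m, Set.inter_eq_left.2 hBB, hc0,
              ENNReal.inv_mul_cancel hs0 hst]
        _ = _ := (lintegral_add_left (hg.min measurable_const) _).symm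
    have hAle : M⁻¹ * ∫⁻ y in B, g y * σ y ∂μ ≤ M⁻¹ * S * t := by
      rw [avg_dens hσ hg hB, ht, mul_assoc, ← mul_assoc S, ENNReal.mul_inv_cancel hS0 hSt, one_mul]
      gcongr
    have hF2 : M * t ^ (q - 1) ≤ V * (2 * (V⁻¹ * ∫⁻ y in B, F y ∂ν1)) := by
      calc M * t ^ (q - 1) ≤ 2 * μ (B ∩ G) * t ^ (q - 1) := by gcongr
        _ = 2 * ∫⁻ y in B ∩ G, t ^ (q - 1) ∂μ := by rw [setLIntegral_const]; ring
        _ ≤ 2 * ∫⁻ y in B ∩ G, F y * W y ∂μ := by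
          refine mul_le_mul_right (setLIntegral_mono' (hB.inter hGm) fun y hy => (htQ y hy.1).trans (le_of_eq ?_)) _
          rw [hF, Set.indicator_of_mem hy.2, mul_assoc, ENNReal.inv_mul_cancel (hW0 y) (hWt y), mul_one]
        _ ≤ 2 * ∫⁻ y in B, F y * W y ∂μ := by
          gcongr; exact Set.inter_subset_left
        _ = 2 * (V * V⁻¹ * ∫⁻ y in B, F y ∂ν1) := by
          rw [avg_dens hW hFm hB, ENNReal.mul_inv_cancel hV0 hVt, one_mul]
        _ = _ := by ring
    have hfin := combine hq1 hq' hV0 hVt hAle hcr hF2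
    calc _ ≤ _ := hfin
      _ ≤ CC ^ q' * (2 * H2f x) ^ q' := by
        gcongr
        exact le_trans (by unfold maximal; exact le_iSup_of_le x₀ (le_iSup_of_le R (le_iSup_of_le ⟨hR0, hx⟩ le_rfl))) (hH2le x)
      _ = _ := by rw [ENNReal.mul_rpow_of_nonneg _ _ hq0'.le, hD, mul_assoc]
  refine ⟨fun x => E4 * (D * H2f x ^ q') + ENNReal.ofReal (ee d x₀ x ^ (-M1)),
    (((hH2m.pow_const _).const_mul _).const_mul _).add (hme _), ?_, fun R hR x hx => ?_⟩
  · rw [lintegral_add_right _ (hme _), lintegral_const_mul' _ _ ENNReal.ofReal_ne_top]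
    gcongr
    rwa [ENNReal.ofReal_one] at ht1
  · set A := (μ (ball d x₀ R))⁻¹ * ∫⁻ y in ball d x₀ R, g y * σ y ∂μ
    have hA3 : A ^ q ≤ G3 := by
      have h1 : ν1 B1 * A ^ q ≤ D * (Ks1 * G2) := by
        calc ν1 B1 * A ^ q = ∫⁻ y in B1, A ^ q ∂ν1 := by rw [setLIntegral_const, mul_comm]
          _ ≤ ∫⁻ y in B1, D * H2f y ^ q' ∂ν1 :=
            setLIntegral_mono' hB1m fun y hy => main R hR y (ball_mono d x₀ hR hy)
          _ ≤ _ := (setLIntegral_le_lintegral _ _).trans hH2i'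
      calc A ^ q = (ν1 B1)⁻¹ * (ν1 B1 * A ^ q) := by
            rw [← mul_assoc, ENNReal.inv_mul_cancel hv0 hvt, one_mul]
        _ ≤ _ := by rw [hG3]; gcongr
    have hAT : A ≤ ENNReal.ofReal T := by
      have h1 : A ≤ G3 ^ q⁻¹ := (ENNReal.le_rpow_inv_iff hq0).2 hA3
      refine h1.trans ?_
      rw [← ENNReal.ofReal_toReal hG3qt]
      exact ENNReal.ofReal_le_ofReal (le_max_right _ _)
    refine (pow_inf_enn (C0 := Co) (P := pp) hAT hT1 (ee_ge_one (x₀ := x₀) hX x) (H1.osc_inf x) (H1.abs_pq x)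
      (by linarith : 0 ≤ M1) (hp1 x).le hq0).trans ?_
    exact add_le_add (mul_le_mul_right (main R hR x hx) _) le_rfl

end two

section two
variable {d : X → X → ℝ} {μ : Measure X} {A₀ Cμ : ℝ} {x₀ : X}
variable {p : X → ℝ} {q pm pp Co : ℝ} {α : X → ℝ → ℝ} {K c : ℝ}
variable {p' : X → ℝ} {q' pm' pp' Co' : ℝ} {α' : X → ℝ → ℝ} {K' c' : ℝ}
variable {W σ : X → ℝ≥0∞} {KA : ℝ}

lemma large_ball (hX : IsSHT d μ A₀ Cμ) : ∃ C : ℝ≥0, 1 ≤ C ∧ ∀ z r, 0 < r → ¬ Small d A₀ x₀ z r →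
    ∃ R, 1 ≤ R ∧ ball d z r ⊆ ball d x₀ R ∧
      (μ (ball d z r))⁻¹ ≤ C * (μ (ball d x₀ R))⁻¹ := by
  obtain ⟨D, hD⟩ := hX.dim
  have hA := hX.one_le_A₀
  refine ⟨max 1 (Real.toNNReal ((2 * (5 * A₀ ^ 3)) ^ D)), le_max_left _ _, fun z r hr hs => ?_⟩
  unfold Small at hs
  push Not at hs
  obtain ⟨h1, h2⟩ := hs
  have hA2 : 1 ≤ A₀ ^ 2 := one_le_pow₀ hA
  have hA3 : A₀ ^ 2 ≤ A₀ ^ 3 := pow_le_pow_right₀ hA (by norm_num)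
  have hAA : A₀ ≤ A₀ ^ 2 := by nlinarith
  have hR : 1 ≤ 3 * A₀ ^ 2 * r := by nlinarith
  have hR0 : 0 < 3 * A₀ ^ 2 * r := by linarith
  refine ⟨3 * A₀ ^ 2 * r, hR, ?_, ?_⟩
  · intro y hy
    have h4 : d z y < r := hy
    have h3 := hX.d_triangle x₀ y z
    rw [hX.d_symm x₀ z] at h3
    show d x₀ y < 3 * A₀ ^ 2 * r
    have : A₀ * (d z x₀ + d z y) < A₀ * (2 * A₀ * r + r) := mul_lt_mul_of_pos_left (by linarith) (by linarith)
    nlinarith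
  · have hsub : ball d x₀ (3 * A₀ ^ 2 * r) ⊆ ball d z (5 * A₀ ^ 3 * r) := by
      intro y hy
      have h4 : d x₀ y < 3 * A₀ ^ 2 * r := hy
      have h3 := hX.d_triangle z y x₀
      show d z y < 5 * A₀ ^ 3 * r
      have : A₀ * (d z x₀ + d x₀ y) < A₀ * (2 * A₀ * r + 3 * A₀ ^ 2 * r) := mul_lt_mul_of_pos_left (by linarith) (by linarith)
      have h5 : A₀ ^ 2 * r ≤ A₀ ^ 3 * r := by gcongr
      nlinarith
    have h5 := hD z r (5 * A₀ ^ 3 * r) hr (by nlinarith)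
    rw [show 5 * A₀ ^ 3 * r / r = 5 * A₀ ^ 3 by field_simp] at h5
    have h6 : μ (ball d x₀ (3 * A₀ ^ 2 * r)) ≤
        ((max 1 (Real.toNNReal ((2 * (5 * A₀ ^ 3)) ^ D)) : ℝ≥0) : ℝ≥0∞) * μ (ball d z r) := by
      refine (measure_mono hsub).trans (h5.trans ?_)
      gcongr
      exact ENNReal.coe_le_coe.2 (le_max_right _ _)
    set C := max 1 (Real.toNNReal ((2 * (5 * A₀ ^ 3)) ^ D))
    have hm0 := (hX.ball_pos z r hr).ne'
    have hmt := hX.ball_ne_top z r hr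
    have hM0 := (hX.ball_pos x₀ _ hR0).ne'
    have hMt := hX.ball_ne_top x₀ _ hR0
    rw [← div_eq_mul_inv, ENNReal.le_div_iff_mul_le (Or.inl hM0) (Or.inl hMt), mul_comm, ← div_eq_mul_inv,
      ENNReal.div_le_iff hm0 hmt]
    exact h6

theorem two_half (hX : IsSHT d μ A₀ Cμ)
    (H1 : Half d μ A₀ x₀ p q pm pp Co (μ.withDensity W) α K c)
    (H2 : Half d μ A₀ x₀ p' q' pm' pp' Co' (μ.withDensity σ) α' K' c')
    (hp' : ∀ x, p' x = p x / (p x - 1))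
    (hq' : q' = q / (q - 1)) (hW : Measurable W) (hσ : Measurable σ)
    (hW0 : ∀ x, W x ≠ 0) (hWt : ∀ x, W x ≠ ⊤) (hWσ : ∀ x, σ x = W x ^ (1 - p' x))
    (hKA : 1 ≤ KA) (hA : ∀ z r, 0 < r → ENNReal.ofReal (α z r * α' z r) ≤ ENNReal.ofReal KA * μ (ball d z r)) :
    ∃ C : ℝ≥0∞, C ≠ ⊤ ∧ ∀ g : X → ℝ≥0∞, Measurable g → ∫⁻ x, g x ^ p x ∂(μ.withDensity σ) ≤ 1 →
      ∃ Ψ : X → ℝ≥0∞, Measurable Ψ ∧ ∫⁻ x, Ψ x ∂(μ.withDensity W) ≤ C ∧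
        ∀ x, (maximal d μ (fun y => g y * σ y) x) ^ p x ≤ Ψ x := by
  obtain ⟨C1, h1⟩ := small_case hX H1 H2 hp' hW hσ hW0 hWt hWσ hKA hA
  obtain ⟨C2, hC2, h2⟩ := large_x0 hX H1 H2 hq' hW hσ hW0 hWt hWσ hKA hA
  obtain ⟨C3, hC3, h3⟩ := large_ball (x₀ := x₀) hX
  have hp1 : ∀ x, 1 < p x := fun x => H1.pm_gt.trans_le (H1.p_ge x)
  have hpp : 0 ≤ pp := by linarith [hp1 x₀, H1.p_le x₀]
  have hC4 : (C3 : ℝ≥0∞) ^ pp ≠ ⊤ := ENNReal.rpow_ne_top_of_nonneg hpp ENNReal.coe_ne_top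
  refine ⟨C1 + C3 ^ pp * C2, ENNReal.add_ne_top.2 ⟨ENNReal.coe_ne_top, ENNReal.mul_ne_top hC4 hC2⟩,
    fun g hg hgi => ?_⟩
  obtain ⟨P1, hP1m, hP1i, hP1⟩ := h1 g hg hgi
  obtain ⟨P2, hP2m, hP2i, hP2⟩ := h2 g hg hgi
  refine ⟨fun x => P1 x + C3 ^ pp * P2 x, hP1m.add (hP2m.const_mul _), ?_, fun x => ?_⟩
  · rw [lintegral_add_left hP1m, lintegral_const_mul' _ _ hC4]
    gcongr
  · have hx0 : 0 < p x := by linarith [hp1 x]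
    rw [← ENNReal.le_rpow_inv_iff hx0]
    unfold maximal
    refine iSup_le fun z => iSup_le fun r => iSup_le fun ⟨hr, hx⟩ => ?_
    rw [ENNReal.le_rpow_inv_iff hx0]
    by_cases hs : Small d A₀ x₀ z r
    · exact (hP1 z r hr hs x hx).trans le_self_add
    · refine le_trans ?_ le_add_self
      obtain ⟨R, hR, hsub, hm⟩ := h3 z r hr hs
      calc _ ≤ (C3 * ((μ (ball d x₀ R))⁻¹ * ∫⁻ y in ball d x₀ R, g y * σ y ∂μ)) ^ p x := by
            refine ENNReal.rpow_le_rpow ?_ hx0.le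
            rw [← mul_assoc]
            exact mul_le_mul' hm (lintegral_mono_set hsub)
        _ = (C3:ℝ≥0∞) ^ p x * ((μ (ball d x₀ R))⁻¹ * ∫⁻ y in ball d x₀ R, g y * σ y ∂μ) ^ p x :=
            ENNReal.mul_rpow_of_nonneg _ _ hx0.le
        _ ≤ _ := by
            refine mul_le_mul' (ENNReal.rpow_le_rpow_of_exponent_le ?_ (H1.p_le x)) (hP2 R hR x (hsub hx))
            exact_mod_cast hC3

end two

section lux
variable {μ : Measure X} {p : X → ℝ} {f g : X → ℝ≥0∞}

lemma modular_ofRealExp (hp : ∀ x, 0 ≤ p x) (f : X → ℝ≥0∞) :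
    modular μ (ofRealExp p) f = ∫⁻ x, f x ^ p x ∂μ := by
  unfold modular ofRealExp
  have h1 : {x : X | ENNReal.ofReal (p x) ≠ ⊤} = Set.univ := by ext; simp
  have h2 : {x : X | ENNReal.ofReal (p x) = ⊤} = ∅ := by ext; simp
  rw [h1, h2]
  simp only [Measure.restrict_univ, Measure.restrict_empty, essSup_measure_zero, ENNReal.bot_eq_zero, add_zero]
  simp [ENNReal.toReal_ofReal (hp _)]

lemma conjExp_ofReal (hp : ∀ x, 1 < p x) :
    conjExp (ofRealExp p) = ofRealExp fun x => p x / (p x - 1) := by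
  funext x
  unfold conjExp ofRealExp
  have h1 : 0 < p x - 1 := by linarith [hp x]
  rw [if_neg ENNReal.ofReal_ne_top, ENNReal.ofReal_div_of_pos h1, ENNReal.ofReal_sub _ zero_le_one,
    ENNReal.ofReal_one]

lemma lux_le (hp : ∀ x, 0 ≤ p x) {lam : ℝ≥0∞} (h0 : 0 < lam) (h : ∫⁻ x, (f x / lam) ^ p x ∂μ ≤ 1) :
    luxNorm μ (ofRealExp p) f ≤ lam :=
  sInf_le ⟨h0, by rw [modular_ofRealExp hp]; exact h⟩

lemma lux_int (hp : ∀ x, 0 ≤ p x) {lam : ℝ≥0∞} (h : luxNorm μ (ofRealExp p) f < lam) :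
    ∫⁻ x, (f x / lam) ^ p x ∂μ ≤ 1 := by
  obtain ⟨l, ⟨hl0, hl⟩, hll⟩ := sInf_lt_iff.1 h
  rw [modular_ofRealExp hp] at hl
  refine le_trans (lintegral_mono fun x => ?_) hl
  exact ENNReal.rpow_le_rpow (ENNReal.div_le_div_left hll.le _) (hp x)

lemma lux_mono (hp : ∀ x, 0 ≤ p x) (h : ∀ᵐ x ∂μ, f x ≤ g x) :
    luxNorm μ (ofRealExp p) f ≤ luxNorm μ (ofRealExp p) g := by
  refine le_sInf fun l ⟨hl0, hl⟩ => lux_le hp hl0 ?_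
  rw [modular_ofRealExp hp] at hl
  refine le_trans (lintegral_mono_ae ?_) hl
  filter_upwards [h] with x hx
  exact ENNReal.rpow_le_rpow (ENNReal.div_le_div_right hx _) (hp x)

lemma lux_congr (hp : ∀ x, 0 ≤ p x) (h : ∀ᵐ x ∂μ, f x = g x) :
    luxNorm μ (ofRealExp p) f = luxNorm μ (ofRealExp p) g :=
  le_antisymm (lux_mono hp (h.mono fun _ hx => hx.le)) (lux_mono hp (h.mono fun _ hx => hx.ge))

lemma ind_int (hp : ∀ x, 0 < p x) {B : Set X} (hB : MeasurableSet B) (v : X → ℝ≥0∞) (lam : ℝ≥0∞) :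
    ∫⁻ x, (B.indicator v x / lam) ^ p x ∂μ = ∫⁻ x in B, (v x / lam) ^ p x ∂μ := by
  rw [← lintegral_indicator hB]
  refine lintegral_congr fun x => ?_
  by_cases hx : x ∈ B
  · simp [hx]
  · simp [hx, hp x]

lemma lux_ne_zero (hp : ∀ x, 1 ≤ p x) (hpm : Measurable p) {v : X → ℝ≥0∞} (hv : Measurable v)
    (hv0 : ∀ x, v x ≠ 0) (hvt : ∀ x, v x ≠ ⊤) {B : Set X} (hB : MeasurableSet B) (hB0 : μ B ≠ 0) :
    luxNorm μ (ofRealExp p) (B.indicator v) ≠ 0 := by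
  intro h
  have hp0 : ∀ x, 0 < p x := fun x => by linarith [hp x]
  have h1 : ∀ n : ℕ, 1 ≤ n → (n : ℝ≥0∞) * ∫⁻ x in B, v x ^ p x ∂μ ≤ 1 := by
    intro n hn
    have h2 := lux_int (lam := (n:ℝ≥0∞)⁻¹) (fun x => (hp0 x).le) (by rw [h]; simp : luxNorm μ (ofRealExp p) (B.indicator v) < _)
    rw [ind_int hp0 hB] at h2
    refine le_trans ?_ h2
    rw [← lintegral_const_mul' _ _ (by simp)]
    refine lintegral_mono fun x => ?_
    rw [div_eq_mul_inv, inv_inv, ENNReal.mul_rpow_of_nonneg _ _ (hp0 x).le, mul_comm]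
    gcongr
    exact ENNReal.le_rpow_self_of_one_le (by exact_mod_cast hn) (hp x)
  have h3 : ∫⁻ x in B, v x ^ p x ∂μ = 0 := by
    by_contra hne
    have ht : ∫⁻ x in B, v x ^ p x ∂μ ≠ ⊤ := by
      have := h1 1 le_rfl
      simp only [Nat.cast_one, one_mul] at this
      exact ne_top_of_le_ne_top (by norm_num) this
    obtain ⟨n, hn⟩ := ENNReal.exists_nat_mul_gt hne (b := 1) (by norm_num)
    rcases Nat.eq_zero_or_pos n with rfl | hn0
    · simp at hn
    · exact absurd (h1 n hn0) (not_le.2 hn)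
  rw [lintegral_eq_zero_iff (hv.pow hpm)] at h3
  have h4 : ∀ᵐ x ∂(μ.restrict B), False := by
    filter_upwards [h3] with x hx
    simp [ENNReal.rpow_eq_zero_iff, hv0 x, hvt x] at hx
  rw [ae_iff] at h4
  simp [hB0] at h4

lemma lux_int_two (hp : ∀ x, 0 < p x) {B : Set X} (hB : MeasurableSet B) {v : X → ℝ≥0∞}
    (h0 : luxNorm μ (ofRealExp p) (B.indicator v) ≠ 0) (ht : luxNorm μ (ofRealExp p) (B.indicator v) ≠ ⊤) :
    ∫⁻ x in B, (v x / (2 * luxNorm μ (ofRealExp p) (B.indicator v))) ^ p x ∂μ ≤ 1 := by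
  rw [← ind_int hp hB]
  apply lux_int fun x => (hp x).le
  rw [two_mul]
  exact ENNReal.lt_add_right ht h0

lemma lux_int_ge (hp : ∀ x, 0 < p x) {pp : ℝ} (hpp : ∀ x, p x ≤ pp) {B : Set X} (hB : MeasurableSet B) {v : X → ℝ≥0∞}
    (h0 : luxNorm μ (ofRealExp p) (B.indicator v) ≠ 0) (ht : luxNorm μ (ofRealExp p) (B.indicator v) ≠ ⊤) :
    (4 ^ pp)⁻¹ ≤ ∫⁻ x in B, (v x / (2 * luxNorm μ (ofRealExp p) (B.indicator v))) ^ p x ∂μ := by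
  set L := luxNorm μ (ofRealExp p) (B.indicator v) with hL
  have h1 : 1 < ∫⁻ x in B, (v x / (L / 2)) ^ p x ∂μ := by
    by_contra hc
    push Not at hc
    rw [← ind_int hp hB] at hc
    have := lux_le (fun x => (hp x).le) (ENNReal.half_pos h0) hc
    rw [← hL] at this
    exact absurd this (not_le.2 (ENNReal.half_lt_self h0 ht))
  have h4 : (4:ℝ≥0∞) ^ pp ≠ ⊤ := by simp [ENNReal.rpow_eq_top_iff]
  have h40 : (4:ℝ≥0∞) ^ pp ≠ 0 := by simp [ENNReal.rpow_eq_zero_iff]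
  rw [ENNReal.inv_le_iff_le_mul (fun _ => h40) (fun h => absurd h h4), ← lintegral_const_mul' _ _ h4]
  refine h1.le.trans (lintegral_mono fun x => ?_)
  have h5 : v x / (L / 2) = 4 * (v x / (2 * L)) := by
    have e1 : (L / 2)⁻¹ = 2 * L⁻¹ := by
      rw [ENNReal.inv_div (Or.inl (by norm_num)) (Or.inl (by norm_num)), div_eq_mul_inv]
    have e2 : (2 * L)⁻¹ = 2⁻¹ * L⁻¹ := ENNReal.mul_inv (Or.inl (by norm_num)) (Or.inl (by norm_num))
    rw [div_eq_mul_inv (v x), e1, div_eq_mul_inv (v x), e2, show (4:ℝ≥0∞) = 2 * 2 by norm_num]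
    calc v x * (2 * L⁻¹) = v x * (2 * L⁻¹) * (2 * 2⁻¹) := by
          rw [ENNReal.mul_inv_cancel (by norm_num) (by norm_num), mul_one]
      _ = _ := by ring
  rw [h5, ENNReal.mul_rpow_of_nonneg _ _ (hp x).le]
  gcongr
  · norm_num
  · exact hpp x

lemma young_enn {a b : ℝ≥0∞} {s s' : ℝ} (hs : 1 < s) (hs' : s' = s / (s - 1)) :
    a * b ≤ a ^ s + b ^ s' := by
  have hc : s.HolderConjugate s' := by
    rw [Real.holderConjugate_iff]
    refine ⟨hs, ?_⟩
    rw [hs', inv_div]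
    have : s ≠ 0 := by linarith
    field_simp
    ring
  have h1 := ENNReal.young_inequality a b hc
  refine h1.trans ?_
  gcongr
  · apply ENNReal.div_le_of_le_mul
    calc a ^ s = a ^ s * 1 := (mul_one _).symm
      _ ≤ _ := by gcongr; rw [← ENNReal.ofReal_one]; exact ENNReal.ofReal_le_ofReal hc.lt.le
  · apply ENNReal.div_le_of_le_mul
    calc b ^ s' = b ^ s' * 1 := (mul_one _).symm
      _ ≤ _ := by gcongr; rw [← ENNReal.ofReal_one]; exact ENNReal.ofReal_le_ofReal hc.symm.lt.le

/-- Hoelder type inequality. -/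
lemma holder_set {p' : X → ℝ} (hp : ∀ x, 1 < p x) (hp' : ∀ x, p' x = p x / (p x - 1)) (hpm : Measurable p)
    {v : X → ℝ≥0∞} (hv : Measurable v) (hv0 : ∀ x, v x ≠ 0) (hvt : ∀ x, v x ≠ ⊤)
    {B : Set X} {l k : ℝ≥0∞} (hl0 : l ≠ 0) (hlt : l ≠ ⊤) (hk0 : k ≠ 0) (hkt : k ≠ ⊤)
    (h1 : ∫⁻ x in B, (v x / l) ^ p x ∂μ ≤ 1) (h2 : ∫⁻ x in B, ((v x)⁻¹ / k) ^ p' x ∂μ ≤ 1) :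
    μ B ≤ 2 * (l * k) := by
  have hm : Measurable fun x => (v x / l) ^ p x := (hv.div_const l).pow hpm
  calc μ B = ∫⁻ x in B, (l * k) * ((v x / l) * ((v x)⁻¹ / k)) ∂μ := by
        have : ∀ x, (l * k) * ((v x / l) * ((v x)⁻¹ / k)) = 1 := fun x => by
          calc _ = (l * l⁻¹) * (k * k⁻¹) * (v x * (v x)⁻¹) := by simp only [div_eq_mul_inv]; ring
            _ = 1 := by
              rw [ENNReal.mul_inv_cancel hl0 hlt, ENNReal.mul_inv_cancel hk0 hkt,
                ENNReal.mul_inv_cancel (hv0 x) (hvt x)]; simp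
        simp [this]
    _ ≤ ∫⁻ x in B, (l * k) * ((v x / l) ^ p x + ((v x)⁻¹ / k) ^ p' x) ∂μ :=
        lintegral_mono fun x => by gcongr; exact young_enn (hp x) (hp' x)
    _ = (l * k) * (∫⁻ x in B, (v x / l) ^ p x ∂μ + ∫⁻ x in B, ((v x)⁻¹ / k) ^ p' x ∂μ) := by
        rw [lintegral_const_mul' _ _ (ENNReal.mul_ne_top hlt hkt), lintegral_add_left hm]
    _ ≤ (l * k) * (1 + 1) := by gcongr
    _ = _ := by rw [one_add_one_eq_two, mul_comm]

end lux

section build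
variable {d : X → X → ℝ} {μ : Measure X} {A₀ Cμ : ℝ} {x₀ : X}
variable {p p' : X → ℝ} {q pm pp Co : ℝ} {v : X → ℝ≥0∞} {K : ℝ≥0}

lemma lux_fin (hX : IsSHT d μ A₀ Cμ) (hp1 : ∀ x, 1 < p x) (hpm : Measurable p)
    (hp' : ∀ x, p' x = p x / (p x - 1))
    (hv : Measurable v) (hv0 : ∀ x, v x ≠ 0) (hvt : ∀ x, v x ≠ ⊤)
    (hK : ∀ z r, 0 < r → luxNorm μ (ofRealExp p) ((ball d z r).indicator v) *
      luxNorm μ (ofRealExp p') ((ball d z r).indicator fun y => (v y)⁻¹) ≤ K * μ (ball d z r))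
    (z : X) (r : ℝ) (hr : 0 < r) :
    (luxNorm μ (ofRealExp p) ((ball d z r).indicator v) ≠ 0 ∧
      luxNorm μ (ofRealExp p) ((ball d z r).indicator v) ≠ ⊤) ∧
    (luxNorm μ (ofRealExp p') ((ball d z r).indicator fun y => (v y)⁻¹) ≠ 0 ∧
      luxNorm μ (ofRealExp p') ((ball d z r).indicator fun y => (v y)⁻¹) ≠ ⊤) := by
  have hpm' : Measurable p' := by
    rw [show p' = fun x => p x / (p x - 1) from funext hp']
    exact hpm.div (hpm.sub_const 1)
  have hp1' : ∀ x, 1 ≤ p' x := fun x => by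
    rw [hp', le_div_iff₀ (by linarith [hp1 x])]; linarith
  have hB := hX.measurableSet_ball z r
  have hB0 := (hX.ball_pos z r hr).ne'
  have h1 := lux_ne_zero (fun x => (hp1 x).le) hpm hv hv0 hvt hB hB0
  have h2 := lux_ne_zero hp1' hpm' (v := fun y => (v y)⁻¹) hv.inv (fun x => ENNReal.inv_ne_zero.2 (hvt x))
    (fun x => ENNReal.inv_ne_top.2 (hv0 x)) hB hB0
  have h3 := ne_top_of_le_ne_top (ENNReal.mul_ne_top ENNReal.coe_ne_top (hX.ball_ne_top z r hr)) (hK z r hr)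
  exact ⟨⟨h1, fun h => h3 (by rw [h, ENNReal.top_mul h2])⟩, ⟨h2, fun h => h3 (by rw [h, ENNReal.mul_top h1])⟩⟩

lemma dens_lux {B : Set X} (hB : MeasurableSet B) (hp0 : ∀ x, 0 < p x) (hpm : Measurable p) (hv : Measurable v) {L : ℝ≥0∞}
    (hL0 : L ≠ 0) (hLt : L ≠ ⊤) :
    ∫⁻ y in B, ENNReal.ofReal (L.toReal ^ (-p y)) ∂(μ.withDensity fun x => v x ^ p x) =
      ∫⁻ y in B, (v y / L) ^ p y ∂μ := by
  have hm : Measurable fun y => ENNReal.ofReal (L.toReal ^ (-p y)) :=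
    (measurable_const.pow hpm.neg).ennreal_ofReal
  rw [← avg_dens (hv.pow hpm) hm hB]
  refine lintegral_congr fun y => ?_
  rw [← ENNReal.ofReal_rpow_of_pos (ENNReal.toReal_pos hL0 hLt), ENNReal.ofReal_toReal hLt, ENNReal.rpow_neg,
    ENNReal.div_rpow_of_nonneg _ _ (hp0 y).le, mul_comm, div_eq_mul_inv]

theorem build_half (hX : IsSHT d μ A₀ Cμ) (hpm1 : 1 < pm) (hge : ∀ x, pm ≤ p x) (hle : ∀ x, p x ≤ pp)
    (hqge : pm ≤ q) (hqle : q ≤ pp) (hpm : Measurable p)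
    (osc : ∀ z r, 0 < r → Small d A₀ x₀ z r → ∀ x ∈ ball d z r, ∀ y ∈ ball d z r,
      |p x - p y| * Real.log (SS d x₀ z r) ≤ Co)
    (osc_inf : ∀ x, |p x - q| * Real.log (ee d x₀ x) ≤ Co)
    (hp' : ∀ x, p' x = p x / (p x - 1))
    (hv : Measurable v) (hv0 : ∀ x, v x ≠ 0) (hvt : ∀ x, v x ≠ ⊤)
    (hK : ∀ z r, 0 < r → luxNorm μ (ofRealExp p) ((ball d z r).indicator v) *
      luxNorm μ (ofRealExp p') ((ball d z r).indicator fun y => (v y)⁻¹) ≤ K * μ (ball d z r)) :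
    Half d μ A₀ x₀ p q pm pp Co (μ.withDensity fun x => v x ^ p x)
      (fun z r => (2 * luxNorm μ (ofRealExp p) ((ball d z r).indicator v)).toReal) (8 * K + 1)
      ((4:ℝ) ^ pp)⁻¹ := by
  have hp1 : ∀ x, 1 < p x := fun x => hpm1.trans_le (hge x)
  have hp0 : ∀ x, 0 < p x := fun x => by linarith [hp1 x]
  have hp0' : ∀ x, 0 < p' x := fun x => by
    rw [hp']; exact div_pos (hp0 x) (by linarith [hp1 x])
  have hF := lux_fin hX hp1 hpm hp' hv hv0 hvt hK
  have hL0 : ∀ z r, 0 < r → 2 * luxNorm μ (ofRealExp p) ((ball d z r).indicator v) ≠ 0 :=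
    fun z r hr => mul_ne_zero two_ne_zero (hF z r hr).1.1
  have hLt : ∀ z r, 0 < r → 2 * luxNorm μ (ofRealExp p) ((ball d z r).indicator v) ≠ ⊤ :=
    fun z r hr => ENNReal.mul_ne_top (by norm_num) (hF z r hr).1.2
  have hk0 : ∀ z r, 0 < r → 2 * luxNorm μ (ofRealExp p') ((ball d z r).indicator fun y => (v y)⁻¹) ≠ 0 :=
    fun z r hr => mul_ne_zero two_ne_zero (hF z r hr).2.1
  have hkt : ∀ z r, 0 < r → 2 * luxNorm μ (ofRealExp p') ((ball d z r).indicator fun y => (v y)⁻¹) ≠ ⊤ :=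
    fun z r hr => ENNReal.mul_ne_top (by norm_num) (hF z r hr).2.2
  refine ⟨hpm1, hge, hle, hqge, hqle, hpm, osc, osc_inf, fun z r hr => ENNReal.toReal_pos (hL0 z r hr) (hLt z r hr),
    fun z r z' r' hr hr' hs => ?_, by positivity, fun z r z' r' hr hr' hs => ?_, fun z r hr => ?_, by positivity,
    fun z r hr => ?_⟩
  · refine ENNReal.toReal_mono (hLt z' r' hr') ?_
    gcongr
    exact lux_mono (fun x => (hp0 x).le) (Eventually.of_forall fun x => Set.indicator_le_indicator_of_subset hs (fun _ => zero_le) x)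
  · have h1 := holder_set hp1 hp' hpm hv hv0 hvt (hL0 z r hr) (hLt z r hr) (hk0 z r hr) (hkt z r hr)
      (lux_int_two hp0 (hX.measurableSet_ball z r) (hF z r hr).1.1 (hF z r hr).1.2)
      (lux_int_two hp0' (hX.measurableSet_ball z r) (hF z r hr).2.1 (hF z r hr).2.2)
    have h2 : luxNorm μ (ofRealExp p') ((ball d z r).indicator fun y => (v y)⁻¹) ≤
        luxNorm μ (ofRealExp p') ((ball d z' r').indicator fun y => (v y)⁻¹) :=
      lux_mono (fun x => (hp0' x).le) (Eventually.of_forall fun x => Set.indicator_le_indicator_of_subset hs (fun _ => zero_le) x)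
    have h3 := hK z' r' hr'
    rw [ENNReal.ofReal_mul (by positivity), ENNReal.ofReal_toReal (hLt z r hr), ENNReal.ofReal_toReal (hLt z' r' hr')]
    set a := luxNorm μ (ofRealExp p) ((ball d z r).indicator v)
    set a' := luxNorm μ (ofRealExp p) ((ball d z' r').indicator v)
    set b := luxNorm μ (ofRealExp p') ((ball d z r).indicator fun y => (v y)⁻¹)
    set b' := luxNorm μ (ofRealExp p') ((ball d z' r').indicator fun y => (v y)⁻¹)
    have e : ENNReal.ofReal (8 * K + 1) = 8 * K + 1 := by
      rw [ENNReal.ofReal_add (by positivity) zero_le_one, ENNReal.ofReal_mul (by norm_num)]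
      simp
    calc 2 * a' * μ (ball d z r) ≤ 2 * a' * (2 * (2 * a * (2 * b'))) := by
          gcongr; exact h1.trans (by gcongr)
      _ = 8 * (a' * b') * (2 * a) := by ring
      _ ≤ 8 * (K * μ (ball d z' r')) * (2 * a) := by gcongr
      _ = 8 * K * (2 * a) * μ (ball d z' r') := by ring
      _ ≤ _ := by rw [e]; gcongr; exact le_self_add
  · rw [dens_lux (hX.measurableSet_ball z r) hp0 hpm hv (hL0 z r hr) (hLt z r hr)]
    exact lux_int_two hp0 (hX.measurableSet_ball z r) (hF z r hr).1.1 (hF z r hr).1.2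
  · rw [dens_lux (hX.measurableSet_ball z r) hp0 hpm hv (hL0 z r hr) (hLt z r hr)]
    refine le_trans (le_of_eq ?_) (lux_int_ge hp0 hle (hX.measurableSet_ball z r) (hF z r hr).1.1 (hF z r hr).1.2)
    rw [ENNReal.ofReal_inv_of_pos (by positivity), ← ENNReal.ofReal_rpow_of_pos (by norm_num)]
    simp

end build

section exps
variable {d : X → X → ℝ} {μ : Measure X} {A₀ Cμ : ℝ} {x₀ : X} {p : X → ℝ}

lemma essInf_le_all (hX : IsSHT d μ A₀ Cμ) (hp1 : ∀ x, 1 ≤ p x) (h0 : LH0 d p) (x : X) : essInf p μ ≤ p x := by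
  obtain ⟨C0, hC0, h0⟩ := h0
  by_contra hlt
  push Not at hlt
  set ε := essInf p μ - p x with hε
  have hε0 : 0 < ε := by linarith
  have hae : ∀ᵐ y ∂μ, essInf p μ ≤ p y :=
    ae_essInf_le ⟨1, by simp [hp1]⟩
  set δ := min (1/2) (Real.exp (-(C0 / ε))) with hδ
  have hδ0 : 0 < δ := lt_min (by norm_num) (Real.exp_pos _)
  have hsub : ball d x δ ⊆ {y | ¬ essInf p μ ≤ p y} := by
    intro y hy
    have hy : d x y < δ := hy
    show ¬ _
    push Not
    rcases (hX.d_nonneg x y).eq_or_lt with h | h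
    · rw [← (hX.d_eq_zero_iff x y).1 h.symm]; exact hlt
    · have h1 := h0 x y h (hy.trans_le (min_le_left _ _))
      have h2 : Real.log (d x y) < -(C0 / ε) := by
        rw [Real.log_lt_iff_lt_exp h]; exact hy.trans_le (min_le_right _ _)
      have h3 : 0 < C0 / ε := by positivity
      have h4 : C0 / (-Real.log (d x y)) < ε := by
        rw [div_lt_iff₀ (by linarith), ← div_lt_iff₀' hε0]; linarith
      have h5 := abs_le.1 h1
      linarith [h5.1]
  have := measure_mono_null hsub (ae_iff.1 hae)
  exact (hX.ball_pos x δ hδ0).ne' this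

lemma ee_le_of_small (hX : IsSHT d μ A₀ Cμ) {z : X} {r : ℝ} (hs : Small d A₀ x₀ z r) {x : X}
    (hx : x ∈ ball d z r) : ee d x₀ z ≤ 2 * A₀ * ee d x₀ x := by
  have h4 : d z x < r := hx
  have hA := hX.one_le_A₀
  have h3 := hX.d_triangle z x₀ x
  have h0 := hX.d_nonneg x x₀
  have he : (1:ℝ) ≤ Real.exp 1 := Real.one_le_exp zero_le_one
  unfold ee
  rcases hs with hs | hs
  · have : A₀ * (d z x + d x x₀) ≤ A₀ * (1 + d x x₀) := by gcongr; linarith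
    have : Real.exp 1 ≤ A₀ * Real.exp 1 := by nlinarith
    have : A₀ * 1 ≤ A₀ * Real.exp 1 := by gcongr
    nlinarith
  · have : A₀ * (d z x + d x x₀) ≤ A₀ * (r + d x x₀) := by gcongr
    have : Real.exp 1 ≤ A₀ * Real.exp 1 := by nlinarith
    nlinarith

theorem exps (hX : IsSHT d μ A₀ Cμ) (hp1 : ∀ x, 1 ≤ p x) (hLH : LH d x₀ p) (hpm : 1 < essInf p μ) :
    ∃ q pm pp Co : ℝ, 1 < pm ∧ (∀ x, pm ≤ p x) ∧ (∀ x, p x ≤ pp) ∧ pm ≤ q ∧ q ≤ pp ∧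
      (∀ z r, 0 < r → Small d A₀ x₀ z r → ∀ x ∈ ball d z r, ∀ y ∈ ball d z r,
        |p x - p y| * Real.log (SS d x₀ z r) ≤ Co) ∧
      (∀ x, |p x - q| * Real.log (ee d x₀ x) ≤ Co) := by
  have hge := essInf_le_all hX hp1 hLH.1
  obtain ⟨⟨C0, hC0, h0⟩, pinf, C, hC, hinf⟩ := hLH
  set pm := essInf p μ
  have hA := hX.one_le_A₀
  have hi : ∀ x, |p x - pinf| * Real.log (ee d x₀ x) ≤ C := fun x => by
    have := hinf x
    rwa [le_div_iff₀ (by have := log_ee_ge (x₀ := x₀) hX x; unfold ee at this; linarith)] at this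
  have hi2 : ∀ x, |p x - pinf| ≤ C := fun x => by
    have h1 := log_ee_ge (x₀ := x₀) hX x
    have h2 := hi x
    have h3 := abs_nonneg (p x - pinf)
    nlinarith
  have hpq : ∀ x, |p x - max pinf pm| ≤ |p x - pinf| := fun x => by
    rcases le_total pm pinf with h | h
    · rw [max_eq_left h]
    · rw [max_eq_right h, abs_of_nonneg (by linarith [hge x]), abs_of_nonneg (by linarith [hge x])]
      linarith
  have hl2 : 0 ≤ Real.log (2 * A₀) := Real.log_nonneg (by linarith)
  have hl4 : 0 ≤ Real.log (4 * A₀) := Real.log_nonneg (by linarith)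
  refine ⟨max pinf pm, pm, |pinf| + C + pm, 2 * C * (Real.log (2 * A₀) + 1) +
    (C0 + 2 * C * Real.log (2 * A₀) + 2 * C * Real.log (4 * A₀)), hpm, hge, fun x => ?_, le_max_right _ _,
    max_le ?_ ?_, fun z r hr hs x hx y hy => ?_, fun x => ?_⟩
  · have := abs_le.1 (hi2 x); linarith [le_abs_self pinf]
  · linarith [le_abs_self pinf]
  · linarith [abs_nonneg pinf]
  · have hz : ∀ x ∈ ball d z r, |p x - pinf| * Real.log (ee d x₀ z) ≤ C * (Real.log (2 * A₀) + 1) := by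
      intro x hx
      have h1 := Real.log_le_log (ee_pos hX z) (ee_le_of_small hX hs hx)
      rw [Real.log_mul (by linarith) (ee_pos hX x).ne'] at h1
      calc _ ≤ |p x - pinf| * (Real.log (2 * A₀) + Real.log (ee d x₀ x)) := by gcongr
        _ = |p x - pinf| * Real.log (2 * A₀) + |p x - pinf| * Real.log (ee d x₀ x) := mul_add _ _ _
        _ ≤ C * Real.log (2 * A₀) + C := add_le_add (by gcongr; exact hi2 x) (hi x)
        _ = _ := by ring
    have htri : |p x - p y| ≤ |p x - pinf| + |p y - pinf| := by
      rw [abs_sub_comm (p y)]; exact abs_sub_le _ _ _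
    have hxy : |p x - p y| ≤ 2 * C := by linarith [hi2 x, hi2 y]
    have hlz : 0 ≤ Real.log (ee d x₀ z) := by linarith [log_ee_ge (x₀ := x₀) hX z]
    have hI : |p x - p y| * Real.log (ee d x₀ z) ≤ 2 * C * (Real.log (2 * A₀) + 1) := by
      calc _ ≤ (|p x - pinf| + |p y - pinf|) * Real.log (ee d x₀ z) := by gcongr
        _ ≤ _ := by rw [add_mul]; linarith [hz x hx, hz y hy]
    have hII : |p x - p y| * (-Real.log (min r 1)) ≤ C0 + 2 * C * Real.log (2 * A₀) + 2 * C * Real.log (4 * A₀) := by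
      have n1 : 0 ≤ 2 * C * Real.log (2 * A₀) := by positivity
      have n2 : 0 ≤ 2 * C * Real.log (4 * A₀) := by positivity
      rcases le_or_gt 1 r with h | h
      · rw [min_eq_right h, Real.log_one]; simp; linarith
      rw [min_eq_left h.le]
      rcases le_or_gt (1/2) (2 * A₀ * r) with h2 | h2
      · have h3 : -Real.log r ≤ Real.log (4 * A₀) := by
          rw [← Real.log_inv]
          apply Real.log_le_log (by positivity)
          rw [inv_le_iff_one_le_mul₀ hr]; linarith
        have : |p x - p y| * (-Real.log r) ≤ 2 * C * Real.log (4 * A₀) := by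
          calc _ ≤ |p x - p y| * Real.log (4 * A₀) := by gcongr
            _ ≤ _ := by gcongr
        linarith
      · have h3 := hX.d_triangle x y z
        have hx' : d z x < r := hx
        have hy' : d z y < r := hy
        have hD : d x y < 2 * A₀ * r := by
          rw [hX.d_symm x z] at h3
          have : A₀ * (d z x + d z y) < A₀ * (r + r) := mul_lt_mul_of_pos_left (by linarith) (by linarith)
          linarith
        rcases (hX.d_nonneg x y).eq_or_lt with h5 | h5
        · rw [(hX.d_eq_zero_iff x y).1 h5.symm]; simp; linarith
        have h6 := h0 x y h5 (by linarith)
        have h7 : Real.log (d x y) < 0 := Real.log_neg h5 (by linarith)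
        rw [le_div_iff₀ (by linarith)] at h6
        have h8 : Real.log (d x y) ≤ Real.log (2 * A₀) + Real.log r := by
          rw [← Real.log_mul (by linarith) hr.ne']
          exact Real.log_le_log h5 hD.le
        have : |p x - p y| * (-Real.log r) ≤ C0 + 2 * C * Real.log (2 * A₀) := by
          calc _ ≤ |p x - p y| * (-Real.log (d x y) + Real.log (2 * A₀)) := by gcongr; linarith
            _ = |p x - p y| * (-Real.log (d x y)) + |p x - p y| * Real.log (2 * A₀) := mul_add _ _ _
            _ ≤ _ := add_le_add h6 (by gcongr)
        linarith
    unfold SS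
    rw [Real.log_div (ee_pos hX z).ne' (lt_min hr one_pos).ne']
    linarith
  · have h1 := log_ee_ge (x₀ := x₀) hX x
    have h2 : |p x - max pinf pm| * Real.log (ee d x₀ x) ≤ C := le_trans (mul_le_mul_of_nonneg_right (hpq x) (by linarith)) (hi x)
    have n1 : 0 ≤ 2 * C * Real.log (2 * A₀) := by positivity
    have n2 : 0 ≤ 2 * C * Real.log (4 * A₀) := by positivity
    linarith

lemma conj_diff {a b pm : ℝ} (hpm : 1 < pm) (ha : pm ≤ a) (hb : pm ≤ b) :
    |a / (a - 1) - b / (b - 1)| ≤ |a - b| / (pm - 1) ^ 2 := by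
  have h1 : a / (a - 1) - b / (b - 1) = (b - a) / ((a - 1) * (b - 1)) := by
    have : a - 1 ≠ 0 := by linarith
    have : b - 1 ≠ 0 := by linarith
    field_simp; ring
  have h2 : 0 < (a - 1) * (b - 1) := mul_pos (by linarith) (by linarith)
  rw [h1, abs_div, abs_of_pos h2, abs_sub_comm]
  have : 0 < (pm - 1) ^ 2 := by have : 0 < pm - 1 := by linarith
                                positivity
  gcongr
  nlinarith

lemma conj_mono {a b : ℝ} (ha : 1 < a) (hab : a ≤ b) : b / (b - 1) ≤ a / (a - 1) := by
  rw [div_le_div_iff₀ (by linarith) (by linarith)]; nlinarith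

end exps

section suff
variable {d : X → X → ℝ} {μ : Measure X} {A₀ Cμ : ℝ} {x₀ : X} {p p' : X → ℝ} {w : X → ℝ≥0∞} {K : ℝ≥0}

lemma maximal_div {lam : ℝ≥0∞} (h0 : lam ≠ 0) (ht : lam ≠ ⊤) (f : X → ℝ≥0∞) (x : X) :
    maximal d μ f x ≤ lam * maximal d μ (fun y => f y / lam) x := by
  conv_lhs => unfold maximal
  refine iSup_le fun z => iSup_le fun r => iSup_le fun hr => ?_
  calc (μ (ball d z r))⁻¹ * ∫⁻ y in ball d z r, f y ∂μ =
        lam * ((μ (ball d z r))⁻¹ * ∫⁻ y in ball d z r, f y / lam ∂μ) := by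
        rw [mul_left_comm, ← lintegral_const_mul' _ _ ht]
        congr 1
        refine lintegral_congr fun y => ?_
        rw [ENNReal.mul_div_cancel h0 ht]
    _ ≤ _ := by
        gcongr
        unfold maximal
        exact le_iSup_of_le z (le_iSup_of_le r (le_iSup_of_le hr le_rfl))

theorem suff (hX : IsSHT d μ A₀ Cμ) (hpm : Measurable p) (hp1 : ∀ x, 1 ≤ p x) (hLH : LH d x₀ p)
    (hpminus : 1 < essInf p μ) (hp' : ∀ x, p' x = p x / (p x - 1))
    (hw : Measurable w) (hw0 : ∀ x, w x ≠ 0) (hwt : ∀ x, w x ≠ ⊤)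
    (hK : ∀ z r, 0 < r → luxNorm μ (ofRealExp p) ((ball d z r).indicator w) *
      luxNorm μ (ofRealExp p') ((ball d z r).indicator fun y => (w y)⁻¹) ≤ K * μ (ball d z r)) :
    ∃ C : ℝ≥0, 0 < C ∧ ∀ f, Measurable f → luxNorm μ (ofRealExp p) (fun x => maximal d μ f x * w x) ≤
      C * luxNorm μ (ofRealExp p) (fun x => f x * w x) := by
  obtain ⟨q, pm, pp, Co, hpm1, hge, hle, hqge, hqle, osc, osc_inf⟩ := exps hX hp1 hLH hpminus
  have hpg : ∀ x, 1 < p x := fun x => hpm1.trans_le (hge x)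
  have hp0 : ∀ x, 0 < p x := fun x => by linarith [hpg x]
  have hH1 := build_half hX hpm1 hge hle hqge hqle hpm osc osc_inf hp' hw hw0 hwt hK
  have hpm' : Measurable p' := by
    rw [show p' = fun x => p x / (p x - 1) from funext hp']
    exact hpm.div (hpm.sub_const 1)
  have hpp1 : 1 < pp := hpm1.trans_le (hqge.trans hqle)
  have hp'' : ∀ x, p x = p' x / (p' x - 1) := fun x => by
    have h1 : p x - 1 ≠ 0 := by linarith [hpg x]
    rw [hp']; field_simp; ring
  have hsq : 0 < (pm - 1) ^ 2 := pow_pos (by linarith) 2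
  have hK' : ∀ z r, 0 < r → luxNorm μ (ofRealExp p') ((ball d z r).indicator fun y => (w y)⁻¹) *
      luxNorm μ (ofRealExp p) ((ball d z r).indicator fun y => ((w y)⁻¹)⁻¹) ≤ K * μ (ball d z r) := by
    intro z r hr
    simp only [inv_inv]
    rw [mul_comm]; exact hK z r hr
  have hH2 := build_half (x₀ := x₀) (p := p') (p' := p) (q := q / (q - 1)) (pm := pp / (pp - 1)) (pp := pm / (pm - 1))
    (Co := Co / (pm - 1) ^ 2) (v := fun y => (w y)⁻¹) hX
    (by rw [lt_div_iff₀ (by linarith)]; linarith)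
    (fun x => by rw [hp']; exact conj_mono (hpg x) (hle x))
    (fun x => by rw [hp']; exact conj_mono hpm1 (hge x))
    (conj_mono (by linarith) hqle) (conj_mono hpm1 hqge) hpm'
    (fun z r hr hs x hx y hy => by
      rw [le_div_iff₀ hsq]
      refine le_trans ?_ (osc z r hr hs x hx y hy)
      rw [mul_right_comm]
      have h1 := conj_diff hpm1 (hge x) (hge y)
      rw [le_div_iff₀ hsq, ← hp', ← hp'] at h1
      exact mul_le_mul_of_nonneg_right h1
        (Real.log_nonneg ((ee_ge_one hX z).trans (ee_le_SS hX z hr))))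
    (fun x => by
      rw [le_div_iff₀ hsq]
      refine le_trans ?_ (osc_inf x)
      rw [mul_right_comm]
      have h1 := conj_diff hpm1 (hge x) hqge
      rw [le_div_iff₀ hsq, ← hp'] at h1
      exact mul_le_mul_of_nonneg_right h1 (Real.log_nonneg (ee_ge_one hX x)))
    hp'' hw.inv (fun x => ENNReal.inv_ne_zero.2 (hwt x)) (fun x => ENNReal.inv_ne_top.2 (hw0 x)) hK'
  have hWσ : ∀ x, (w x)⁻¹ ^ p' x = (w x ^ p x) ^ (1 - p' x) := fun x => by
    rw [← ENNReal.rpow_mul, ENNReal.inv_rpow, ← ENNReal.rpow_neg]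
    congr 1
    have h1 : p x - 1 ≠ 0 := by linarith [hpg x]
    rw [hp']; field_simp; ring
  obtain ⟨C, hC, hmain⟩ := two_half (KA := max 1 (4 * K)) hX hH1 hH2 hp' rfl (hw.pow hpm) (hw.inv.pow hpm')
    (fun x => by simp [ENNReal.rpow_eq_zero_iff, hw0 x, hwt x])
    (fun x => by simp [ENNReal.rpow_eq_top_iff, hw0 x, hwt x]) hWσ (le_max_left _ _)
    (fun z r hr => by
      have hF := lux_fin hX hpg hpm hp' hw hw0 hwt hK z r hr
      rw [← ENNReal.toReal_mul, ENNReal.ofReal_toReal (ENNReal.mul_ne_top (ENNReal.mul_ne_top (by norm_num) hF.1.2)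
        (ENNReal.mul_ne_top (by norm_num) hF.2.2))]
      calc _ = 4 * (luxNorm μ (ofRealExp p) ((ball d z r).indicator w) *
              luxNorm μ (ofRealExp p') ((ball d z r).indicator fun y => (w y)⁻¹)) := by ring
        _ ≤ 4 * (K * μ (ball d z r)) := mul_le_mul_right (hK z r hr) _
        _ = ENNReal.ofReal (4 * K) * μ (ball d z r) := by
          rw [ENNReal.ofReal_mul (by norm_num), ENNReal.ofReal_coe_nnreal, ENNReal.ofReal_ofNat, mul_assoc]
        _ ≤ _ := by gcongr; exact le_max_right _ _)
  lift C to ℝ≥0 using hC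
  refine ⟨max 1 C, by positivity, fun f hf => ?_⟩
  set C' := max 1 C with hC'
  have hC1 : (1 : ℝ≥0∞) ≤ C' := by exact_mod_cast le_max_left 1 C
  have hC0 : (C' : ℝ≥0∞) ≠ 0 := (one_pos.trans_le hC1).ne'
  have hCt : (C' : ℝ≥0∞) ≠ ⊤ := ENNReal.coe_ne_top
  rw [mul_comm, ← ENNReal.div_le_iff hC0 hCt]
  refine le_of_forall_gt_imp_ge_of_dense fun lam hlam => ?_
  rw [ENNReal.div_le_iff hC0 hCt]
  by_cases hlt : lam = ⊤
  · rw [hlt, ENNReal.top_mul hC0]; exact le_top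
  have hl0 : lam ≠ 0 := (zero_le.trans_lt hlam).ne'
  have hint := lux_int (fun x => (hp0 x).le) hlam
  set σ : X → ℝ≥0∞ := fun x => (w x)⁻¹ ^ p' x with hσ
  have hσ0 : ∀ x, σ x ≠ 0 := fun x => by simp [hσ, ENNReal.rpow_eq_zero_iff, hw0 x, hwt x]
  have hσt : ∀ x, σ x ≠ ⊤ := fun x => by simp [hσ, ENNReal.rpow_eq_top_iff, hw0 x, hwt x]
  have hσm : Measurable σ := hw.inv.pow hpm'
  have hgm : Measurable fun x => f x / lam * (σ x)⁻¹ := (hf.div_const lam).mul hσm.inv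
  obtain ⟨Ψ, hΨm, hΨi, hΨ⟩ := hmain (fun x => f x / lam * (σ x)⁻¹) hgm (by
    rw [int_dens hσm (hgm.pow hpm)]
    refine le_trans (le_of_eq (lintegral_congr fun x => ?_)) hint
    have e1 : f x * w x / lam = f x / lam * w x := by simp only [div_eq_mul_inv]; ring
    rw [e1, ENNReal.mul_rpow_of_nonneg _ _ (hp0 x).le, ENNReal.mul_rpow_of_nonneg _ _ (hp0 x).le, mul_assoc]
    congr 1
    have e3 : σ x = (w x ^ p' x)⁻¹ := ENNReal.inv_rpow _ _
    rw [e3, inv_inv, ← ENNReal.rpow_mul, ← ENNReal.rpow_neg, ← ENNReal.rpow_add _ _ (hw0 x) (hwt x)]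
    congr 1
    have h1 : p x - 1 ≠ 0 := by linarith [hpg x]
    rw [hp']; field_simp; ring)
  have e2 : (fun y => f y / lam * (σ y)⁻¹ * σ y) = fun y => f y / lam := by
    funext y; rw [mul_assoc, ENNReal.inv_mul_cancel (hσ0 y) (hσt y), mul_one]
  rw [e2] at hΨ
  refine lux_le (fun x => (hp0 x).le) (ENNReal.mul_pos hl0 hC0) ?_
  calc ∫⁻ x, (maximal d μ f x * w x / (lam * C')) ^ p x ∂μ
      ≤ ∫⁻ x, (C' : ℝ≥0∞)⁻¹ * (Ψ x * w x ^ p x) ∂μ := by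
        refine lintegral_mono fun x => ?_
        have h1 : maximal d μ f x * w x / (lam * C') ≤ (C':ℝ≥0∞)⁻¹ * (maximal d μ (fun y => f y / lam) x * w x) := by
          calc _ ≤ lam * maximal d μ (fun y => f y / lam) x * w x / (lam * C') := by
                gcongr; exact maximal_div hl0 hlt f x
            _ = (lam * lam⁻¹) * ((C':ℝ≥0∞)⁻¹ * (maximal d μ (fun y => f y / lam) x * w x)) := by
                rw [div_eq_mul_inv, ENNReal.mul_inv (Or.inl hl0) (Or.inl hlt)]; ring
            _ = _ := by rw [ENNReal.mul_inv_cancel hl0 hlt, one_mul]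
        refine (ENNReal.rpow_le_rpow h1 (hp0 x).le).trans ?_
        rw [ENNReal.mul_rpow_of_nonneg _ _ (hp0 x).le, ENNReal.mul_rpow_of_nonneg _ _ (hp0 x).le]
        gcongr
        · exact ENNReal.rpow_le_self_of_le_one (ENNReal.inv_le_one.2 hC1) (hp1 x)
        · exact hΨ x
    _ = (C' : ℝ≥0∞)⁻¹ * ∫⁻ x, Ψ x ∂(μ.withDensity fun x => w x ^ p x) := by
        rw [lintegral_const_mul' _ _ (ENNReal.inv_ne_top.2 hC0), int_dens (hw.pow hpm) hΨm]
    _ ≤ (C' : ℝ≥0∞)⁻¹ * C' := by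
        gcongr
        exact hΨi.trans (by exact_mod_cast le_max_right 1 C)
    _ = 1 := ENNReal.inv_mul_cancel hC0 hCt

end suff

section nec
variable {d : X → X → ℝ} {μ : Measure X} {A₀ Cμ : ℝ} {x₀ : X} {p p' : X → ℝ} {w : X → ℝ≥0∞}

lemma lux_smul (hp : ∀ x, 0 ≤ p x) {c : ℝ≥0∞} (h0 : c ≠ 0) (ht : c ≠ ⊤) (g : X → ℝ≥0∞) :
    c * luxNorm μ (ofRealExp p) g ≤ luxNorm μ (ofRealExp p) (fun x => c * g x) := by
  refine le_sInf fun l ⟨hl0, hl⟩ => ?_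
  rw [modular_ofRealExp hp] at hl
  have h1 : luxNorm μ (ofRealExp p) g ≤ l / c := by
    refine lux_le hp (ENNReal.div_pos hl0.ne' ht) (le_trans (le_of_eq (lintegral_congr fun x => ?_)) hl)
    congr 1
    rw [div_eq_mul_inv, ENNReal.inv_div (Or.inl ht) (Or.inl h0)]
    simp only [div_eq_mul_inv]; ring
  rw [mul_comm]
  exact (ENNReal.le_div_iff_mul_le (Or.inl h0) (Or.inl ht)).1 h1

theorem nec (hX : IsSHT d μ A₀ Cμ) (hpm : Measurable p) (hpg : ∀ x, 1 < p x)
    (hp' : ∀ x, p' x = p x / (p x - 1)) {P : ℝ} (hP : ∀ x, p' x ≤ P)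
    (hw : Measurable w) (hw0 : ∀ x, w x ≠ 0) (hwt : ∀ x, w x ≠ ⊤) {C : ℝ≥0}
    (hC : ∀ f, Measurable f → luxNorm μ (ofRealExp p) (fun x => maximal d μ f x * w x) ≤
      C * luxNorm μ (ofRealExp p) (fun x => f x * w x)) (z : X) (r : ℝ) (hr : 0 < r) :
    luxNorm μ (ofRealExp p) ((ball d z r).indicator w) *
      luxNorm μ (ofRealExp p') ((ball d z r).indicator fun y => (w y)⁻¹) ≤ C * μ (ball d z r) := by
  have hp0 : ∀ x, 0 < p x := fun x => by linarith [hpg x]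
  have hp1' : ∀ x, 1 < p' x := fun x => by
    rw [hp', lt_div_iff₀ (by linarith [hpg x])]; linarith
  have hp0' : ∀ x, 0 < p' x := fun x => by linarith [hp1' x]
  have hpm' : Measurable p' := by
    rw [show p' = fun x => p x / (p x - 1) from funext hp']
    exact hpm.div (hpm.sub_const 1)
  set B := ball d z r with hBd
  have hB : MeasurableSet B := hX.measurableSet_ball z r
  have hB0 : μ B ≠ 0 := (hX.ball_pos z r hr).ne'
  have hBt : μ B ≠ ⊤ := hX.ball_ne_top z r hr
  refine ENNReal.mul_le_of_forall_lt fun a ha lam hlam => ?_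
  refine le_trans (mul_le_mul' ha.le le_rfl) ?_
  clear ha a
  by_cases hl0 : lam = 0
  · rw [hl0, mul_zero]; exact zero_le
  have hlt : lam ≠ ⊤ := hlam.ne_top
  have h1 : 1 < ∫⁻ x in B, ((w x)⁻¹ / lam) ^ p' x ∂μ := by
    by_contra hc
    push Not at hc
    rw [← ind_int hp0' hB] at hc
    exact absurd (lux_le (fun x => (hp0' x).le) (pos_iff_ne_zero.2 hl0) hc) (not_le.2 hlam)
  set h : X → ℝ≥0∞ := fun x => (w x)⁻¹ / lam with hh
  have hhm : Measurable h := hw.inv.div_const lam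
  have hh0 : ∀ x, h x ≠ 0 := fun x => (ENNReal.div_pos (ENNReal.inv_ne_zero.2 (hwt x)) hlt).ne'
  have hht : ∀ x, h x ≠ ⊤ := fun x => ENNReal.div_ne_top (ENNReal.inv_ne_top.2 (hw0 x)) hl0
  -- truncation
  obtain ⟨n, hn⟩ : ∃ n : ℕ, 1 < ∫⁻ x in B ∩ {x | h x ≤ n}, h x ^ p' x ∂μ := by
    have hU : B = ⋃ n : ℕ, B ∩ {x | h x ≤ n} := by
      ext x
      simp only [Set.mem_iUnion, Set.mem_inter_iff, Set.mem_ofPred_eq, exists_and_left]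
      refine ⟨fun hx => ⟨hx, ?_⟩, fun hx => hx.1⟩
      obtain ⟨n, hn⟩ := ENNReal.exists_nat_gt (hht x)
      exact ⟨n, hn.le⟩
    have hm : Monotone fun n : ℕ => B ∩ {x | h x ≤ n} := by
      intro a b hab x hx
      exact ⟨hx.1, le_trans (show h x ≤ a from hx.2) (by exact_mod_cast hab)⟩
    have h2 : 1 < ∫⁻ x in B, h x ^ p' x ∂μ := h1
    rw [hU, setLIntegral_iUnion_of_directed _ hm.directed_le] at h2
    exact lt_iSup_iff.1 h2
  set E := B ∩ {x | h x ≤ n} with hE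
  have hEm : MeasurableSet E := hB.inter (measurableSet_le hhm measurable_const)
  have hEB : E ⊆ B := Set.inter_subset_left
  set I := ∫⁻ x in E, h x ^ p' x ∂μ with hI
  have hI0 : I ≠ 0 := (one_pos.trans hn).ne'
  have hIt : I ≠ ⊤ := by
    have hb : I ≤ ∫⁻ x in E, (max 1 n : ℝ≥0∞) ^ P ∂μ := by
      refine setLIntegral_mono' hEm fun x hx => ?_
      calc h x ^ p' x ≤ (max 1 n : ℝ≥0∞) ^ p' x := by
            refine ENNReal.rpow_le_rpow (le_trans (show h x ≤ n from hx.2) (le_max_right _ _)) (hp0' x).le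
        _ ≤ _ := ENNReal.rpow_le_rpow_of_exponent_le (le_max_left _ _) (hP x)
    refine ne_top_of_le_ne_top ?_ hb
    rw [setLIntegral_const]
    refine ENNReal.mul_ne_top (ENNReal.rpow_ne_top_of_nonneg ((hp0' z).le.trans (hP z)) ?_) ?_
    · exact (max_lt (by norm_num) (by simp)).ne
    · exact ne_top_of_le_ne_top hBt (measure_mono hEB)
  set f : X → ℝ≥0∞ := E.indicator fun x => h x ^ (p' x - 1) * (w x)⁻¹ with hf
  have hfm : Measurable f := ((hhm.pow (hpm'.sub_const 1)).mul hw.inv).indicator hEm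
  have hfi : ∫⁻ y in B, f y ∂μ = lam * I := by
    rw [hf, setLIntegral_indicator hEm, Set.inter_eq_left.2 hEB, hI, ← lintegral_const_mul' _ _ hlt]
    refine lintegral_congr fun x => ?_
    have e1 : (w x)⁻¹ = lam * h x := by rw [hh]; dsimp only; rw [ENNReal.mul_div_cancel hl0 hlt]
    rw [e1, mul_left_comm]
    congr 1
    nth_rewrite 2 [← ENNReal.rpow_one (h x)]
    rw [← ENNReal.rpow_add _ _ (hh0 x) (hht x), sub_add_cancel]
  have hfw : luxNorm μ (ofRealExp p) (fun x => f x * w x) ≤ I := by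
    refine lux_le (fun x => (hp0 x).le) (pos_iff_ne_zero.2 hI0) ?_
    calc ∫⁻ x, (f x * w x / I) ^ p x ∂μ ≤ ∫⁻ x, I⁻¹ * E.indicator (fun x => h x ^ p' x) x ∂μ := by
          refine lintegral_mono fun x => ?_
          by_cases hx : x ∈ E
          · rw [hf, Set.indicator_of_mem hx, Set.indicator_of_mem hx, mul_assoc,
              ENNReal.inv_mul_cancel (hw0 x) (hwt x), mul_one, div_eq_mul_inv,
              ENNReal.mul_rpow_of_nonneg _ _ (hp0 x).le, mul_comm, ← ENNReal.rpow_mul]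
            refine mul_le_mul' (ENNReal.rpow_le_self_of_le_one (ENNReal.inv_le_one.2 hn.le) (hpg x).le) (le_of_eq ?_)
            congr 1
            have h1 : p x - 1 ≠ 0 := by linarith [hpg x]
            rw [hp']; field_simp; ring
          · rw [hf, Set.indicator_of_notMem hx, Set.indicator_of_notMem hx]
            simp [hp0 x]
      _ = 1 := by
          rw [lintegral_const_mul' _ _ (ENNReal.inv_ne_top.2 hI0), lintegral_indicator hEm,
            ENNReal.inv_mul_cancel hI0 hIt]
  set c := (μ B)⁻¹ * (lam * I) with hc
  have hc0 : c ≠ 0 := mul_ne_zero (ENNReal.inv_ne_zero.2 hBt) (mul_ne_zero hl0 hI0)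
  have hct : c ≠ ⊤ := ENNReal.mul_ne_top (ENNReal.inv_ne_top.2 hB0) (ENNReal.mul_ne_top hlt hIt)
  have hfin : c * luxNorm μ (ofRealExp p) (B.indicator w) ≤ C * I := by
    refine (lux_smul (fun x => (hp0 x).le) hc0 hct _).trans (le_trans (lux_mono (fun x => (hp0 x).le) ?_)
      ((hC f hfm).trans (mul_le_mul' le_rfl hfw)))
    refine Eventually.of_forall fun x => ?_
    by_cases hx : x ∈ B
    · rw [Set.indicator_of_mem hx]
      gcongr
      rw [hc, ← hfi]
      unfold maximal
      exact le_iSup_of_le z (le_iSup_of_le r (le_iSup_of_le ⟨hr, hx⟩ le_rfl))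
    · rw [Set.indicator_of_notMem hx, mul_zero]; exact zero_le
  set a := luxNorm μ (ofRealExp p) (B.indicator w)
  have h5 : (a * lam) * I ≤ (C * μ B) * I := by
    calc (a * lam) * I = μ B * (c * a) := by
          rw [hc, ← mul_assoc, ← mul_assoc, ENNReal.mul_inv_cancel hB0 hBt]; ring
      _ ≤ μ B * (C * I) := by gcongr
      _ = _ := by ring
  exact (ENNReal.mul_le_mul_iff_left hI0 hIt).1 h5

end nec

theorem maximal_strong_type_iff_Apvar
    {X : Type*} [MeasurableSpace X] (d : X → X → ℝ) (μ : Measure X) (A₀ Cμ : ℝ)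
    (hX : IsSHT d μ A₀ Cμ) (x₀ : X)
    (p : X → ℝ) (hpmeas : Measurable p) (hp1 : ∀ x, 1 ≤ p x)
    (hLH : LH d x₀ p) (hpminus : 1 < essInf p μ)
    (w : X → ℝ≥0∞) (hw : IsWeight d μ w) :
    (∃ C : ℝ≥0, 0 < C ∧ ∀ f : X → ℝ≥0∞, Measurable f →
        luxNorm μ (ofRealExp p) (fun x => maximal d μ f x * w x) ≤
          C * luxNorm μ (ofRealExp p) (fun x => f x * w x)) ↔
      Apvar d μ (ofRealExp p) w := by
  obtain ⟨hwm, hwae, -⟩ := hw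
  obtain ⟨q, pm, pp, Co, hpm1, hge, hle, -, -, -, -⟩ := exps hX hp1 hLH hpminus
  have hpg : ∀ x, 1 < p x := fun x => hpm1.trans_le (hge x)
  have hp0 : ∀ x, 0 ≤ p x := fun x => by linarith [hpg x]
  have hp0' : ∀ x, 0 ≤ p x / (p x - 1) := fun x => div_nonneg (hp0 x) (by linarith [hpg x])
  classical
  set v : X → ℝ≥0∞ := fun x => if w x ≠ 0 ∧ w x ≠ ⊤ then w x else 1 with hv
  have hvm : Measurable v := by
    refine Measurable.ite ?_ hwm measurable_const
    exact (hwm (measurableSet_singleton 0).compl).inter (hwm (measurableSet_singleton ⊤).compl)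
  have hv0 : ∀ x, v x ≠ 0 := fun x => by
    rw [hv]; dsimp only; split_ifs with h
    · exact h.1
    · exact one_ne_zero
  have hvt : ∀ x, v x ≠ ⊤ := fun x => by
    rw [hv]; dsimp only; split_ifs with h
    · exact h.2
    · exact ENNReal.one_ne_top
  have hvw : ∀ᵐ x ∂μ, w x = v x := by
    filter_upwards [hwae] with x hx
    rw [hv]; dsimp only; rw [if_pos ⟨hx.1.ne', hx.2.ne⟩]
  have e1 : ∀ f : X → ℝ≥0∞, luxNorm μ (ofRealExp p) (fun x => f x * w x) =
      luxNorm μ (ofRealExp p) (fun x => f x * v x) := fun f =>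
    lux_congr hp0 (by filter_upwards [hvw] with x hx; rw [hx])
  have e2 : ∀ B : Set X, luxNorm μ (ofRealExp p) (B.indicator w) = luxNorm μ (ofRealExp p) (B.indicator v) :=
    fun B => lux_congr hp0 (by
      filter_upwards [hvw] with x hx
      by_cases h : x ∈ B
      · rw [Set.indicator_of_mem h, Set.indicator_of_mem h, hx]
      · rw [Set.indicator_of_notMem h, Set.indicator_of_notMem h])
  have e3 : ∀ B : Set X, luxNorm μ (conjExp (ofRealExp p)) (B.indicator fun y => (w y)⁻¹) =
      luxNorm μ (ofRealExp fun x => p x / (p x - 1)) (B.indicator fun y => (v y)⁻¹) := by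
    intro B
    rw [conjExp_ofReal hpg]
    refine lux_congr hp0' ?_
    filter_upwards [hvw] with x hx
    by_cases h : x ∈ B
    · rw [Set.indicator_of_mem h, Set.indicator_of_mem h, hx]
    · rw [Set.indicator_of_notMem h, Set.indicator_of_notMem h]
  constructor
  · rintro ⟨C, -, hC⟩
    refine ⟨C, fun z r hr => ?_⟩
    rw [e2, e3]
    refine nec (P := pm / (pm - 1)) hX hpmeas hpg (fun _ => rfl) (fun x => conj_mono hpm1 (hge x)) hvm hv0 hvt
      (fun f hf => ?_) z r hr
    have := hC f hf
    rwa [e1, e1] at this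
  · rintro ⟨K, hK⟩
    obtain ⟨C, hC0, hC⟩ := suff hX hpmeas hp1 hLH hpminus (p' := fun x => p x / (p x - 1)) (fun _ => rfl) hvm hv0 hvt
      (K := K) (fun z r hr => by
        have := hK z r hr
        rwa [e2, e3] at this)
    refine ⟨C, hC0, fun f hf => ?_⟩
    rw [e1, e1]
    exact hC f hf

end SHT
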